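/- arXiv:2004.05929 — 3 statements merged into one kernel-verified Lean document; each statement's English description precedes it below -/
import Mathlib

section
/- Let γ₁ be a tamely Liouville irrational number, γ₂ a real number, and β an irrational number. Let ψ be an approximation function with ψ(q) = O((q · log q · (log log q)²)⁻¹) such that ∑_{q : ‖qβ − γ₂‖ ≥ (log q)⁻¹} ψ(q)/‖qβ − γ₂‖ = ∞. Then the set W(ψ,β,γ₁,γ₂) = {x ∈ [0,1] : ‖qx − γ₁‖·‖qβ − γ₂‖ < ψ(q) for infinitely many positive integers q} has Lebesgue measure one. -/
open MeasureTheory Filter Real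

/-- Distance from a real number to the nearest integer. -/
noncomputable def dnint (x : ℝ) : ℝ := |x - round x|

/-- The inhomogeneous approximation set `W(ψ,γ)`. -/
noncomputable def W (ψ : ℕ → ℝ) (γ : ℝ) : Set ℝ :=
  {x ∈ Set.Icc (0:ℝ) 1 | {q : ℕ | 0 < q ∧ dnint (q * x - γ) < ψ q}.Infinite}

/-- `σ_γ(Q)`: the infimum of all `σ > 0` with `‖qγ‖ ≥ q^{-σ}` for all `2 ≤ q ≤ Q`. -/
noncomputable def sigmaExp (γ : ℝ) (Q : ℕ) : ℝ :=
  sInf {σ : ℝ | 0 < σ ∧ ∀ q : ℕ, 2 ≤ q → q ≤ Q → (q : ℝ) ^ (-σ) ≤ dnint (q * γ)}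

/-- `γ` is tamely Liouville if `σ_γ(Q) ≤ C (log₂ Q)^{1/4-ε}` for all `Q ≥ 2`. -/
def TamelyLiouville (γ : ℝ) : Prop :=
  ∃ ε > (0:ℝ), ∃ C > (0:ℝ), ∀ Q : ℕ, 2 ≤ Q →
    sigmaExp γ Q ≤ C * (Real.logb 2 Q) ^ ((1:ℝ)/4 - ε)

lemma dnint_nonneg (x : ℝ) : 0 ≤ dnint x := abs_nonneg _

lemma dnint_le (x : ℝ) (n : ℤ) : dnint x ≤ |x - n| := round_le x n

lemma dnint_lt_iff (x t : ℝ) : dnint x < t ↔ ∃ n : ℤ, |x - n| < t :=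
  ⟨fun h => ⟨round x, h⟩, fun ⟨n, hn⟩ => (dnint_le x n).trans_lt hn⟩

lemma dnint_neg (x : ℝ) : dnint (-x) = dnint x := by
  have key : ∀ y : ℝ, dnint (-y) ≤ dnint y := fun y => by
    have := dnint_le (-y) (-(round y))
    rw [show (-y - ((-(round y) : ℤ) : ℝ)) = -(y - round y) by push_cast; ring, abs_neg] at this
    exact this
  refine le_antisymm (key x) ?_
  have := key (-x)
  rwa [neg_neg] at this

/-- double logarithm -/
def lam (q : ℕ) : ℕ := Nat.log 2 (Nat.log 2 q)


/-- counting in one block of `s` consecutive integers -/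
lemma block_count (γ : ℝ) (s : ℕ) (p : ℤ) (hs : 0 < s) (hcop : IsCoprime (s : ℤ) p)
    (happ : |γ * s - p| ≤ 1 / s) (u : ℤ) (η : ℝ) (F : Finset ℤ)
    (hF : ∀ m ∈ F, u ≤ m ∧ m < u + s ∧ dnint (m * γ) < η) (hη : 0 ≤ η) :
    (F.card : ℝ) ≤ 2 * s * η + 3 := by
  have hs' : (0:ℝ) < s := by exact_mod_cast hs
  -- for each m choose integer k
  have h1 : ∀ m ∈ F, |(((m - u) * p - round (m * γ) * s : ℤ) : ℝ) + u * γ * s| < s * η + 1 := by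
    intro m hm
    obtain ⟨h1, h2, h3⟩ := hF m hm
    unfold dnint at h3
    have e1 : (((m - u) * p - round (m * γ) * s : ℤ) : ℝ) + u * γ * s
        = s * (m * γ - round (m * γ)) - (m - u) * (γ * s - p) := by push_cast; ring
    rw [e1]
    have h4 : |s * (m * γ - round (m * γ))| < s * η := by
      rw [abs_mul, abs_of_pos hs']; exact mul_lt_mul_of_pos_left h3 hs'
    have h5 : |((m:ℝ) - u) * (γ * s - p)| ≤ 1 := by
      rw [abs_mul]
      have : |(m:ℝ) - u| ≤ s := by
        have a1 : (u:ℝ) ≤ m := by exact_mod_cast h1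
        have a2 : (m:ℝ) < u + s := by exact_mod_cast h2
        rw [abs_of_nonneg (by linarith)]; linarith
      calc _ ≤ (s:ℝ) * (1 / s) := mul_le_mul this happ (abs_nonneg _) hs'.le
        _ = 1 := by field_simp
    have := abs_sub (s * (m * γ - round (m * γ))) (((m:ℝ) - u) * (γ * s - p))
    linarith
  set c : ℝ := u * γ * s
  set R : ℝ := s * η + 1 with hR
  have hinj : Set.InjOn (fun m : ℤ => (m - u) * p - round (m * γ) * s) F := by
    intro m hm m' hm' h
    simp only at h
    obtain ⟨a1, a2, _⟩ := hF m hm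
    obtain ⟨b1, b2, _⟩ := hF m' hm'
    have hd : (s : ℤ) ∣ (m - m') * p := ⟨round (m * γ) - round (m' * γ), by linear_combination h⟩
    have hd2 := hcop.dvd_of_dvd_mul_right hd
    have : m - m' = 0 := Int.eq_zero_of_abs_lt_dvd hd2 (by rw [abs_lt]; constructor <;> linarith)
    linarith
  have hsub : F.image (fun m : ℤ => (m - u) * p - round (m * γ) * s) ⊆
      Finset.Icc ⌈-c - R⌉ ⌊-c + R⌋ := by
    intro z hz
    obtain ⟨m, hm, rfl⟩ := Finset.mem_image.mp hz
    have := abs_lt.mp (h1 m hm)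
    rw [Finset.mem_Icc, Int.ceil_le, Int.le_floor]
    constructor <;> linarith [this.1, this.2]
  have hc := Finset.card_le_card hsub
  rw [Finset.card_image_of_injOn hinj, Int.card_Icc] at hc
  have hc' : (F.card : ℝ) ≤ ((⌊-c + R⌋ + 1 - ⌈-c - R⌉).toNat : ℝ) := by exact_mod_cast hc
  refine hc'.trans ?_
  have hR0 : 0 ≤ R := by positivity
  have f1 := Int.floor_le (-c + R)
  have f2 := Int.le_ceil (-c - R)
  have : (((⌊-c + R⌋ + 1 - ⌈-c - R⌉).toNat : ℤ) : ℝ) ≤ 2 * s * η + 3 := by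
    rw [Int.toNat_eq_max]
    push_cast
    apply max_le
    · linarith
    · positivity
  exact_mod_cast this


lemma harm_sum (a b : ℕ) (ha : 1 ≤ a) (hab : a ≤ b) :
    ∑ j ∈ Finset.Icc a b, (1:ℝ) / j ≤ 1 + Real.log (b / a) := by
  have ha' : (0:ℝ) < a := by exact_mod_cast ha
  induction b, hab using Nat.le_induction with
  | base =>
    simp only [Finset.Icc_self, Finset.sum_singleton]
    rw [div_self ha'.ne', Real.log_one, add_zero, div_le_one ha']
    exact_mod_cast ha
  | succ b hb ih =>
    rw [← Finset.insert_Icc_right_eq_Icc_add_one (by omega), Finset.sum_insert (by simp)]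
    have hb' : (0:ℝ) < b := lt_of_lt_of_le ha' (by exact_mod_cast hb)
    have h1 := Real.one_sub_inv_le_log_of_pos (x := ((b:ℝ)+1)/b) (by positivity)
    have h2 : Real.log (((b+1:ℕ):ℝ)/a) = Real.log (((b:ℝ)+1)/b) + Real.log (b/a) := by
      rw [← Real.log_mul (by positivity) (by positivity)]
      congr 1
      push_cast
      field_simp
    have h3 : 1 - (((b:ℝ)+1)/b)⁻¹ = 1 / ((b+1:ℕ):ℝ) := by
      push_cast; field_simp; ring
    rw [h2, ← h3]
    linarith

lemma bad_count (γ : ℝ) (s : ℕ) (p : ℤ) (hs : 0 < s) (hcop : IsCoprime (s : ℤ) p)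
    (happ : |γ * s - p| ≤ 1 / s) (X N : ℕ) (hX : 0 < X) (hN : X * s ≤ N) (κ : ℝ) (hκ : 0 ≤ κ)
    (F : Finset ℕ)
    (hF : ∀ q ∈ F, q < N ∧ N ≤ q * X ∧ dnint (((N:ℝ) - q) * γ) < κ * (N / q)) :
    (F.card : ℝ) ≤ 2 * κ * N * (1 + Real.log (2 * X)) + 6 * (N / s) := by
  have hs' : (0:ℝ) < s := by exact_mod_cast hs
  have hX' : (0:ℝ) < X := by exact_mod_cast hX
  have hNs : s ≤ N := le_trans (Nat.le_mul_of_pos_left s hX) hN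
  have hNpos : 0 < N := lt_of_lt_of_le hs hNs
  have hN' : (0:ℝ) < N := by exact_mod_cast hNpos
  set J0 := N / (X * s) with hJ0
  set J1 := N / s with hJ1
  have hJ01 : 1 ≤ J0 := (Nat.one_le_div_iff (by positivity)).2 hN
  have hJle : J0 ≤ J1 := Nat.div_le_div_left (Nat.le_mul_of_pos_left s hX) hs
  have hmaps : ∀ q ∈ F, q / s ∈ Finset.Icc J0 J1 := by
    intro q hq
    obtain ⟨h1, h2, _⟩ := hF q hq
    rw [Finset.mem_Icc]
    constructor
    · rw [hJ0, ← Nat.div_div_eq_div_mul]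
      apply Nat.div_le_div_right
      exact Nat.div_le_of_le_mul (by linarith [mul_comm q X])
    · exact Nat.div_le_div_right h1.le
  have hfib : ∀ j ∈ Finset.Icc J0 J1,
      ((F.filter (fun q => q / s = j)).card : ℝ) ≤ 2 * κ * N * (1 / j) + 3 := by
    intro j hj
    have hj1 : 1 ≤ j := hJ01.trans (Finset.mem_Icc.mp hj).1
    have hj' : (0:ℝ) < j := by exact_mod_cast hj1
    have hinj : Set.InjOn (fun q : ℕ => (N:ℤ) - q) (F.filter (fun q => q / s = j)) := by
      intro a _ b _ h
      simp only at h
      omega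
    have := block_count γ s p hs hcop happ ((N:ℤ) - (j+1) * s + 1) (κ * (N / (j * s)))
      ((F.filter (fun q => q / s = j)).image (fun q : ℕ => (N:ℤ) - q)) (by
        intro m hm
        obtain ⟨q, hq, rfl⟩ := Finset.mem_image.mp hm
        obtain ⟨hqF, hqj⟩ := Finset.mem_filter.mp hq
        obtain ⟨h1, h2, h3⟩ := hF q hqF
        have g1 : j * s ≤ q := by rw [← hqj]; exact Nat.div_mul_le_self q s
        have g2 : q < (j + 1) * s := by
          rw [← hqj, Nat.add_one_mul]; exact Nat.lt_div_mul_add hs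
        zify at g1 g2
        refine ⟨by linarith, by linarith, ?_⟩
        push_cast
        refine h3.trans_le ?_
        apply mul_le_mul_of_nonneg_left _ hκ
        apply div_le_div_of_nonneg_left hN'.le (by positivity)
        exact_mod_cast g1) (by positivity)
    rw [Finset.card_image_of_injOn hinj] at this
    refine this.trans (le_of_eq ?_)
    field_simp
  rw [Finset.card_eq_sum_card_fiberwise hmaps]
  push_cast
  refine (Finset.sum_le_sum hfib).trans ?_
  rw [Finset.sum_add_distrib, ← Finset.mul_sum, Finset.sum_const, nsmul_eq_mul]
  have hc : ((Finset.Icc J0 J1).card : ℝ) ≤ N / s := by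
    have : (Finset.Icc J0 J1).card ≤ J1 := by rw [Nat.card_Icc]; omega
    calc ((Finset.Icc J0 J1).card : ℝ) ≤ J1 := by exact_mod_cast this
      _ ≤ N / s := Nat.cast_div_le
  have hlog : ∑ j ∈ Finset.Icc J0 J1, (1:ℝ) / j ≤ 1 + Real.log (2 * X) := by
    refine (harm_sum J0 J1 hJ01 hJle).trans ?_
    have hJ0' : (0:ℝ) < J0 := by exact_mod_cast hJ01
    have hJ1' : (0:ℝ) < J1 := by exact_mod_cast (hJ01.trans hJle)
    gcongr
    rw [div_le_iff₀ hJ0']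
    have a1 : (J1:ℝ) ≤ N / s := Nat.cast_div_le
    have a2 : N < 2 * (J0 * (X * s)) := by
      have : N < J0 * (X*s) + X*s := Nat.lt_div_mul_add (by positivity)
      nlinarith [Nat.mul_le_mul_right (X*s) hJ01]
    have a2' : (N:ℝ) < 2 * (J0 * (X * s)) := by exact_mod_cast a2
    refine a1.trans ?_
    rw [div_le_iff₀ hs']
    nlinarith
  have hk : 0 ≤ 2 * κ * N := by positivity
  have hNs0 : 0 ≤ (N:ℝ) / s := by positivity
  nlinarith [mul_le_mul_of_nonneg_left hlog hk]


lemma dnint_pos_of_irr (γ : ℝ) (hγ : Irrational γ) (q : ℕ) (hq : 1 ≤ q) : 0 < dnint (q * γ) := by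
  have h : Irrational ((q:ℝ) * γ) := hγ.natCast_mul (by omega)
  unfold dnint
  rw [abs_pos, sub_ne_zero]
  exact h.ne_int _

lemma tame_sigma (γ : ℝ) (hγ : Irrational γ) (ht : TamelyLiouville γ) :
    ∃ C0 > (0:ℝ), ∀ Q : ℕ, 2 ≤ Q → ∃ σ : ℝ, 0 < σ ∧ σ ≤ C0 * (Real.logb 2 Q) ^ ((1:ℝ)/4) + 1 ∧
      ∀ q : ℕ, 2 ≤ q → q ≤ Q → (q:ℝ) ^ (-σ) ≤ dnint (q * γ) := by
  obtain ⟨ε, hε, C, hC, h⟩ := ht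
  refine ⟨C, hC, fun Q hQ => ?_⟩
  have hne : {σ : ℝ | 0 < σ ∧ ∀ q : ℕ, 2 ≤ q → q ≤ Q → (q : ℝ) ^ (-σ) ≤ dnint (q * γ)}.Nonempty := by
    have h1 : ∀ᶠ σ : ℝ in atTop, ∀ q ∈ Finset.Icc 2 Q, (q : ℝ) ^ (-σ) ≤ dnint (q * γ) := by
      rw [Filter.eventually_all_finset]
      intro q hq
      have hq2 := (Finset.mem_Icc.mp hq).1
      have hq1 : (1:ℝ) < q := by exact_mod_cast hq2
      have ht : Tendsto (fun σ : ℝ => (q:ℝ) ^ (-σ)) atTop (nhds 0) := by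
        have := tendsto_rpow_atTop_of_base_lt_one ((q:ℝ)⁻¹) (by linarith [inv_pos.2 (zero_lt_one.trans hq1)]) (inv_lt_one_of_one_lt₀ hq1)
        refine this.congr fun σ => ?_
        rw [Real.inv_rpow (by positivity), Real.rpow_neg (by positivity)]
      exact (ht.eventually_lt_const (dnint_pos_of_irr γ hγ q (by omega))).mono fun _ h => h.le
    obtain ⟨σ, h2, h3⟩ := (h1.and (eventually_gt_atTop 0)).exists
    exact ⟨σ, h3, fun q a b => h2 q (Finset.mem_Icc.2 ⟨a, b⟩)⟩
  obtain ⟨σ, ⟨hσ0, hσ⟩, hlt⟩ := exists_lt_of_csInf_lt hne (lt_add_one _)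
  refine ⟨σ, hσ0, hlt.le.trans ?_, hσ⟩
  have := h Q hQ
  unfold sigmaExp at this
  have hl : 1 ≤ Real.logb 2 Q := by
    rw [Real.le_logb_iff_rpow_le (by norm_num) (by positivity)]
    simpa using (by exact_mod_cast hQ : (2:ℝ) ≤ Q)
  have h2 : (Real.logb 2 Q) ^ ((1:ℝ)/4 - ε) ≤ (Real.logb 2 Q) ^ ((1:ℝ)/4) :=
    Real.rpow_le_rpow_of_exponent_le hl (by linarith)
  nlinarith

set_option maxHeartbeats 1000000 in
lemma tame_E (γ : ℝ) (hγ : Irrational γ) (ht : TamelyLiouville γ) (C : ℝ) (hC : 0 < C) :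
    ∃ r0 : ℕ, ∀ r : ℕ, r0 ≤ r → ∃ (s : ℕ) (p : ℤ) (Y : ℕ), 0 < s ∧ IsCoprime (s:ℤ) p ∧
      |γ * s - p| ≤ 1 / s ∧ (Nat.log 2 r) ^ 4 ≤ s ∧ (Nat.log 2 r) ^ 4 * s ≤ Y ∧
      ∀ m : ℕ, 1 ≤ m → m ≤ Y → C * (Nat.log 2 r) ^ 4 * Y / r ≤ dnint (m * γ) := by
  obtain ⟨C0, hC0, hS⟩ := tame_sigma γ hγ ht
  set C1 := 2 * C0 + 1 with hC1
  have hγ1 : 0 < dnint γ := by simpa using dnint_pos_of_irr γ hγ 1 le_rfl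
  set K : ℝ := 3 + |logb 2 C| + 2 * C1 + |logb 2 (dnint γ)| + 32 * C1 / Real.log 2 with hK
  have hlog2 : 0 < Real.log 2 := Real.log_pos (by norm_num)
  -- eventually y ≥ K
  have hev : ∀ᶠ r : ℕ in atTop, K ≤ ((Nat.sqrt (Nat.log 2 r) : ℕ) : ℝ) ^ ((1:ℝ)/4) ∧ 4 ≤ r := by
    have t1 : Tendsto (fun r : ℕ => Nat.log 2 r) atTop atTop := by
      refine tendsto_atTop.2 fun b => ?_
      filter_upwards [eventually_ge_atTop (2^b)] with r hr
      exact Nat.le_log_of_pow_le (by norm_num) hr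
    have t2 : Tendsto (fun r : ℕ => Nat.sqrt r) atTop atTop := by
      refine tendsto_atTop.2 fun b => ?_
      filter_upwards [eventually_ge_atTop (b*b)] with r hr
      exact Nat.le_sqrt.2 hr
    have t3 := (tendsto_rpow_atTop (show (0:ℝ) < 1/4 by norm_num)).comp
      ((tendsto_natCast_atTop_atTop (R := ℝ)).comp (t2.comp t1))
    exact (t3.eventually_ge_atTop K).and (eventually_ge_atTop 4)
  obtain ⟨r0, hr0⟩ := eventually_atTop.1 hev
  refine ⟨r0, fun r hr => ?_⟩
  obtain ⟨hy, hr4⟩ := hr0 r hr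
  set M := Nat.log 2 r with hM
  set h := Nat.sqrt M with hh
  set y : ℝ := (h:ℝ) ^ ((1:ℝ)/4) with hydef
  have hC1' : 1 ≤ C1 := by linarith
  have a1 := abs_nonneg (logb 2 C)
  have a2 := abs_nonneg (logb 2 (dnint γ))
  have a3 : 0 ≤ 32 * C1 / Real.log 2 := by positivity
  have hy3 : 3 ≤ y := by linarith
  have hy4 : y ^ 4 = h := by
    rw [hydef, ← Real.rpow_natCast, ← Real.rpow_mul (by positivity)]; norm_num
  have hh1 : (1:ℝ) ≤ h := by
    rw [← hy4]; exact one_le_pow₀ (by linarith)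
  have hh1' : 1 ≤ h := by exact_mod_cast hh1
  have hMlo : h * h ≤ M := Nat.sqrt_le M
  have hMhi : M < (h+1) * (h+1) := Nat.lt_succ_sqrt M
  have hM1 : 1 ≤ M := le_trans (by nlinarith) hMlo
  have hMpos : (0:ℝ) < M := by exact_mod_cast hM1
  -- log bound
  have hlogM : C1 * y * (4 * logb 2 M) ≤ h := by
    have e1 : Real.log (h + 1) ≤ 4 * y ^ 2 := by
      have := Real.log_le_rpow_div (x := (h:ℝ)+1) (by positivity) (ε := 1/2) (by norm_num)
      refine this.trans ?_
      rw [← Real.sqrt_eq_rpow]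
      have : Real.sqrt ((h:ℝ)+1) ≤ 2 * y ^ 2 := by
        rw [Real.sqrt_le_left (by positivity)]
        calc (h:ℝ) + 1 ≤ 4 * h := by linarith
          _ = (2 * y^2)^2 := by rw [← hy4]; ring
      linarith
    have e2 : Real.log M ≤ 2 * Real.log (h+1) := by
      have : (M:ℝ) ≤ ((h:ℝ)+1)^2 := by
        have : (M:ℝ) ≤ ((h:ℝ)+1) * (h+1) := by exact_mod_cast hMhi.le
        linarith [sq ((h:ℝ)+1)]
      calc Real.log M ≤ Real.log (((h:ℝ)+1)^2) := Real.log_le_log hMpos this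
        _ = _ := by rw [Real.log_pow]; norm_num
    have e3 : logb 2 M ≤ 8 * y^2 / Real.log 2 := by
      rw [Real.logb, div_le_div_iff_of_pos_right hlog2]; linarith
    calc C1 * y * (4 * logb 2 M) ≤ C1 * y * (4 * (8 * y^2 / Real.log 2)) := by gcongr
      _ = (32 * C1 / Real.log 2) * y^3 := by ring
      _ ≤ y * y^3 := by gcongr; linarith
      _ = h := by rw [← hy4]; ring
  have hlogM0 : 0 ≤ logb 2 M := Real.logb_nonneg (by norm_num) (by exact_mod_cast hM1)
  have hM3 : (M:ℝ)^4 ≤ 2 ^ (h:ℝ) := by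
    rw [← Real.rpow_natCast, ← Real.logb_le_iff_le_rpow (by norm_num) (by positivity),
      Real.logb_rpow_eq_mul_logb_of_pos hMpos]
    push_cast
    have : 1 ≤ C1 * y := by nlinarith
    nlinarith [mul_le_mul_of_nonneg_right this (show 0 ≤ 4 * logb 2 M by positivity)]
  set Y : ℕ := M^4 * 2^h with hY
  have hYle : (Y:ℝ) ≤ 2 ^ (2 * (h:ℝ)) := by
    rw [hY]; push_cast
    rw [two_mul, Real.rpow_add (by norm_num)]
    have : (2:ℝ)^h = 2^(h:ℝ) := (Real.rpow_natCast 2 h).symm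
    rw [this]
    gcongr
  have hY2 : 2 ≤ Y := by
    rw [hY]
    calc 2 = 1 * 2^1 := by norm_num
      _ ≤ M^4 * 2^h := Nat.mul_le_mul (Nat.one_le_pow _ _ hM1) (Nat.pow_le_pow_right (by norm_num) hh1')
  have hYpos : (0:ℝ) < Y := by positivity
  obtain ⟨σ, hσ0, hσ, hdio⟩ := hS Y hY2
  have hσy : σ ≤ C1 * y := by
    have l1 : logb 2 Y ≤ 2 * h := by
      rw [Real.logb_le_iff_le_rpow (by norm_num) hYpos]; exact hYle
    have l2 : (logb 2 Y) ^ ((1:ℝ)/4) ≤ 2 * y := by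
      have l0 : 0 ≤ logb 2 Y := Real.logb_nonneg (by norm_num) (by exact_mod_cast (by omega : 1 ≤ Y))
      calc (logb 2 Y) ^ ((1:ℝ)/4) ≤ ((2*y)^4) ^ ((1:ℝ)/4) := by
            apply Real.rpow_le_rpow l0 _ (by norm_num)
            refine l1.trans ?_
            rw [← hy4]; nlinarith [pow_pos (show 0 < y by linarith) 4]
        _ = 2 * y := by
            rw [← Real.rpow_natCast, ← Real.rpow_mul (by positivity)]; norm_num
    nlinarith
  have hlow : ∀ m : ℕ, 1 ≤ m → m ≤ Y → (2:ℝ) ^ (-(2 * C1 * y^5)) ≤ dnint (m * γ) := by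
    intro m hm hmY
    rcases Nat.lt_or_ge m 2 with h2 | h2
    · have : m = 1 := by omega
      subst this
      simp only [Nat.cast_one, one_mul]
      rw [← Real.le_logb_iff_rpow_le (by norm_num) hγ1]
      have b1 := neg_abs_le (logb 2 (dnint γ))
      have b2 : y ≤ y^5 := by
        calc y = y^1 := (pow_one y).symm
          _ ≤ y^5 := pow_le_pow_right₀ (by linarith) (by norm_num)
      nlinarith [pow_pos (show 0 < y by linarith) 5]
    · refine le_trans ?_ (hdio m h2 hmY)
      have hmpos : (0:ℝ) < m := by exact_mod_cast hm
      have m1 : (m:ℝ) ≤ 2 ^ (2 * (h:ℝ)) := le_trans (by exact_mod_cast hmY) hYle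
      calc (2:ℝ) ^ (-(2 * C1 * y^5)) ≤ (2:ℝ) ^ ((2 * (h:ℝ)) * (-σ)) := by
            apply Real.rpow_le_rpow_of_exponent_le (by norm_num)
            rw [← hy4]
            nlinarith [mul_le_mul_of_nonneg_left hσy (show 0 ≤ 2 * y^4 by positivity)]
        _ = ((2:ℝ) ^ (2 * (h:ℝ))) ^ (-σ) := by rw [Real.rpow_mul (by norm_num)]
        _ ≤ (m:ℝ) ^ (-σ) := Real.rpow_le_rpow_of_nonpos hmpos m1 (by linarith)
  have hTpos : 0 < 2^h := by positivity
  obtain ⟨ρ, hρ1, hρ2⟩ := Real.exists_rat_abs_sub_le_and_den_le γ hTpos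
  have hden : (0:ℝ) < ρ.den := by exact_mod_cast ρ.den_pos
  have happ : |γ * ρ.den - ρ.num| ≤ 1 / ((2^h : ℕ) + 1 : ℝ) := by
    have : γ * ρ.den - ρ.num = (γ - ρ) * ρ.den := by
      rw [sub_mul]; congr 1
      exact_mod_cast (Rat.mul_den_eq_num ρ).symm
    rw [this, abs_mul, abs_of_pos hden]
    calc _ ≤ 1 / (((2^h : ℕ) + 1 : ℝ) * ρ.den) * ρ.den := by gcongr
      _ = _ := by field_simp
  have hsY : M^4 * ρ.den ≤ Y := Nat.mul_le_mul_left _ hρ2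
  refine ⟨ρ.den, ρ.num, Y, ρ.den_pos, ?_, ?_, ?_, hsY, ?_⟩
  · rw [Int.isCoprime_iff_gcd_eq_one, Int.gcd_comm]
    have := ρ.reduced
    simpa [Int.gcd, Nat.Coprime] using this
  · refine happ.trans ?_
    apply one_div_le_one_div_of_le hden
    have : (ρ.den : ℝ) ≤ (2^h : ℕ) := by exact_mod_cast hρ2
    linarith
  · by_contra hlt
    push Not at hlt
    have hdn : dnint ((ρ.den : ℝ) * γ) < 2 ^ (-(h:ℝ)) := by
      calc dnint ((ρ.den : ℝ) * γ) ≤ |ρ.den * γ - ρ.num| := dnint_le _ _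
        _ ≤ 1 / ((2^h : ℕ) + 1 : ℝ) := by rw [mul_comm]; exact happ
        _ < 1 / (2:ℝ)^h := by
            apply one_div_lt_one_div_of_lt (by positivity); push_cast; linarith
        _ = 2 ^ (-(h:ℝ)) := by rw [Real.rpow_neg (by norm_num), Real.rpow_natCast, one_div]
    rcases Nat.lt_or_ge ρ.den 2 with h2 | h2
    · have h1 : ρ.den = 1 := by have := ρ.den_pos; omega
      rw [h1] at hdn
      simp only [Nat.cast_one, one_mul] at hdn
      have := (Real.lt_rpow_iff_log_lt hγ1 (by norm_num : (0:ℝ) < 2)).1 hdn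
      have b : logb 2 (dnint γ) < -(h:ℝ) := by
        rw [Real.logb, div_lt_iff₀ hlog2]; exact this
      have b1 := neg_abs_le (logb 2 (dnint γ))
      have b2 : y ≤ h := by
        rw [← hy4]
        calc y = y^1 := (pow_one y).symm
          _ ≤ y^4 := pow_le_pow_right₀ (by linarith) (by norm_num)
      linarith
    · have hdY : ρ.den ≤ Y := le_trans (Nat.le_mul_of_pos_left _ (by positivity)) hsY
      have h3 := (hdio ρ.den h2 hdY).trans_lt hdn
      have h4 : (2:ℝ) ^ (-(h:ℝ)) ≤ (ρ.den : ℝ) ^ (-σ) := by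
        have hd4 : (ρ.den:ℝ) ≤ (M:ℝ)^4 := by exact_mod_cast hlt.le
        have hM4 : (M:ℝ)^4 = 2 ^ (4 * logb 2 M) := by
          rw [mul_comm, Real.rpow_mul (by norm_num), Real.rpow_logb (by norm_num) (by norm_num) hMpos]
          norm_cast
        calc (2:ℝ) ^ (-(h:ℝ)) ≤ 2 ^ ((4 * logb 2 M) * (-σ)) := by
              apply Real.rpow_le_rpow_of_exponent_le (by norm_num)
              nlinarith [mul_le_mul_of_nonneg_right hσy (show 0 ≤ 4 * logb 2 M by positivity)]
          _ = ((M:ℝ)^4) ^ (-σ) := by rw [Real.rpow_mul (by norm_num), hM4]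
          _ ≤ (ρ.den:ℝ) ^ (-σ) := Real.rpow_le_rpow_of_nonpos hden hd4 (by linarith)
      linarith
  · intro m hm hmY
    refine le_trans ?_ (hlow m hm hmY)
    have hrpos : (0:ℝ) < r := by positivity
    have hrlo : (2:ℝ) ^ ((h:ℝ)*h) ≤ r := by
      have : 2 ^ (h*h) ≤ r := le_trans (Nat.pow_le_pow_right (by norm_num) hMlo)
        (Nat.pow_log_le_self 2 (by omega))
      calc (2:ℝ) ^ ((h:ℝ)*h) = ((2 ^ (h*h) : ℕ) : ℝ) := by
            rw [Nat.cast_pow, ← Real.rpow_natCast, Nat.cast_mul, Nat.cast_ofNat]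
        _ ≤ r := by exact_mod_cast this
    rw [div_le_iff₀ hrpos]
    calc C * (M:ℝ)^4 * Y ≤ 2 ^ (logb 2 C) * 2 ^ (h:ℝ) * 2 ^ (2 * (h:ℝ)) := by
          rw [Real.rpow_logb (by norm_num) (by norm_num) hC]; gcongr
      _ = 2 ^ (logb 2 C + h + 2 * h) := by
          rw [Real.rpow_add (by norm_num), Real.rpow_add (by norm_num)]
      _ ≤ 2 ^ (-(2 * C1 * y^5) + (h:ℝ)*h) := by
          apply Real.rpow_le_rpow_of_exponent_le (by norm_num)
          rw [← hy4]
          have c1 := le_abs_self (logb 2 C)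
          have y5 : y^4 ≤ y^5 := pow_le_pow_right₀ (by linarith) (by norm_num)
          have y51 : 1 ≤ y^5 := one_le_pow₀ (by linarith)
          have y8 : y^6 ≤ y^8 := pow_le_pow_right₀ (by linarith) (by norm_num)
          have : (3 + |logb 2 C| + 2 * C1) * y^5 ≤ y * y^5 := by gcongr; linarith
          nlinarith [mul_le_mul_of_nonneg_left y51 a1]
      _ = 2 ^ (-(2 * C1 * y^5)) * 2 ^ ((h:ℝ)*h) := by rw [Real.rpow_add (by norm_num)]
      _ ≤ 2 ^ (-(2 * C1 * y^5)) * r := by gcongr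


lemma int_card_le (G : Finset ℤ) (x y : ℝ) (hxy : x ≤ y) (k : ℤ) (hk : 0 < k)
    (hG : ∀ z ∈ G, x ≤ z ∧ (z:ℝ) ≤ y) (hmod : ∀ z ∈ G, ∀ w ∈ G, k ∣ z - w) :
    (G.card : ℝ) ≤ (y - x) / k + 1 := by
  have hk' : (0:ℝ) < k := by exact_mod_cast hk
  rcases G.eq_empty_or_nonempty with rfl | ⟨z0, hz0⟩
  · simp only [Finset.card_empty, Nat.cast_zero]
    have : 0 ≤ (y - x) / k := div_nonneg (by linarith) hk'.le
    linarith
  have hinj : Set.InjOn (fun z : ℤ => (z - z0) / k) G := by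
    intro z hz w hw h
    simp only at h
    have h1 := Int.ediv_mul_cancel (hmod z hz z0 hz0)
    have h2 := Int.ediv_mul_cancel (hmod w hw z0 hz0)
    rw [h] at h1
    linarith
  have hsub : G.image (fun z : ℤ => (z - z0) / k) ⊆
      Finset.Icc ⌈(x - z0) / k⌉ ⌊(y - z0) / k⌋ := by
    intro t ht
    obtain ⟨z, hz, rfl⟩ := Finset.mem_image.mp ht
    have h1 := Int.ediv_mul_cancel (hmod z hz z0 hz0)
    have h1' : (((z - z0) / k : ℤ) : ℝ) * k = z - z0 := by exact_mod_cast h1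
    obtain ⟨h2, h3⟩ := hG z hz
    rw [Finset.mem_Icc, Int.ceil_le, Int.le_floor, div_le_iff₀ hk', le_div_iff₀ hk', h1']
    constructor <;> linarith
  have hc := Finset.card_le_card hsub
  rw [Finset.card_image_of_injOn hinj, Int.card_Icc] at hc
  have hc' : (G.card : ℝ) ≤ ((⌊(y - z0) / k⌋ + 1 - ⌈(x - z0) / k⌉).toNat : ℝ) := by exact_mod_cast hc
  refine hc'.trans ?_
  have f1 := Int.floor_le ((y - z0) / k)
  have f2 := Int.le_ceil ((x - z0) / k)
  have e : (y - x) / k = (y - z0) / k - (x - z0) / k := by ring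
  have : (((⌊(y - z0) / k⌋ + 1 - ⌈(x - z0) / k⌉).toNat : ℤ) : ℝ) ≤ (y - x) / k + 1 := by
    rw [Int.toNat_eq_max]
    push_cast
    apply max_le
    · linarith
    · have : 0 ≤ (y - x) / k := div_nonneg (by linarith) hk'.le
      linarith
  exact_mod_cast this

lemma card_fiber_le {α β : Type*} [DecidableEq β] (F : Finset α) (f : α → β) (c : ℝ)
    (h : ∀ b ∈ F.image f, ((F.filter (fun a => f a = b)).card : ℝ) ≤ c) :
    (F.card : ℝ) ≤ c * (F.image f).card := by
  rw [Finset.card_eq_sum_card_image f F]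
  push_cast
  refine (Finset.sum_le_sum h).trans ?_
  rw [Finset.sum_const, nsmul_eq_mul, mul_comm]

/-- the pairs of centres -/
def PairProp (γ : ℝ) (q r : ℕ) (Δ u ℓ : ℝ) (F : Finset (ℤ × ℤ)) : Prop :=
  ∀ ab ∈ F, |((ab.1:ℝ) + γ) / q - (ab.2 + γ) / r| < Δ ∧ u - ℓ / 2 ≤ ((ab.1:ℝ) + γ) / q ∧
    ((ab.1:ℝ) + γ) / q ≤ u + 3 * ℓ / 2

lemma overlap (γ : ℝ) (q r : ℕ) (hq : 0 < q) (hr : 0 < r) (a b u ℓ : ℝ) (ha : 0 ≤ a) (hb : 0 ≤ b)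
    (hal : a / q ≤ ℓ / 2) :
    ∃ F : Finset (ℤ × ℤ), PairProp γ q r (a / q + b / r) u ℓ F ∧
      volume.real ({x : ℝ | dnint (q * x - γ) < a} ∩ {x : ℝ | dnint (r * x - γ) < b} ∩
        Set.Ioo u (u + ℓ)) ≤ 2 * min (a / q) (b / r) * F.card := by
  classical
  have hq' : (0:ℝ) < q := by exact_mod_cast hq
  have hr' : (0:ℝ) < r := by exact_mod_cast hr
  set Δ := a / q + b / r with hΔ
  set S : Finset (ℤ × ℤ) := (Finset.Icc ⌈q * (u - ℓ/2) - γ⌉ ⌊q * (u + 3 * ℓ / 2) - γ⌋) ×ˢ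
    (Finset.Icc ⌈r * (u - ℓ/2 - Δ) - γ⌉ ⌊r * (u + 3 * ℓ / 2 + Δ) - γ⌋) with hS
  set F := S.filter (fun ab => |((ab.1:ℝ) + γ) / q - (ab.2 + γ) / r| < Δ ∧
    u - ℓ / 2 ≤ ((ab.1:ℝ) + γ) / q ∧ ((ab.1:ℝ) + γ) / q ≤ u + 3 * ℓ / 2) with hF
  refine ⟨F, fun ab hab => (Finset.mem_filter.mp hab).2, ?_⟩
  set m := min (a / q) (b / r) with hm
  have hm0 : 0 ≤ m := le_min (by positivity) (by positivity)
  set I : ℤ × ℤ → Set ℝ := fun ab =>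
    if a / q ≤ b / r then Metric.ball (((ab.1:ℝ) + γ) / q) m else Metric.ball (((ab.2:ℝ) + γ) / r) m
  have hvol : ∀ ab, volume.real (I ab) = 2 * m := by
    intro ab
    simp only [I]
    split_ifs
    · rw [Real.volume_real_ball hm0]
    · rw [Real.volume_real_ball hm0]
  have hsub : ({x : ℝ | dnint (q * x - γ) < a} ∩ {x : ℝ | dnint (r * x - γ) < b} ∩
        Set.Ioo u (u + ℓ)) ⊆ ⋃ ab ∈ F, I ab := by
    rintro x ⟨⟨h1, h2⟩, h3, h4⟩
    simp only [Set.mem_ofPred_eq, dnint_lt_iff] at h1 h2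
    obtain ⟨i, hi⟩ := h1
    obtain ⟨j, hj⟩ := h2
    have hi' : |x - ((i:ℝ) + γ) / q| < a / q := by
      have : x - ((i:ℝ) + γ) / q = (q * x - γ - i) / q := by field_simp; ring
      rw [this, abs_div, abs_of_pos hq']; gcongr
    have hj' : |x - ((j:ℝ) + γ) / r| < b / r := by
      have : x - ((j:ℝ) + γ) / r = (r * x - γ - j) / r := by field_simp; ring
      rw [this, abs_div, abs_of_pos hr']; gcongr
    have hi2 := abs_lt.mp hi'
    have hj2 := abs_lt.mp hj'
    have k1 : |((i:ℝ) + γ) / q - (j + γ) / r| < Δ := by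
      rw [abs_lt]; constructor <;> linarith
    have k2 : u - ℓ / 2 ≤ ((i:ℝ) + γ) / q := by linarith
    have k3 : ((i:ℝ) + γ) / q ≤ u + 3 * ℓ / 2 := by linarith
    have k1' := abs_lt.mp k1
    have k4 : u - ℓ / 2 - Δ ≤ ((j:ℝ) + γ) / r := by linarith
    have k5 : ((j:ℝ) + γ) / r ≤ u + 3 * ℓ / 2 + Δ := by linarith
    have hmem : (i, j) ∈ F := by
      rw [hF, Finset.mem_filter, hS, Finset.mem_product, Finset.mem_Icc, Finset.mem_Icc]
      refine ⟨⟨⟨?_, ?_⟩, ⟨?_, ?_⟩⟩, k1, k2, k3⟩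
      · rw [Int.ceil_le]; rw [le_div_iff₀ hq'] at k2; simp only; linarith
      · rw [Int.le_floor]; rw [div_le_iff₀ hq'] at k3; simp only; linarith
      · rw [Int.ceil_le]; rw [le_div_iff₀ hr'] at k4; simp only; linarith
      · rw [Int.le_floor]; rw [div_le_iff₀ hr'] at k5; simp only; linarith
    simp only [Set.mem_iUnion]
    refine ⟨(i, j), hmem, ?_⟩
    simp only [I]
    split_ifs with hc
    · rw [Metric.mem_ball, Real.dist_eq, hm, min_eq_left hc]; exact hi'
    · rw [Metric.mem_ball, Real.dist_eq, hm, min_eq_right (not_le.mp hc).le]; exact hj'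
  have hfin : ∀ ab, volume (I ab) ≠ ⊤ := by
    intro ab
    simp only [I]
    split_ifs <;> exact measure_ball_lt_top.ne
  calc _ ≤ volume.real (⋃ ab ∈ F, I ab) := by
        refine measureReal_mono hsub ?_
        refine ne_of_lt (lt_of_le_of_lt (measure_biUnion_finset_le F I) ?_)
        exact ENNReal.sum_lt_top.2 fun ab _ => (hfin ab).lt_top
    _ ≤ ∑ ab ∈ F, volume.real (I ab) := measureReal_biUnion_finset_le F I
    _ = 2 * m * F.card := by
        rw [Finset.sum_congr rfl (fun ab _ => hvol ab), Finset.sum_const, nsmul_eq_mul, mul_comm]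

lemma pair_count1 (γ : ℝ) (q r : ℕ) (hq : 0 < q) (hr : 0 < r) (Δ u ℓ : ℝ) (hΔ : 0 ≤ Δ) (hℓ : 0 ≤ ℓ)
    (F : Finset (ℤ × ℤ)) (hF : PairProp γ q r Δ u ℓ F) :
    (F.card : ℝ) ≤ (2 * ℓ * q + 1) * (2 * r * Δ + 1) := by
  classical
  have hq' : (0:ℝ) < q := by exact_mod_cast hq
  have hr' : (0:ℝ) < r := by exact_mod_cast hr
  have h1 : ∀ a ∈ F.image Prod.fst,
      ((F.filter (fun ab => ab.1 = a)).card : ℝ) ≤ 2 * r * Δ + 1 := by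
    intro a _
    have hinj : Set.InjOn Prod.snd (F.filter (fun ab => ab.1 = a) : Set (ℤ × ℤ)) := by
      rintro ⟨x1, x2⟩ hx ⟨y1, y2⟩ hy h
      simp at hx hy h
      ext <;> simp [hx.2, hy.2, h]
    have hinj' : ((F.filter (fun ab => ab.1 = a)).image Prod.snd).card =
        (F.filter (fun ab => ab.1 = a)).card := by
      apply Finset.card_image_of_injOn; simpa using hinj
    rw [← hinj']
    have := int_card_le ((F.filter (fun ab => ab.1 = a)).image Prod.snd)
      (r * (((a:ℝ) + γ) / q - Δ) - γ) (r * (((a:ℝ) + γ) / q + Δ) - γ) (by nlinarith) 1 one_pos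
      (by
        intro z hz
        obtain ⟨ab, hab, rfl⟩ := Finset.mem_image.mp hz
        obtain ⟨hab1, rfl⟩ := Finset.mem_filter.mp hab
        have k := abs_lt.mp (hF ab hab1).1
        have e : ((ab.2:ℝ) + γ) = r * (((ab.2:ℝ) + γ) / r) := by field_simp
        constructor <;> nlinarith [k.1, k.2])
      (fun _ _ _ _ => one_dvd _)
    refine this.trans (le_of_eq ?_)
    push_cast; ring
  have h2 : ((F.image Prod.fst).card : ℝ) ≤ 2 * ℓ * q + 1 := by
    have := int_card_le (F.image Prod.fst) (q * (u - ℓ/2) - γ) (q * (u + 3 * ℓ / 2) - γ)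
      (by nlinarith) 1 one_pos
      (by
        intro z hz
        obtain ⟨ab, hab, rfl⟩ := Finset.mem_image.mp hz
        obtain ⟨_, k2, k3⟩ := hF ab hab
        rw [le_div_iff₀ hq'] at k2
        rw [div_le_iff₀ hq'] at k3
        constructor <;> linarith)
      (fun _ _ _ _ => one_dvd _)
    refine this.trans (le_of_eq ?_)
    push_cast; ring
  have h3 := card_fiber_le F Prod.fst _ h1
  refine h3.trans ?_
  rw [mul_comm]
  gcongr

open Classical in
lemma pair_count2 (γ : ℝ) (q r d q' r' : ℕ) (hq : 0 < q') (hr : 0 < r') (hd : 0 < d)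
    (hqd : q = d * q') (hrd : r = d * r') (hcop : Nat.Coprime q' r')
    (Δ u ℓ : ℝ) (hΔ : 0 ≤ Δ) (hℓ : 0 ≤ ℓ)
    (F : Finset (ℤ × ℤ)) (hF : PairProp γ q r Δ u ℓ F) :
    (F.card : ℝ) ≤ (2 * ℓ * d + 1) * (4 * (Δ * q * r / d) +
      if dnint (((r':ℝ) - q') * γ) < Δ * q * r / d then 1 else 0) := by
  have hq1 : (0:ℝ) < q' := by exact_mod_cast hq
  have hr1 : (0:ℝ) < r' := by exact_mod_cast hr
  have hd1 : (0:ℝ) < d := by exact_mod_cast hd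
  have hqR : (q:ℝ) = d * q' := by exact_mod_cast hqd
  have hrR : (r:ℝ) = d * r' := by exact_mod_cast hrd
  set E := Δ * q * r / d with hE
  have hE0 : 0 ≤ E := by positivity
  set f : ℤ × ℤ → ℤ := fun ab => ab.1 * r' - ab.2 * q' with hf
  have hn : ∀ ab ∈ F, |(f ab : ℝ) + (r' - q') * γ| < E := by
    intro ab hab
    have k := (hF ab hab).1
    have e : ((ab.1:ℝ) + γ) / q - (ab.2 + γ) / r = ((f ab : ℝ) + (r' - q') * γ) * (d / (q * r)) := by
      rw [hqR, hrR, hf]; push_cast; field_simp; ring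
    rw [e, abs_mul, abs_of_nonneg (by positivity : (0:ℝ) ≤ d / (q * r))] at k
    have hpos : (0:ℝ) < d / (q * r) := by rw [hqR, hrR]; positivity
    rw [← lt_div_iff₀ hpos] at k
    refine k.trans_le (le_of_eq ?_)
    rw [hE, div_div_eq_mul_div]; ring
  have h1 : ∀ n ∈ F.image f, ((F.filter (fun ab => f ab = n)).card : ℝ) ≤ 2 * ℓ * d + 1 := by
    intro n _
    have hinj' : ((F.filter (fun ab => f ab = n)).image Prod.fst).card =
        (F.filter (fun ab => f ab = n)).card := by
      apply Finset.card_image_of_injOn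
      rintro ⟨x1, x2⟩ hx ⟨y1, y2⟩ hy h
      simp only [Finset.coe_filter, Set.mem_ofPred_eq] at hx hy h
      have h2 := hx.2.trans hy.2.symm
      simp only [hf] at h2
      subst h
      have hq2 : (q':ℤ) ≠ 0 := by exact_mod_cast hq.ne'
      have : x2 * (q':ℤ) = y2 * q' := by linarith
      rw [mul_right_cancel₀ hq2 this]
    rw [← hinj']
    have := int_card_le ((F.filter (fun ab => f ab = n)).image Prod.fst)
      (q * (u - ℓ/2) - γ) (q * (u + 3 * ℓ / 2) - γ)
      (by rw [hqR]; nlinarith [mul_pos hd1 hq1]) q' (by exact_mod_cast hq)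
      (by
        intro z hz
        obtain ⟨ab, hab, rfl⟩ := Finset.mem_image.mp hz
        obtain ⟨_, k2, k3⟩ := hF ab (Finset.mem_filter.mp hab).1
        have hq3 : (0:ℝ) < q := by rw [hqR]; positivity
        rw [le_div_iff₀ hq3] at k2
        rw [div_le_iff₀ hq3] at k3
        constructor <;> linarith)
      (by
        intro z hz w hw
        obtain ⟨x, hx, rfl⟩ := Finset.mem_image.mp hz
        obtain ⟨y, hy, rfl⟩ := Finset.mem_image.mp hw
        have h2 := (Finset.mem_filter.mp hx).2.trans (Finset.mem_filter.mp hy).2.symm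
        simp only [hf] at h2
        have hdv : (q':ℤ) ∣ (x.1 - y.1) * r' := ⟨x.2 - y.2, by linear_combination h2⟩
        exact (Nat.isCoprime_iff_coprime.2 hcop).dvd_of_dvd_mul_right hdv)
    refine this.trans (le_of_eq ?_)
    rw [hqR]; push_cast; field_simp; ring
  have h3 := card_fiber_le F f _ h1
  refine h3.trans ?_
  have hl : 0 ≤ 2 * ℓ * d + 1 := by positivity
  apply mul_le_mul_of_nonneg_left _ hl
  have h4 : ((F.image f).card : ℝ) ≤ 2 * E + 1 := by
    have := int_card_le (F.image f) (-((r' - q') * γ) - E) (-((r' - q') * γ) + E)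
      (by linarith) 1 one_pos
      (by
        intro z hz
        obtain ⟨ab, hab, rfl⟩ := Finset.mem_image.mp hz
        have := abs_lt.mp (hn ab hab)
        constructor <;> linarith)
      (fun _ _ _ _ => one_dvd _)
    refine this.trans (le_of_eq ?_)
    push_cast; ring
  rcases F.eq_empty_or_nonempty with rfl | ⟨ab, hab⟩
  · simp only [Finset.image_empty, Finset.card_empty, Nat.cast_zero]
    split_ifs <;> linarith
  have hbad : dnint (((r':ℝ) - q') * γ) < E := by
    rw [dnint_lt_iff]
    refine ⟨-(f ab), ?_⟩
    have := hn ab hab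
    push_cast
    rwa [sub_neg_eq_add, add_comm]
  rw [if_pos hbad]
  linarith


lemma tendsto_nlog : Tendsto (fun r : ℕ => Nat.log 2 r) atTop atTop := by
  refine tendsto_atTop.2 fun b => ?_
  filter_upwards [eventually_ge_atTop (2^b)] with r hr
  exact Nat.le_log_of_pow_le (by norm_num) hr

lemma tendsto_lam : Tendsto lam atTop atTop := tendsto_nlog.comp tendsto_nlog

lemma log_M_le (r : ℕ) (k : ℕ) (hM : 1 ≤ Nat.log 2 r) :
    Real.log ((Nat.log 2 r : ℝ) ^ k) ≤ k * (lam r + 1) := by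
  have hM' : (0:ℝ) < Nat.log 2 r := by exact_mod_cast hM
  rw [Real.log_pow]
  gcongr
  have h1 : (Nat.log 2 r : ℝ) ≤ 2 ^ (lam r + 1) := by
    exact_mod_cast (Nat.lt_pow_succ_log_self (by norm_num) (Nat.log 2 r)).le
  calc Real.log (Nat.log 2 r) ≤ Real.log (2 ^ (lam r + 1)) := Real.log_le_log hM' h1
    _ = (lam r + 1) * Real.log 2 := by rw [Real.log_pow]; push_cast; ring
    _ ≤ (lam r + 1) * 1 := by gcongr; linarith [Real.log_two_lt_d9]
    _ = _ := mul_one _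

lemma sum_inv_div (r : ℕ) (hM : 1 ≤ Nat.log 2 r) (hl : 1 ≤ lam r)
    (hτ : r.divisors.card ≤ (Nat.log 2 r) ^ 3) :
    ∑ d ∈ r.divisors, (1:ℝ) / d ≤ 8 * lam r := by
  set M := Nat.log 2 r with hMd
  have hM' : (0:ℝ) < M := by exact_mod_cast hM
  rw [← Finset.sum_filter_add_sum_filter_not r.divisors (fun d => d ≤ M^3)]
  have h1 : ∑ d ∈ r.divisors.filter (fun d => d ≤ M^3), (1:ℝ) / d ≤ 1 + 3 * (lam r + 1) := by
    calc _ ≤ ∑ d ∈ Finset.Icc 1 (M^3), (1:ℝ) / d := by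
          apply Finset.sum_le_sum_of_subset_of_nonneg
          · intro d hd
            obtain ⟨h1, h2⟩ := Finset.mem_filter.mp hd
            exact Finset.mem_Icc.2 ⟨Nat.pos_of_mem_divisors h1, h2⟩
          · intros; positivity
      _ ≤ 1 + Real.log (((M^3 : ℕ):ℝ) / (1:ℕ)) := harm_sum 1 (M^3) le_rfl (Nat.one_le_pow _ _ hM)
      _ ≤ _ := by
          have := log_M_le r 3 hM
          push_cast at this ⊢
          rw [div_one]; linarith
  have h2 : ∑ d ∈ r.divisors.filter (fun d => ¬ d ≤ M^3), (1:ℝ) / d ≤ 1 := by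
    calc _ ≤ ∑ d ∈ r.divisors.filter (fun d => ¬ d ≤ M^3), (1:ℝ) / (M:ℝ)^3 := by
          apply Finset.sum_le_sum
          intro d hd
          have := (Finset.mem_filter.mp hd).2
          apply one_div_le_one_div_of_le (by positivity)
          exact_mod_cast (not_le.mp this).le
      _ = (r.divisors.filter (fun d => ¬ d ≤ M^3)).card * (1 / (M:ℝ)^3) := by
          rw [Finset.sum_const, nsmul_eq_mul]
      _ ≤ (M:ℝ)^3 * (1 / (M:ℝ)^3) := by
          gcongr
          exact_mod_cast (Finset.card_filter_le _ _).trans hτ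
      _ = 1 := by field_simp
  have : (1:ℝ) ≤ lam r := by exact_mod_cast hl
  linarith

lemma gcd_sum_le (r : ℕ) (hr : 0 < r) (ℓ : ℝ) (S : Finset ℕ) (B : ℕ → ℝ)
    (hℓ : 0 ≤ ℓ)
    (hB : ∀ d ∈ r.divisors, ((S.filter (fun q => q.gcd r = d)).card : ℝ) ≤ (r / d) * B d) :
    ∑ q ∈ S, (2 * ℓ * (q.gcd r : ℝ) + 1) / r ≤ ∑ d ∈ r.divisors, (2 * ℓ + 1 / d) * B d := by
  have hr' : (0:ℝ) < r := by exact_mod_cast hr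
  rw [← Finset.sum_fiberwise_of_maps_to (g := fun q => q.gcd r) (t := r.divisors)
    (fun q _ => Nat.mem_divisors.2 ⟨Nat.gcd_dvd_right q r, hr.ne'⟩)]
  apply Finset.sum_le_sum
  intro d hd
  have hd' : (0:ℝ) < d := by exact_mod_cast Nat.pos_of_mem_divisors hd
  rw [Finset.sum_congr rfl (g := fun _ => (2 * ℓ * (d : ℝ) + 1) / r)
    (fun q hq => by rw [(Finset.mem_filter.mp hq).2]), Finset.sum_const, nsmul_eq_mul]
  calc _ ≤ ((r / d) * B d) * ((2 * ℓ * (d : ℝ) + 1) / r) := by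
        gcongr; exact hB d hd
    _ = _ := by field_simp

lemma bad_total (γ : ℝ) (hγ : Irrational γ) (ht : TamelyLiouville γ) (C : ℝ) (hC : 0 < C) :
    ∃ K > (0:ℝ), ∀ ℓ : ℝ, 0 < ℓ → ℓ ≤ 1 → ∃ r0 : ℕ, ∀ r, r0 ≤ r →
      r.divisors.card ≤ (Nat.log 2 r) ^ 3 → ∀ S : Finset ℕ,
      (∀ q ∈ S, 0 < q ∧ q < r ∧ dnint ((((r / q.gcd r : ℕ) : ℝ) - ((q / q.gcd r : ℕ):ℝ)) * γ) <
        5 * C * (r / q) / (q.gcd r * (lam r : ℝ) ^ 2)) →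
      ∑ q ∈ S, (2 * ℓ * (q.gcd r : ℝ) + 1) / r ≤ K * ℓ := by
  have hZs : Summable (fun d : ℕ => (1:ℝ) / d ^ 2) := Real.summable_one_div_nat_pow.2 one_lt_two
  set Z := ∑' d : ℕ, (1:ℝ) / d ^ 2 with hZ
  have hZ0 : 0 ≤ Z := tsum_nonneg fun _ => by positivity
  refine ⟨1600 * C + 3, by positivity, fun ℓ hℓ hℓ1 => ?_⟩
  obtain ⟨r1, hr1⟩ := tame_E γ hγ ht (5 * C) (by positivity)
  have e1 : ∀ᶠ r : ℕ in atTop, 100 * C * Z / ℓ ≤ (lam r : ℝ) :=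
    ((tendsto_natCast_atTop_atTop (R := ℝ)).comp tendsto_lam).eventually_ge_atTop _
  have e2 : ∀ᶠ r : ℕ in atTop, 18 / ℓ ≤ (Nat.log 2 r : ℝ) :=
    ((tendsto_natCast_atTop_atTop (R := ℝ)).comp tendsto_nlog).eventually_ge_atTop _
  have e3 : ∀ᶠ r : ℕ in atTop, 1 ≤ lam r := tendsto_lam.eventually_ge_atTop _
  have e4 : ∀ᶠ r : ℕ in atTop, 1 ≤ Nat.log 2 r := tendsto_nlog.eventually_ge_atTop _
  obtain ⟨r0, hr0⟩ := eventually_atTop.1 (((e1.and e2).and (e3.and e4)).and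
    ((eventually_ge_atTop r1).and (eventually_ge_atTop 1)))
  refine ⟨r0, fun r hr hτ S hS => ?_⟩
  obtain ⟨⟨⟨hlamb, hM18⟩, hl1, hM1⟩, hrr1, hrpos⟩ := hr0 r hr
  obtain ⟨s, p, Y, hs, hcop, happ, hMs, hXY, hdio⟩ := hr1 r hrr1
  set M := Nat.log 2 r with hMd
  set L : ℝ := (lam r : ℝ) with hL
  have hL1 : 1 ≤ L := by rw [hL]; exact_mod_cast hl1
  have hM' : (1:ℝ) ≤ M := by exact_mod_cast hM1
  have hr' : (0:ℝ) < r := by exact_mod_cast hrpos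
  have hs' : (0:ℝ) < s := by exact_mod_cast hs
  have hMl : 18 / (M:ℝ) ≤ ℓ := by
    rw [div_le_iff₀ hℓ] at hM18; rw [div_le_iff₀ (by linarith)]; linarith
  have hτ' : (r.divisors.card : ℝ) ≤ (M:ℝ)^3 := by exact_mod_cast hτ
  have hτ4 : (r.divisors.card : ℝ) / (M:ℝ)^4 ≤ 1 / M := by
    rw [div_le_div_iff₀ (by positivity) (by positivity)]
    calc _ ≤ (M:ℝ)^3 * M := by gcongr
      _ = _ := by ring
  rw [← Finset.sum_filter_add_sum_filter_not S (fun q => q * M^4 < r)]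
  have H1 : ∑ q ∈ S.filter (fun q => q * M^4 < r), (2 * ℓ * (q.gcd r : ℝ) + 1) / r ≤ ℓ := by
    refine (gcd_sum_le r hrpos ℓ _ (fun _ => 1 / (M:ℝ)^4) hℓ.le ?_).trans ?_
    · intro d hd
      have hdpos := Nat.pos_of_mem_divisors hd
      have hd' : (0:ℝ) < d := by exact_mod_cast hdpos
      have hcard : ((S.filter (fun q => q * M^4 < r)).filter (fun q => q.gcd r = d)).card ≤
          (Finset.Icc 1 (r / (d * M^4))).card := by
        apply Finset.card_le_card_of_injOn (fun q => q / d)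
        · intro q hq
          simp only [Finset.coe_filter, Set.mem_ofPred_eq, Finset.mem_filter] at hq
          obtain ⟨⟨hqS, hq2⟩, hq3⟩ := hq
          have hdq : d ∣ q := hq3 ▸ Nat.gcd_dvd_left q r
          obtain ⟨k, rfl⟩ := hdq
          have hpos := (hS _ hqS).1
          simp only [Finset.coe_Icc, Set.mem_Icc]
          rw [Nat.mul_div_cancel_left _ hdpos]
          constructor
          · exact Nat.pos_of_mul_pos_left hpos
          · rw [Nat.le_div_iff_mul_le (by positivity)]
            nlinarith
        · intro a ha b hb h
          simp only [Finset.coe_filter, Set.mem_ofPred_eq, Finset.mem_filter] at ha hb h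
          have hda : d ∣ a := ha.2 ▸ Nat.gcd_dvd_left a r
          have hdb : d ∣ b := hb.2 ▸ Nat.gcd_dvd_left b r
          rw [← Nat.div_mul_cancel hda, ← Nat.div_mul_cancel hdb, h]
      rw [Nat.card_Icc, Nat.add_sub_cancel] at hcard
      calc _ ≤ ((r / (d * M^4) : ℕ) : ℝ) := by exact_mod_cast hcard
        _ ≤ (r:ℝ) / ((d * M^4 : ℕ) : ℝ) := Nat.cast_div_le
        _ = _ := by push_cast; field_simp
    · calc _ ≤ ∑ d ∈ r.divisors, 3 * (1 / (M:ℝ)^4) := by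
            apply Finset.sum_le_sum
            intro d hd
            have hd' : (1:ℝ) ≤ d := by exact_mod_cast Nat.pos_of_mem_divisors hd
            have : (1:ℝ) / d ≤ 1 := by rw [div_le_one (by linarith)]; exact hd'
            gcongr; linarith
        _ = 3 * (r.divisors.card / (M:ℝ)^4) := by
            rw [Finset.sum_const, nsmul_eq_mul]; ring
        _ ≤ 3 * (1 / M) := by gcongr
        _ ≤ 18 / M := by rw [mul_one_div]; gcongr; norm_num
        _ ≤ ℓ := hMl
  have H2 : ∑ q ∈ S.filter (fun q => ¬ q * M^4 < r), (2 * ℓ * (q.gcd r : ℝ) + 1) / r ≤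
      (1600 * C + 2) * ℓ := by
    refine (gcd_sum_le r hrpos ℓ _ (fun d => 100 * C / L * (1 / d) + 6 / s) hℓ.le ?_).trans ?_
    · intro d hd
      have hdpos := Nat.pos_of_mem_divisors hd
      have hd' : (0:ℝ) < d := by exact_mod_cast hdpos
      have hdr := Nat.dvd_of_mem_divisors hd
      set N := r / d with hN
      have hNd : d * N = r := Nat.mul_div_cancel' hdr
      have hNR : (N:ℝ) = r / d := by rw [← hNd]; push_cast; field_simp
      have hNpos : 0 < N := Nat.pos_of_ne_zero (by rintro h; rw [h] at hNd; omega)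
      have hNpos' : (0:ℝ) < N := by exact_mod_cast hNpos
      set G := ((S.filter (fun q => ¬ q * M^4 < r)).filter (fun q => q.gcd r = d)) with hG
      have hinj : Set.InjOn (fun q => q / d) (G : Set ℕ) := by
        intro a ha b hb h
        simp only [hG, Finset.coe_filter, Set.mem_ofPred_eq, Finset.mem_filter] at ha hb h
        have hda : d ∣ a := ha.2 ▸ Nat.gcd_dvd_left a r
        have hdb : d ∣ b := hb.2 ▸ Nat.gcd_dvd_left b r
        rw [← Nat.div_mul_cancel hda, ← Nat.div_mul_cancel hdb, h]
      rw [← Finset.card_image_of_injOn hinj]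
      have hprop : ∀ k ∈ G.image (fun q => q / d), 0 < k ∧ k < N ∧ N ≤ k * M^4 ∧
          dnint (((N:ℝ) - k) * γ) < 5 * C / (d * L^2) * (N / k) := by
        intro k hk
        obtain ⟨q, hq, rfl⟩ := Finset.mem_image.mp hk
        simp only [hG, Finset.mem_filter, not_lt] at hq
        obtain ⟨⟨hqS, hq2⟩, hq3⟩ := hq
        obtain ⟨g1, g2, g3⟩ := hS q hqS
        rw [hq3] at g3
        have hdq : d ∣ q := hq3 ▸ Nat.gcd_dvd_left q r
        obtain ⟨k, rfl⟩ := hdq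
        rw [Nat.mul_div_cancel_left _ hdpos] at g3 ⊢
        have hkpos : 0 < k := Nat.pos_of_mul_pos_left g1
        refine ⟨hkpos, ?_, ?_, ?_⟩
        · rw [← hNd] at g2; exact lt_of_mul_lt_mul_left g2 (Nat.zero_le d)
        · rw [← hNd, mul_assoc] at hq2; exact le_of_mul_le_mul_left hq2 hdpos
        · refine g3.trans_le (le_of_eq ?_)
          have hk' : (0:ℝ) < k := by exact_mod_cast hkpos
          rw [hNR]; push_cast; field_simp
      rw [← hNR]
      have hκ : 0 ≤ 5 * C / (d * L^2) := by positivity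
      rcases le_or_gt N Y with hNY | hNY
      · have hemp : G.image (fun q => q / d) = ∅ := by
          rw [Finset.eq_empty_iff_forall_notMem]
          intro k hk
          obtain ⟨k0, k1, k2, k3⟩ := hprop k hk
          have h5 := hdio (N - k) (by omega) (by omega)
          rw [Nat.cast_sub k1.le] at h5
          have hk' : (0:ℝ) < k := by exact_mod_cast k0
          have : 5 * C / (d * L^2) * (N / k) ≤ 5 * C * (M:ℝ)^4 * Y / r := by
            have i1 : (N:ℝ) / k ≤ (M:ℝ)^4 := by
              rw [div_le_iff₀ hk', mul_comm]; exact_mod_cast k2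
            have i2 : 5 * C / (d * L^2) ≤ 5 * C / d := by
              apply div_le_div_of_nonneg_left (by positivity) hd'
              nlinarith [one_le_pow₀ hL1 (n := 2)]
            have i3 : (1:ℝ) / d ≤ Y / r := by
              rw [div_le_div_iff₀ hd' hr', one_mul, ← hNd]
              push_cast
              rw [mul_comm]; gcongr
            calc _ ≤ 5 * C / d * (M:ℝ)^4 := by gcongr
              _ = 5 * C * (M:ℝ)^4 * (1 / d) := by ring
              _ ≤ 5 * C * (M:ℝ)^4 * (Y / r) := by gcongr
              _ = _ := by ring
          linarith
        rw [hemp]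
        simp only [Finset.card_empty, Nat.cast_zero]
        positivity
      · have hcnt := bad_count γ s p hs hcop happ (M^4) N (by positivity) (hXY.trans hNY.le)
          (5 * C / (d * L^2)) hκ _ (fun k hk => (hprop k hk).2)
        refine hcnt.trans ?_
        have hlog : 1 + Real.log (2 * ((M^4 : ℕ):ℝ)) ≤ 10 * L := by
          rw [Real.log_mul (by norm_num) (by positivity)]
          have := log_M_le r 4 hM1
          push_cast at this ⊢
          have l2 := Real.log_two_lt_d9
          linarith
        calc _ ≤ 2 * (5 * C / (d * L^2)) * N * (10 * L) + 6 * (N / s) := by gcongr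
          _ = _ := by field_simp; ring
    · have hsum1 := sum_inv_div r hM1 hl1 hτ
      have hsum2 : ∑ d ∈ r.divisors, (1:ℝ) / d^2 ≤ Z :=
        hZs.sum_le_tsum _ (fun _ _ => by positivity)
      calc _ ≤ ∑ d ∈ r.divisors, (2 * ℓ * (100 * C / L) * (1 / (d:ℝ)) +
            100 * C / L * (1 / (d:ℝ)^2) + 18 / s) := by
            apply Finset.sum_le_sum
            intro d hd
            have hd' : (1:ℝ) ≤ d := by exact_mod_cast Nat.pos_of_mem_divisors hd
            have : (1:ℝ) / d ≤ 1 := by rw [div_le_one (by linarith)]; exact hd'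
            have e : (2 * ℓ + 1 / (d:ℝ)) * (100 * C / L * (1 / d) + 6 / s) =
              2 * ℓ * (100 * C / L) * (1 / (d:ℝ)) + 100 * C / L * (1 / (d:ℝ)^2) +
               (2 * ℓ + 1 / (d:ℝ)) * (6 / s) := by field_simp
            rw [e]
            have : (2 * ℓ + 1 / (d:ℝ)) * (6 / s) ≤ 3 * (6 / s) := by gcongr; linarith
            have e2 : 3 * (6 / (s:ℝ)) = 18 / s := by ring
            linarith
        _ = 2 * ℓ * (100 * C / L) * ∑ d ∈ r.divisors, (1 / (d:ℝ)) +
            100 * C / L * ∑ d ∈ r.divisors, (1 / (d:ℝ)^2) + r.divisors.card * (18 / s) := by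
            rw [Finset.sum_add_distrib, Finset.sum_add_distrib, ← Finset.mul_sum, ← Finset.mul_sum,
              Finset.sum_const, nsmul_eq_mul]
        _ ≤ 2 * ℓ * (100 * C / L) * (8 * L) + 100 * C / L * Z + ℓ := by
            have t3 : r.divisors.card * (18 / (s:ℝ)) ≤ ℓ := by
              have : (M:ℝ)^4 ≤ s := by exact_mod_cast hMs
              calc r.divisors.card * (18 / (s:ℝ)) ≤ r.divisors.card * (18 / (M:ℝ)^4) := by gcongr
                _ = 18 * (r.divisors.card / (M:ℝ)^4) := by ring
                _ ≤ 18 * (1 / M) := by gcongr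
                _ = 18 / M := by ring
                _ ≤ ℓ := hMl
            gcongr
        _ ≤ 1600 * C * ℓ + ℓ + ℓ := by
            have t1 : 2 * ℓ * (100 * C / L) * (8 * L) = 1600 * C * ℓ := by field_simp; ring
            have t2 : 100 * C / L * Z ≤ ℓ := by
              rw [div_le_iff₀ hℓ] at hlamb
              rw [div_mul_eq_mul_div, div_le_iff₀ (by linarith)]; linarith
            linarith
        _ = _ := by ring
  linarith


lemma lam_mono : Monotone lam := fun _ _ h => Nat.log_mono_right (Nat.log_mono_right h)

lemma sq_lt_of_lam (q r : ℕ) (hr : r ≠ 0) (h : lam q + 1 < lam r) : q * q < r := by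
  have h1 : Nat.log 2 q + 1 ≤ 2 ^ (lam q + 1) := Nat.lt_pow_succ_log_self (by norm_num) _
  have h2 : q < 2 ^ (2 ^ (lam q + 1)) :=
    (Nat.lt_pow_succ_log_self (by norm_num) q).trans_le (Nat.pow_le_pow_right (by norm_num) h1)
  have hlr : Nat.log 2 r ≠ 0 := by
    intro h0
    have : lam r = 0 := by unfold lam; rw [h0]; simp
    omega
  have h3 : 2 ^ (lam r) ≤ Nat.log 2 r := Nat.pow_log_le_self 2 hlr
  have h4 : 2 ^ Nat.log 2 r ≤ r := Nat.pow_log_le_self 2 hr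
  calc q * q < 2 ^ (2 ^ (lam q + 1)) * 2 ^ (2 ^ (lam q + 1)) := Nat.mul_lt_mul'' h2 h2
    _ = 2 ^ (2 ^ (lam q + 2)) := by rw [← pow_add]; congr 1; ring
    _ ≤ 2 ^ (2 ^ (lam r)) := Nat.pow_le_pow_right (by norm_num) (Nat.pow_le_pow_right (by norm_num) h)
    _ ≤ 2 ^ Nat.log 2 r := Nat.pow_le_pow_right (by norm_num) h3
    _ ≤ r := h4

/-- approximation set for one denominator -/
def Aset (γ : ℝ) (φ : ℕ → ℝ) (q : ℕ) : Set ℝ := {x : ℝ | dnint (q * x - γ) < φ q}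

lemma min_mul_add_le (x y : ℝ) (hx : 0 ≤ x) (hy : 0 ≤ y) : min x y * (x + y) ≤ 2 * (x * y) := by
  rcases le_total x y with h | h
  · rw [min_eq_left h]; nlinarith
  · rw [min_eq_right h]; nlinarith

set_option maxHeartbeats 1000000 in
lemma row (γ : ℝ) (hγ : Irrational γ) (ht : TamelyLiouville γ) (C : ℝ) (hC : 0 < C) :
    ∃ K > (0:ℝ), ∀ ℓ : ℝ, 0 < ℓ → ℓ ≤ 1 → ∃ N0 : ℕ, 4 ≤ N0 ∧ 4 / ℓ ≤ N0 ∧ 8 * C / ℓ ≤ N0 ∧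
      ∀ φ : ℕ → ℝ, (∀ q, 0 ≤ φ q) →
      (∀ q, 4 ≤ q → φ q ≤ C / (q * (lam q : ℝ) ^ 2)) →
      (∀ q, φ q ≠ 0 → q.divisors.card ≤ (Nat.log 2 q) ^ 3) →
      (∀ j, ∀ T : Finset ℕ, (∀ q ∈ T, lam q = j) → ∑ q ∈ T, φ q ≤ ℓ) →
      ∀ u : ℝ, ∀ r, N0 ≤ r →
      ∑ q ∈ Finset.Ico N0 r, volume.real (Aset γ φ q ∩ Aset γ φ r ∩ Set.Ioo u (u + ℓ)) ≤
        K * ℓ * φ r * (1 + ∑ q ∈ Finset.Ico N0 r, φ q) := by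
  classical
  obtain ⟨K', hK', hbad⟩ := bad_total γ hγ ht C hC
  refine ⟨126 + 2 * K', by positivity, fun ℓ hℓ hℓ1 => ?_⟩
  obtain ⟨r0, hr0⟩ := hbad ℓ hℓ hℓ1
  obtain ⟨N0, ⟨⟨hN4, hN1⟩, hN2, hN3⟩, hNr0⟩ := (((((eventually_ge_atTop (4:ℕ)).and
    ((tendsto_natCast_atTop_atTop (R := ℝ)).eventually_ge_atTop (4 / ℓ))).and
    (((tendsto_natCast_atTop_atTop (R := ℝ)).eventually_ge_atTop (8 * C / ℓ)).and
    (tendsto_lam.eventually_ge_atTop 2))).and (eventually_ge_atTop r0))).exists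
  refine ⟨N0, hN4, hN1, hN2, fun φ hφ0 hφC hφτ hφb u r hr => ?_⟩
  have hr4 : 4 ≤ r := hN4.trans hr
  have hrpos : 0 < r := by omega
  have hr' : (0:ℝ) < r := by exact_mod_cast hrpos
  have hS0 : 0 ≤ ∑ q ∈ Finset.Ico N0 r, φ q := Finset.sum_nonneg fun q _ => hφ0 q
  rcases eq_or_ne (φ r) 0 with h0 | h0
  · have he : Aset γ φ r = ∅ := by
      unfold Aset; rw [h0]
      ext x
      simp only [Set.mem_ofPred_eq, Set.mem_empty_iff_false, iff_false, not_lt]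
      exact dnint_nonneg _
    rw [he, h0]
    simp
  have hτ := hφτ r h0
  have hl2 : 2 ≤ lam r := hN3.trans (lam_mono hr)
  have hL2 : (2:ℝ) ≤ lam r := by exact_mod_cast hl2
  have hφr := hφ0 r
  -- the bad set
  set bad : ℕ → Prop := fun q =>
    dnint ((((r / q.gcd r : ℕ) : ℝ) - ((q / q.gcd r : ℕ):ℝ)) * γ) <
        5 * C * (r / q) / (q.gcd r * (lam r : ℝ) ^ 2) with hbaddef
  have hpt : ∀ q ∈ Finset.Ico N0 r,
      volume.real (Aset γ φ q ∩ Aset γ φ r ∩ Set.Ioo u (u + ℓ)) ≤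
        24 * ℓ * φ r * φ q + 6 * ℓ * φ r / r * (if q * q < r then (q:ℝ) else 0) +
        48 * φ r * (if lam r ≤ lam q + 1 then φ q else 0) +
        2 * φ r * (if bad q then (2 * ℓ * (q.gcd r : ℝ) + 1) / r else 0) := by
    intro q hq
    obtain ⟨hqN, hqr⟩ := Finset.mem_Ico.mp hq
    have hq4 : 4 ≤ q := hN4.trans hqN
    have hqpos : 0 < q := by omega
    have hq' : (0:ℝ) < q := by exact_mod_cast hqpos
    have hq1 : (1:ℝ) ≤ q := by exact_mod_cast hqpos
    have hqN' : (N0:ℝ) ≤ q := by exact_mod_cast hqN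
    have hlq2 : 2 ≤ lam q := hN3.trans (lam_mono hqN)
    have hLq2 : (2:ℝ) ≤ lam q := by exact_mod_cast hlq2
    have hφq := hφ0 q
    have hal : φ q / q ≤ ℓ / 2 := by
      have h1 : φ q ≤ C / q := by
        refine (hφC q hq4).trans ?_
        apply div_le_div_of_nonneg_left hC.le hq'
        exact le_mul_of_one_le_right hq'.le (by nlinarith)
      have h2 : C / q ≤ ℓ / 8 := by
        have := hN2.trans hqN'
        rw [div_le_iff₀ hℓ] at this
        rw [div_le_iff₀ hq']; linarith
      rw [div_le_iff₀ hq']; nlinarith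
    obtain ⟨F, hF, hvol⟩ := overlap γ q r hqpos hrpos (φ q) (φ r) u ℓ hφq hφr hal
    set Δ := φ q / q + φ r / r with hΔ
    set m := min (φ q / q) (φ r / r) with hm
    have hx : 0 ≤ φ q / q := by positivity
    have hy : 0 ≤ φ r / r := by positivity
    have hΔ0 : 0 ≤ Δ := by positivity
    have hm0 : 0 ≤ m := le_min hx hy
    have hmr : m ≤ φ r / r := min_le_right _ _
    have hmΔ : m * Δ ≤ 2 * (φ q / q * (φ r / r)) := min_mul_add_le _ _ hx hy
    refine hvol.trans ?_
    rcases lt_or_ge (lam q + 1) (lam r) with hc | hc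
    · rw [if_pos (sq_lt_of_lam q r hrpos.ne' hc), if_neg (not_le.mpr hc)]
      have hcnt := pair_count1 γ q r hqpos hrpos Δ u ℓ hΔ0 hℓ.le F hF
      have h3 : 2 * ℓ * q + 1 ≤ 3 * ℓ * q := by
        have := hN1.trans hqN'
        rw [div_le_iff₀ hℓ] at this
        linarith
      have h4 : 0 ≤ 2 * φ r * (if bad q then (2 * ℓ * (q.gcd r : ℝ) + 1) / r else 0) := by
        split_ifs <;> positivity
      calc 2 * m * F.card ≤ 2 * m * ((3 * ℓ * q) * (2 * r * Δ + 1)) := by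
            gcongr
            exact hcnt.trans (by gcongr)
        _ = 6 * ℓ * q * (2 * r * (m * Δ) + m) := by ring
        _ ≤ 6 * ℓ * q * (2 * r * (2 * (φ q / q * (φ r / r))) + φ r / r) := by gcongr
        _ = 24 * ℓ * φ r * φ q + 6 * ℓ * φ r / r * q := by field_simp; ring
        _ ≤ _ := by linarith
    · rw [if_pos hc]
      set d := q.gcd r with hd
      have hdpos : 0 < d := Nat.gcd_pos_of_pos_left r hqpos
      have hd' : (0:ℝ) < d := by exact_mod_cast hdpos
      have hd1 : (1:ℝ) ≤ d := by exact_mod_cast hdpos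
      have hqd : q = d * (q / d) := (Nat.mul_div_cancel' (Nat.gcd_dvd_left q r)).symm
      have hrd : r = d * (r / d) := (Nat.mul_div_cancel' (Nat.gcd_dvd_right q r)).symm
      have hq'pos : 0 < q / d := Nat.div_pos (Nat.le_of_dvd hqpos (Nat.gcd_dvd_left q r)) hdpos
      have hr'pos : 0 < r / d := Nat.div_pos (Nat.le_of_dvd hrpos (Nat.gcd_dvd_right q r)) hdpos
      have hcnt := pair_count2 γ q r d (q / d) (r / d) hq'pos hr'pos hdpos hqd hrd
        (Nat.coprime_div_gcd_div_gcd hdpos) Δ u ℓ hΔ0 hℓ.le F hF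
      have hthr : Δ * q * r / d ≤ 5 * C * (r / q) / (d * (lam r : ℝ) ^ 2) := by
        have i1 : φ q ≤ 4 * C / (q * (lam r : ℝ)^2) := by
          refine (hφC q hq4).trans ?_
          rw [div_le_div_iff₀ (by positivity) (by positivity)]
          have : (lam r : ℝ) ≤ 2 * lam q := by
            have : (lam r : ℝ) ≤ lam q + 1 := by exact_mod_cast hc
            linarith
          have : (lam r : ℝ)^2 ≤ 4 * (lam q : ℝ)^2 := by nlinarith
          calc C * (q * (lam r : ℝ)^2) ≤ C * (q * (4 * (lam q : ℝ)^2)) := by gcongr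
            _ = _ := by ring
        have i2 : φ r ≤ C / (r * (lam r : ℝ)^2) := hφC r hr4
        have i3 : (q:ℝ) / r ≤ r / q := by
          have : (q:ℝ) ≤ r := by exact_mod_cast hqr.le
          rw [div_le_div_iff₀ hr' hq']; nlinarith
        have e : Δ * q * r = r * φ q + q * φ r := by rw [hΔ]; field_simp
        rw [e]
        calc (r * φ q + q * φ r) / d ≤
              (r * (4 * C / (q * (lam r : ℝ)^2)) + q * (C / (r * (lam r : ℝ)^2))) / d := by gcongr
          _ = (4 * C * (r / q) + C * (q / r)) / (d * (lam r : ℝ)^2) := by field_simp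
          _ ≤ (4 * C * (r / q) + C * (r / q)) / (d * (lam r : ℝ)^2) := by gcongr
          _ = _ := by ring
      have hind : (if dnint ((((r / d : ℕ):ℝ) - ((q / d : ℕ):ℝ)) * γ) < Δ * q * r / d then (1:ℝ) else 0) ≤
          if bad q then 1 else 0 := by
        by_cases hb : bad q
        · rw [if_pos hb]; split_ifs <;> norm_num
        · rw [if_neg hb, if_neg]
          intro h
          exact hb (h.trans_le hthr)
      have h5 : 0 ≤ 6 * ℓ * φ r / r * (if q * q < r then (q:ℝ) else 0) := by
        split_ifs <;> positivity
      have h6 : 0 ≤ 24 * ℓ * φ r * φ q := by positivity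
      have hib : (0:ℝ) ≤ if bad q then 1 else 0 := by split_ifs <;> norm_num
      calc 2 * m * F.card ≤ 2 * m * ((2 * ℓ * d + 1) * (4 * (Δ * q * r / d) +
            if bad q then 1 else 0)) := by
            gcongr
            exact hcnt.trans (by gcongr)
        _ = 8 * ((2 * ℓ + 1 / d) * (q * r * (m * Δ))) + 2 * m * ((2 * ℓ * d + 1) *
            if bad q then 1 else 0) := by field_simp; ring
        _ ≤ 8 * (3 * (q * r * (2 * (φ q / q * (φ r / r))))) + 2 * (φ r / r) * ((2 * ℓ * d + 1) *
            if bad q then 1 else 0) := by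
            have : (1:ℝ) / d ≤ 1 := by rw [div_le_one hd']; exact hd1
            have : 2 * ℓ + 1 / (d:ℝ) ≤ 3 := by linarith
            gcongr
        _ = 48 * φ r * φ q + 2 * φ r * (if bad q then (2 * ℓ * (d : ℝ) + 1) / r else 0) := by
            split_ifs
            · field_simp; ring
            · field_simp; ring
        _ ≤ _ := by linarith
  refine (Finset.sum_le_sum hpt).trans ?_
  rw [Finset.sum_add_distrib, Finset.sum_add_distrib, Finset.sum_add_distrib, ← Finset.mul_sum,
    ← Finset.mul_sum, ← Finset.mul_sum, ← Finset.mul_sum, ← Finset.sum_filter, ← Finset.sum_filter,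
    ← Finset.sum_filter]
  set S := ∑ q ∈ Finset.Ico N0 r, φ q
  have s2 : ∑ q ∈ (Finset.Ico N0 r).filter (fun q => q * q < r), (q:ℝ) ≤ r := by
    have hsub : (Finset.Ico N0 r).filter (fun q => q * q < r) ⊆ Finset.Icc 1 (Nat.sqrt r) := by
      intro q hq
      obtain ⟨h1, h2⟩ := Finset.mem_filter.mp hq
      rw [Finset.mem_Icc]
      exact ⟨by have := (Finset.mem_Ico.mp h1).1; omega, Nat.le_sqrt.2 h2.le⟩
    calc _ ≤ ∑ q ∈ Finset.Icc 1 (Nat.sqrt r), (q:ℝ) :=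
          Finset.sum_le_sum_of_subset_of_nonneg hsub (fun _ _ _ => by positivity)
      _ ≤ ∑ q ∈ Finset.Icc 1 (Nat.sqrt r), ((Nat.sqrt r : ℕ) : ℝ) := by
          apply Finset.sum_le_sum
          intro q hq
          exact_mod_cast (Finset.mem_Icc.mp hq).2
      _ = ((Nat.sqrt r * Nat.sqrt r : ℕ) : ℝ) := by
          rw [Finset.sum_const, Nat.card_Icc, nsmul_eq_mul, Nat.add_sub_cancel]; push_cast; ring
      _ ≤ r := by exact_mod_cast Nat.sqrt_le r
  have s3 : ∑ q ∈ (Finset.Ico N0 r).filter (fun q => lam r ≤ lam q + 1), φ q ≤ 2 * ℓ := by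
    rw [← Finset.sum_filter_add_sum_filter_not _ (fun q => lam q = lam r)]
    have t1 := hφb (lam r) (((Finset.Ico N0 r).filter (fun q => lam r ≤ lam q + 1)).filter
      (fun q => lam q = lam r)) (fun q hq => (Finset.mem_filter.mp hq).2)
    have t2 := hφb (lam r - 1) (((Finset.Ico N0 r).filter (fun q => lam r ≤ lam q + 1)).filter
      (fun q => ¬ lam q = lam r)) (fun q hq => by
        obtain ⟨h1, h2⟩ := Finset.mem_filter.mp hq
        obtain ⟨h3, h4⟩ := Finset.mem_filter.mp h1
        have := lam_mono (Finset.mem_Ico.mp h3).2.le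
        omega)
    linarith
  have s4 := hr0 r (hNr0.trans hr) hτ ((Finset.Ico N0 r).filter bad) (fun q hq => by
    obtain ⟨h1, h2⟩ := Finset.mem_filter.mp hq
    obtain ⟨h3, h4⟩ := Finset.mem_Ico.mp h1
    exact ⟨by omega, h4, h2⟩)
  calc _ ≤ 24 * ℓ * φ r * S + 6 * ℓ * φ r / r * r + 48 * φ r * (2 * ℓ) + 2 * φ r * (K' * ℓ) := by
        gcongr
    _ = ℓ * φ r * (24 * S + 102 + 2 * K') := by field_simp; ring
    _ ≤ ℓ * φ r * ((126 + 2 * K') * (1 + S)) := by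
        gcongr
        nlinarith
    _ = _ := by ring


lemma isOpen_Aset (γ : ℝ) (φ : ℕ → ℝ) (q : ℕ) : IsOpen (Aset γ φ q) := by
  have : Aset γ φ q = ⋃ n : ℤ, {x : ℝ | |q * x - γ - n| < φ q} := by
    ext x
    simp only [Aset, Set.mem_ofPred_eq, Set.mem_iUnion, dnint_lt_iff]
  rw [this]
  refine isOpen_iUnion fun n => isOpen_lt (by fun_prop) (by fun_prop)

lemma single_upper (γ : ℝ) (φ : ℕ → ℝ) (q : ℕ) (hq : 0 < q) (u ℓ : ℝ) (hℓ : 0 < ℓ)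
    (hqℓ : 4 ≤ q * ℓ) (h0 : 0 ≤ φ q) (h1 : φ q ≤ 1 / 8) (h2 : φ q / q ≤ ℓ / 2) :
    volume.real (Aset γ φ q ∩ Set.Ioo u (u + ℓ)) ≤ 18 * ℓ * φ q := by
  have hq' : (0:ℝ) < q := by exact_mod_cast hq
  obtain ⟨F, hF, hv⟩ := overlap γ q q hq hq (φ q) (φ q) u ℓ h0 h0 h2
  rw [Set.inter_self, min_self] at hv
  have hΔ : 0 ≤ φ q / q + φ q / q := by positivity
  have hc : (F.card : ℝ) ≤ (2 * ℓ * q + 1) * (2 * q * (φ q / q + φ q / q) + 1) := by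
    apply pair_count1 <;> first | assumption | exact hℓ.le
  have he : 2 * q * (φ q / q + φ q / q) + 1 = 4 * φ q + 1 := by field_simp; ring
  rw [he] at hc
  have hc2 : (F.card : ℝ) ≤ (3 * ℓ * q) * 3 := by
    refine hc.trans ?_
    apply mul_le_mul <;> nlinarith
  calc _ ≤ _ := hv
    _ ≤ 2 * (φ q / q) * ((3 * ℓ * q) * 3) := by
        apply mul_le_mul_of_nonneg_left hc2; positivity
    _ = _ := by field_simp; ring

lemma single_lower (γ : ℝ) (φ : ℕ → ℝ) (q : ℕ) (hq : 0 < q) (u ℓ : ℝ) (hℓ : 0 < ℓ)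
    (hqℓ : 4 ≤ q * ℓ) (h0 : 0 ≤ φ q) (h1 : φ q ≤ 1 / 8) :
    ℓ * φ q ≤ volume.real (Aset γ φ q ∩ Set.Ioo u (u + ℓ)) := by
  have hq' : (0:ℝ) < q := by exact_mod_cast hq
  set G : Finset ℤ := Finset.Icc ⌈q * u + φ q - γ⌉ ⌊q * u + q * ℓ - φ q - γ⌋ with hG
  have hcard : q * ℓ / 2 ≤ (G.card : ℝ) := by
    rw [hG, Int.card_Icc]
    have h3 := Int.ceil_lt_add_one (q * u + φ q - γ)
    have h4 := Int.lt_floor_add_one (q * u + q * ℓ - φ q - γ)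
    have h5 : (⌊q * u + q * ℓ - φ q - γ⌋ + 1 - ⌈q * u + φ q - γ⌉ : ℤ) ≤
      (((⌊q * u + q * ℓ - φ q - γ⌋ + 1 - ⌈q * u + φ q - γ⌉).toNat : ℕ) : ℤ) := Int.self_le_toNat _
    have h6 : ((⌊q * u + q * ℓ - φ q - γ⌋ : ℝ) + 1 - ⌈q * u + φ q - γ⌉ : ℝ) ≤
      (((⌊q * u + q * ℓ - φ q - γ⌋ + 1 - ⌈q * u + φ q - γ⌉).toNat : ℕ) : ℝ) := by exact_mod_cast h5
    linarith
  have hsub : (⋃ a ∈ G, Set.Ioo (((a:ℝ) + γ - φ q) / q) ((a + γ + φ q) / q)) ⊆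
      Aset γ φ q ∩ Set.Ioo u (u + ℓ) := by
    intro x hx
    simp only [Set.mem_iUnion, Set.mem_Ioo, exists_prop] at hx
    obtain ⟨a, ha, hx1, hx2⟩ := hx
    rw [div_lt_iff₀ hq'] at hx1
    rw [lt_div_iff₀ hq'] at hx2
    rw [hG, Finset.mem_Icc, Int.ceil_le, Int.le_floor] at ha
    refine ⟨?_, ?_, ?_⟩
    · change dnint (q * x - γ) < φ q
      rw [dnint_lt_iff]
      refine ⟨a, ?_⟩
      rw [abs_lt]; constructor <;> linarith
    · by_contra h; push Not at h
      have := mul_le_mul_of_nonneg_left h hq'.le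
      linarith [ha.1]
    · by_contra h; push Not at h
      have := mul_le_mul_of_nonneg_left h hq'.le
      linarith [ha.2]
  have hfin : volume (Aset γ φ q ∩ Set.Ioo u (u + ℓ)) ≠ ⊤ :=
    ((measure_mono Set.inter_subset_right).trans_lt (by simp)).ne
  refine le_trans ?_ (measureReal_mono hsub hfin)
  rw [measureReal_biUnion_finset (h := fun b _ => by rw [Real.volume_Ioo]; exact ENNReal.ofReal_ne_top)]
  · have : ∀ a ∈ G, volume.real (Set.Ioo (((a:ℝ) + γ - φ q) / q) ((a + γ + φ q) / q)) = 2 * φ q / q := by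
      intro a _
      rw [Real.volume_real_Ioo_of_le]
      · field_simp; ring
      · gcongr; linarith
    rw [Finset.sum_congr rfl this, Finset.sum_const, nsmul_eq_mul]
    calc ℓ * φ q = (q * ℓ / 2) * (2 * φ q / q) := by field_simp
      _ ≤ _ := by gcongr
  · intro a _ b _ hab
    rw [Function.onFun, Set.disjoint_left]
    rintro x ⟨hx1, hx2⟩ ⟨hx3, hx4⟩
    rw [div_lt_iff₀ hq'] at hx1 hx3
    rw [lt_div_iff₀ hq'] at hx2 hx4
    apply hab
    have h5 : (a:ℝ) < b + 1 := by linarith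
    have h6 : (b:ℝ) < a + 1 := by linarith
    have h5' : a < b + 1 := by exact_mod_cast h5
    have h6' : b < a + 1 := by exact_mod_cast h6
    omega
  · intro a _; exact measurableSet_Ioo

lemma chung_erdos (s : Finset ℕ) (E : ℕ → Set ℝ) (hE : ∀ i, MeasurableSet (E i))
    (hfin : ∀ i, volume (E i) ≠ ⊤) (t : ℝ) :
    2 * t * ∑ i ∈ s, volume.real (E i) ≤ t ^ 2 * volume.real (⋃ i ∈ s, E i) +
      ∑ i ∈ s, ∑ j ∈ s, volume.real (E i ∩ E j) := by
  classical
  set U := ⋃ i ∈ s, E i with hU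
  have hUm : MeasurableSet U := Finset.measurableSet_biUnion s fun i _ => hE i
  have hUf : volume U ≠ ⊤ := by
    refine (lt_of_le_of_lt (measure_biUnion_finset_le s E) ?_).ne
    exact ENNReal.sum_lt_top.mpr fun i _ => (hfin i).lt_top
  have hi : ∀ A : Set ℝ, MeasurableSet A → volume A ≠ ⊤ →
      Integrable (A.indicator (fun _ => (1:ℝ))) volume := fun A hA hf =>
    (integrable_indicator_iff hA).mpr (integrableOn_const hf)
  have hintg : ∀ A : Set ℝ, MeasurableSet A →
      ∫ x, A.indicator (fun _ => (1:ℝ)) x = volume.real A := fun A hA => by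
    rw [integral_indicator hA]; simp
  have hEE : ∀ i j, MeasurableSet (E i ∩ E j) := fun i j => (hE i).inter (hE j)
  have hEEf : ∀ i j, volume (E i ∩ E j) ≠ ⊤ := fun i j =>
    ((measure_mono Set.inter_subset_left).trans_lt (hfin i).lt_top).ne
  have hL : ∫ x, 2 * t * ∑ i ∈ s, (E i).indicator (fun _ => (1:ℝ)) x =
      2 * t * ∑ i ∈ s, volume.real (E i) := by
    rw [integral_const_mul, integral_finsetSum _ fun i _ => hi _ (hE i) (hfin i)]
    congr 1; exact Finset.sum_congr rfl fun i _ => hintg _ (hE i)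
  have hI2 : Integrable (fun x => ∑ i ∈ s, ∑ j ∈ s, (E i ∩ E j).indicator (fun _ => (1:ℝ)) x) volume :=
    integrable_finsetSum _ fun i _ => integrable_finsetSum _ fun j _ => hi _ (hEE i j) (hEEf i j)
  have hR : ∫ x, (t ^ 2 * U.indicator (fun _ => (1:ℝ)) x +
      ∑ i ∈ s, ∑ j ∈ s, (E i ∩ E j).indicator (fun _ => (1:ℝ)) x) =
      t ^ 2 * volume.real U + ∑ i ∈ s, ∑ j ∈ s, volume.real (E i ∩ E j) := by
    rw [integral_add ((hi _ hUm hUf).const_mul _) hI2, integral_const_mul, hintg _ hUm,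
      integral_finsetSum _ fun i _ => integrable_finsetSum _ fun j _ => hi _ (hEE i j) (hEEf i j)]
    congr 1
    refine Finset.sum_congr rfl fun i _ => ?_
    rw [integral_finsetSum _ fun j _ => hi _ (hEE i j) (hEEf i j)]
    exact Finset.sum_congr rfl fun j _ => hintg _ (hEE i j)
  rw [← hL, ← hR]
  apply integral_mono
  · exact (integrable_finsetSum _ fun i _ => hi _ (hE i) (hfin i)).const_mul _
  · exact ((hi _ hUm hUf).const_mul _).add hI2
  intro x
  simp only
  have hsq : ∑ i ∈ s, ∑ j ∈ s, (E i ∩ E j).indicator (fun _ => (1:ℝ)) x =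
      (∑ i ∈ s, (E i).indicator (fun _ => (1:ℝ)) x) ^ 2 := by
    rw [sq, Finset.sum_mul_sum]
    refine Finset.sum_congr rfl fun i _ => Finset.sum_congr rfl fun j _ => ?_
    simp only [Set.indicator_apply, Set.mem_inter_iff]
    split_ifs <;> simp_all
  rw [hsq]
  by_cases hx : x ∈ U
  · rw [Set.indicator_of_mem hx]
    nlinarith [sq_nonneg (t - ∑ i ∈ s, (E i).indicator (fun _ => (1:ℝ)) x)]
  · have : ∑ i ∈ s, (E i).indicator (fun _ => (1:ℝ)) x = 0 := by
      apply Finset.sum_eq_zero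
      intro i hi
      rw [Set.indicator_of_notMem]
      intro h; exact hx (Set.mem_biUnion hi h)
    rw [this, Set.indicator_of_notMem hx]; simp

lemma double_sum (g : ℕ → ℕ → ℝ) (hg : ∀ i j, g i j = g j i) (φ : ℕ → ℝ) (hφ : ∀ q, 0 ≤ φ q)
    (K D ℓ : ℝ) (hK : 0 ≤ K) (hD : 0 ≤ D) (hℓ : 0 ≤ ℓ) (N0 : ℕ)
    (hrow : ∀ r, N0 ≤ r → ∑ q ∈ Finset.Ico N0 r, g q r ≤ K * ℓ * φ r * (1 + ∑ q ∈ Finset.Ico N0 r, φ q))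
    (hdiag : ∀ r, N0 ≤ r → g r r ≤ D * ℓ * φ r) (n : ℕ) (hn : N0 ≤ n) :
    ∑ i ∈ Finset.Ico N0 n, ∑ j ∈ Finset.Ico N0 n, g i j ≤
      (2 * K + D) * ℓ * (∑ q ∈ Finset.Ico N0 n, φ q + (∑ q ∈ Finset.Ico N0 n, φ q) ^ 2) := by
  induction n, hn using Nat.le_induction with
  | base => simp
  | succ n hn ih =>
    have hS : 0 ≤ ∑ q ∈ Finset.Ico N0 n, φ q := Finset.sum_nonneg fun q _ => hφ q
    have e : ∑ i ∈ Finset.Ico N0 (n+1), ∑ j ∈ Finset.Ico N0 (n+1), g i j =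
        ∑ i ∈ Finset.Ico N0 n, ∑ j ∈ Finset.Ico N0 n, g i j + 2 * ∑ q ∈ Finset.Ico N0 n, g q n + g n n := by
      rw [Finset.sum_Ico_succ_top hn]
      simp_rw [Finset.sum_Ico_succ_top hn]
      rw [Finset.sum_add_distrib]
      have : ∑ j ∈ Finset.Ico N0 n, g n j = ∑ j ∈ Finset.Ico N0 n, g j n :=
        Finset.sum_congr rfl fun j _ => hg _ _
      rw [this]; ring
    rw [e, Finset.sum_Ico_succ_top hn]
    have h1 := hrow n hn
    have h2 := hdiag n hn
    set S := ∑ q ∈ Finset.Ico N0 n, φ q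
    have h3 := hφ n
    have h4 : 0 ≤ K * ℓ * φ n ^ 2 := by positivity
    have h5 : 0 ≤ D * ℓ * φ n ^ 2 := by positivity
    have h6 : 0 ≤ K * ℓ * φ n * S := by positivity
    have h7 : 0 ≤ D * ℓ * φ n * S := by positivity
    nlinarith

/-- finite union bound -/
lemma union_bound (γ : ℝ) (hγ : Irrational γ) (ht : TamelyLiouville γ) (C : ℝ) (hC : 0 < C) :
    ∃ κ > (0:ℝ), ∀ ℓ : ℝ, 0 < ℓ → ℓ ≤ 1 → ∃ N0 : ℕ,
      ∀ φ : ℕ → ℝ, (∀ q, 0 ≤ φ q) →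
      (∀ q, 4 ≤ q → φ q ≤ C / (q * (lam q : ℝ) ^ 2)) →
      (∀ q, φ q ≠ 0 → q.divisors.card ≤ (Nat.log 2 q) ^ 3) →
      (∀ j, ∀ T : Finset ℕ, (∀ q ∈ T, lam q = j) → ∑ q ∈ T, φ q ≤ ℓ) →
      ∀ u : ℝ, ∀ n, N0 ≤ n → 1 ≤ ∑ q ∈ Finset.Ico N0 n, φ q →
        κ * ℓ ≤ volume.real (⋃ q ∈ Finset.Ico N0 n, Aset γ φ q ∩ Set.Ioo u (u + ℓ)) := by
  obtain ⟨K, hK, h⟩ := row γ hγ ht C hC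
  set K2 := 2 * K + 18 with hK2
  have hK2pos : 0 < K2 := by positivity
  refine ⟨1 / (2 * K2), by positivity, fun ℓ hℓ hℓ1 => ?_⟩
  obtain ⟨N0, hN4, hN1, hN2, hrow⟩ := h ℓ hℓ hℓ1
  refine ⟨N0, fun φ hφ0 hφC hφτ hφb u n hn hS1 => ?_⟩
  have hbasic : ∀ q, N0 ≤ q → 0 < q ∧ 4 ≤ q * ℓ ∧ φ q ≤ 1 / 8 ∧ φ q / q ≤ ℓ / 2 := by
    intro q hq
    have hq4 : 4 ≤ q := hN4.trans hq
    have hq' : (0:ℝ) < q := by exact_mod_cast (by omega : 0 < q)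
    have hq1 : (1:ℝ) ≤ q := by exact_mod_cast (by omega : 1 ≤ q)
    have hqN : (N0:ℝ) ≤ q := by exact_mod_cast hq
    have hl : 1 ≤ lam q := by
      calc 1 = lam 4 := by norm_num [lam, Nat.log]
        _ ≤ lam q := lam_mono hq4
    have hL : (1:ℝ) ≤ lam q := by exact_mod_cast hl
    have h1 : φ q ≤ C / q := by
      refine (hφC q hq4).trans ?_
      apply div_le_div_of_nonneg_left hC.le hq'
      exact le_mul_of_one_le_right hq'.le (by nlinarith)
    have h2 : C / q ≤ ℓ / 8 := by
      have := hN2.trans hqN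
      rw [div_le_iff₀ hℓ] at this
      rw [div_le_iff₀ hq']; linarith
    refine ⟨by omega, ?_, by linarith, ?_⟩
    · have := hN1.trans hqN
      rwa [div_le_iff₀ hℓ] at this
    · rw [div_le_iff₀ hq']; nlinarith
  set E : ℕ → Set ℝ := fun q => Aset γ φ q ∩ Set.Ioo u (u + ℓ) with hE
  have hEm : ∀ i, MeasurableSet (E i) := fun i => (isOpen_Aset γ φ i).measurableSet.inter measurableSet_Ioo
  have hEf : ∀ i, volume (E i) ≠ ⊤ := fun i =>
    ((measure_mono Set.inter_subset_right).trans_lt (by simp)).ne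
  set S := ∑ q ∈ Finset.Ico N0 n, φ q with hS
  have hD := double_sum (fun i j => volume.real (E i ∩ E j)) (fun i j => by rw [Set.inter_comm]) φ hφ0
    K 18 ℓ hK.le (by norm_num) hℓ.le N0 (by
      intro r hr
      refine le_trans (le_of_eq ?_) (hrow φ hφ0 hφC hφτ hφb u r hr)
      refine Finset.sum_congr rfl fun q _ => ?_
      congr 1
      ext x; simp only [hE, Set.mem_inter_iff]; tauto) (by
      intro r hr
      obtain ⟨h1, h2, h3, h4⟩ := hbasic r hr
      simp only [Set.inter_self]
      exact single_upper γ φ r h1 u ℓ hℓ h2 (hφ0 r) h3 h4) n hn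
  have hLow : ℓ * S ≤ ∑ q ∈ Finset.Ico N0 n, volume.real (E q) := by
    rw [hS, Finset.mul_sum]
    refine Finset.sum_le_sum fun q hq => ?_
    obtain ⟨h1, h2, h3, h4⟩ := hbasic q (Finset.mem_Ico.mp hq).1
    exact single_lower γ φ q h1 u ℓ hℓ h2 (hφ0 q) h3
  have hce := chung_erdos (Finset.Ico N0 n) E hEm hEf (2 * K2 * S)
  rw [← hK2, ← hS] at hD
  set V := volume.real (⋃ q ∈ Finset.Ico N0 n, E q)
  have hS0 : 0 < S := by linarith
  have h1 : K2 * ℓ * (S + S ^ 2) ≤ K2 * ℓ * (2 * S ^ 2) := by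
    apply mul_le_mul_of_nonneg_left _ (by positivity); nlinarith
  have h2 : 2 * (2 * K2 * S) * (ℓ * S) ≤ (2 * K2 * S) ^ 2 * V + K2 * ℓ * (2 * S ^ 2) :=
    (mul_le_mul_of_nonneg_left hLow (by positivity)).trans (by linarith)
  have h3 : (2 * K2 * S ^ 2) * ℓ ≤ (2 * K2 * S ^ 2) * (2 * K2 * V) := by nlinarith
  have h4 := le_of_mul_le_mul_left h3 (by positivity)
  rw [div_mul_eq_mul_div, one_mul, div_le_iff₀ (by positivity)]
  linarith


lemma tau_sum (N : ℕ) (hN : 1 ≤ N) :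
    ∑ q ∈ Finset.Ioc 0 N, (q.divisors.card : ℝ) ≤ N * (1 + Real.log N) := by
  have h1 : ∀ q ∈ Finset.Ioc 0 N, (q.divisors.card : ℝ) = ∑ d ∈ Finset.Ioc 0 N, if d ∣ q then (1:ℝ) else 0 := by
    intro q hq
    obtain ⟨hq0, hqN⟩ := Finset.mem_Ioc.mp hq
    rw [← Finset.sum_filter, Finset.sum_const, nsmul_eq_mul, mul_one]
    congr 2
    ext d
    simp only [Nat.mem_divisors, Finset.mem_filter, Finset.mem_Ioc]
    constructor
    · rintro ⟨h, h0⟩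
      exact ⟨⟨Nat.pos_of_dvd_of_pos h hq0, (Nat.le_of_dvd hq0 h).trans hqN⟩, h⟩
    · rintro ⟨_, h⟩; exact ⟨h, by omega⟩
  rw [Finset.sum_congr rfl h1, Finset.sum_comm]
  have h2 : ∀ d ∈ Finset.Ioc 0 N, (∑ q ∈ Finset.Ioc 0 N, if d ∣ q then (1:ℝ) else 0) ≤ N * (1 / d) := by
    intro d hd
    rw [← Finset.sum_filter, Finset.sum_const, nsmul_eq_mul, mul_one, Nat.Ioc_filter_dvd_card_eq_div,
      mul_one_div]
    exact Nat.cast_div_le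
  refine (Finset.sum_le_sum h2).trans ?_
  rw [← Finset.mul_sum]
  have h3 := harm_sum 1 N le_rfl hN
  have h4 : Finset.Icc 1 N = Finset.Ioc 0 N := by ext; simp [Nat.lt_iff_add_one_le]
  rw [h4] at h3
  simp only [Nat.cast_one, div_one] at h3
  gcongr

lemma tau_block (k : ℕ) : ∑ q ∈ Finset.Ico (2 ^ k) (2 ^ (k+1)), (q.divisors.card : ℝ) ≤ 2 ^ (k+1) * (k + 2) := by
  calc _ ≤ ∑ q ∈ Finset.Ioc 0 (2 ^ (k+1)), (q.divisors.card : ℝ) := by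
        apply Finset.sum_le_sum_of_subset_of_nonneg
        · intro q hq
          rw [Finset.mem_Ico] at hq
          rw [Finset.mem_Ioc]
          have : 0 < 2 ^ k := by positivity
          omega
        · intros; positivity
    _ ≤ _ := tau_sum _ Nat.one_le_two_pow
    _ ≤ _ := by
        push_cast
        rw [Real.log_pow]
        have : Real.log 2 ≤ 1 := by linarith [Real.log_two_lt_d9]
        apply mul_le_mul_of_nonneg_left _ (by positivity)
        push_cast
        nlinarith [(Nat.cast_nonneg k : (0:ℝ) ≤ k)]

lemma summable_of_dyadic (f : ℕ → ℝ) (hf : ∀ q, 0 ≤ f q) (D : ℝ) (hD : 0 ≤ D)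
    (hb : ∀ k : ℕ, 2 ≤ k → ∑ q ∈ Finset.Ico (2 ^ k) (2 ^ (k+1)), f q ≤ D / (k:ℝ) ^ 2) : Summable f := by
  have hs : Summable (fun k : ℕ => D / (k:ℝ) ^ 2) := by
    simpa [div_eq_mul_inv] using (Real.summable_nat_pow_inv.mpr (by norm_num : 1 < 2)).mul_left D
  have key : ∀ n, 2 ≤ n → ∑ q ∈ Finset.range (2 ^ n), f q ≤
      ∑ q ∈ Finset.range (2 ^ 2), f q + ∑ k ∈ Finset.range n, D / (k:ℝ) ^ 2 := by
    intro n hn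
    induction n, hn using Nat.le_induction with
    | base => 
      have : 0 ≤ ∑ k ∈ Finset.range 2, D / (k:ℝ) ^ 2 := Finset.sum_nonneg fun _ _ => by positivity
      linarith
    | succ n hn ih =>
      rw [Finset.sum_range_succ _ n]
      have h1 := Finset.sum_range_add_sum_Ico f (Nat.pow_le_pow_right (by norm_num : 0 < 2) (Nat.le_succ n))
      simp only [Nat.succ_eq_add_one] at h1
      rw [← h1]
      linarith [hb n hn]
  apply summable_of_sum_range_le (c := ∑ q ∈ Finset.range (2 ^ 2), f q + ∑' k : ℕ, D / (k:ℝ) ^ 2) hf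
  intro n
  calc _ ≤ ∑ q ∈ Finset.range (2 ^ (n + 2)), f q := by
        apply Finset.sum_le_sum_of_subset_of_nonneg
        · apply Finset.range_mono
          exact (Nat.lt_two_pow_self).le.trans (Nat.pow_le_pow_right (by norm_num) (by omega))
        · intros; exact hf _
    _ ≤ _ := key (n+2) (by omega)
    _ ≤ _ := by
        gcongr
        exact hs.sum_le_tsum _ fun _ _ => by positivity

lemma lam_pos (q : ℕ) (hq : 4 ≤ q) : 1 ≤ lam q := by
  calc 1 = lam 4 := by norm_num [lam, Nat.log]
    _ ≤ lam q := lam_mono hq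

lemma tau_discard (C : ℝ) (hC : 0 < C) (Ψ : ℕ → ℝ) (h0 : ∀ q, 0 ≤ Ψ q)
    (hΨ : ∀ q, 4 ≤ q → Ψ q ≤ C / (q * (lam q : ℝ) ^ 2)) :
    Summable (fun q => if q.divisors.card ≤ (Nat.log 2 q) ^ 3 then 0 else Ψ q) := by
  apply summable_of_dyadic _ _ (4 * C) (by positivity)
  · intro k hk
    have hk' : (2:ℝ) ≤ k := by exact_mod_cast hk
    have hpt : ∀ q ∈ Finset.Ico (2 ^ k) (2 ^ (k+1)),
        (if q.divisors.card ≤ (Nat.log 2 q) ^ 3 then 0 else Ψ q) ≤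
          C / (2 ^ k * (k:ℝ) ^ 3) * q.divisors.card := by
      intro q hq
      rw [Finset.mem_Ico] at hq
      split_ifs with h
      · positivity
      · push Not at h
        have hlog : Nat.log 2 q = k := Nat.log_eq_of_pow_le_of_lt_pow hq.1 hq.2
        rw [hlog] at h
        have hq4 : 4 ≤ q := le_trans (by
          calc 4 = 2 ^ 2 := by norm_num
            _ ≤ 2 ^ k := Nat.pow_le_pow_right (by norm_num) hk) hq.1
        have hL : (1:ℝ) ≤ lam q := by exact_mod_cast lam_pos q hq4
        have hq' : (0:ℝ) < q := by exact_mod_cast (by omega : 0 < q)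
        have hqk : (2:ℝ) ^ k ≤ q := by exact_mod_cast hq.1
        have hh : (k:ℝ) ^ 3 ≤ q.divisors.card := by exact_mod_cast h.le
        calc Ψ q ≤ C / (q * (lam q : ℝ) ^ 2) := hΨ q hq4
          _ ≤ C / (2 ^ k) := by
              apply div_le_div_of_nonneg_left hC.le (by positivity)
              exact hqk.trans (le_mul_of_one_le_right hq'.le (by nlinarith))
          _ = C / (2 ^ k * (k:ℝ) ^ 3) * (k:ℝ) ^ 3 := by field_simp
          _ ≤ _ := by gcongr
    refine (Finset.sum_le_sum hpt).trans ?_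
    rw [← Finset.mul_sum]
    calc _ ≤ C / (2 ^ k * (k:ℝ) ^ 3) * (2 ^ (k+1) * (k + 2)) := by
          apply mul_le_mul_of_nonneg_left (tau_block k); positivity
      _ ≤ C / (2 ^ k * (k:ℝ) ^ 3) * (2 ^ (k+1) * (2 * k)) := by gcongr; linarith
      _ = 4 * C / (k:ℝ) ^ 2 := by rw [pow_succ]; field_simp; ring
  · intro q; split_ifs <;> simp [h0]

lemma truncate (Ψ : ℕ → ℝ) (h0 : ∀ q, 0 ≤ Ψ q) (hns : ¬ Summable Ψ) (ℓ : ℝ) (hℓ : 0 < ℓ) :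
    ∃ φ : ℕ → ℝ, (∀ q, 0 ≤ φ q) ∧ (∀ q, φ q ≤ Ψ q) ∧ ¬ Summable φ ∧
      (∀ j, ∀ T : Finset ℕ, (∀ q ∈ T, lam q = j) → ∑ q ∈ T, φ q ≤ ℓ) := by
  classical
  set B : ℕ → Finset ℕ := fun j => (Finset.range (2 ^ (2 ^ (j+1)))).filter (fun q => lam q = j) with hB
  have hmem : ∀ q j, q ∈ B j ↔ lam q = j := by
    intro q j
    simp only [hB, Finset.mem_filter, Finset.mem_range, and_iff_right_iff_imp]
    rintro rfl
    have h1 : Nat.log 2 q + 1 ≤ 2 ^ (lam q + 1) := Nat.lt_pow_succ_log_self (by norm_num) _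
    exact (Nat.lt_pow_succ_log_self (by norm_num) q).trans_le (Nat.pow_le_pow_right (by norm_num) h1)
  set s : ℕ → ℝ := fun j => ∑ q ∈ B j, Ψ q with hs
  have hs0 : ∀ j, 0 ≤ s j := fun j => Finset.sum_nonneg fun q _ => h0 q
  have hm0 : ∀ j, 0 ≤ min 1 (ℓ / s j) := fun j => le_min zero_le_one (div_nonneg hℓ.le (hs0 j))
  have hsum : ∀ j, ∑ q ∈ B j, Ψ q * min 1 (ℓ / s (lam q)) = s j * min 1 (ℓ / s j) := by
    intro j
    rw [hs, Finset.sum_mul]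
    refine Finset.sum_congr rfl fun q hq => ?_
    rw [(hmem q j).mp hq]
  refine ⟨fun q => Ψ q * min 1 (ℓ / s (lam q)), fun q => mul_nonneg (h0 q) (hm0 _),
    fun q => mul_le_of_le_one_right (h0 q) (min_le_left _ _), ?_, ?_⟩
  · intro hsm
    apply hns
    obtain ⟨t, ht⟩ := summable_iff_vanishing_norm.mp hsm ℓ hℓ
    have hev : ∀ᶠ q : ℕ in atTop, t.sup lam < lam q := tendsto_lam.eventually_gt_atTop _
    refine (summable_congr_cofinite ?_).mp hsm
    rw [Nat.cofinite_eq_atTop]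
    filter_upwards [hev] with q hq
    have hd : Disjoint (B (lam q)) t := by
      rw [Finset.disjoint_left]
      intro p hp hpt
      have := Finset.le_sup (f := lam) hpt
      rw [hmem] at hp; omega
    have h1 := ht _ hd
    rw [hsum, Real.norm_of_nonneg (mul_nonneg (hs0 _) (hm0 _))] at h1
    have h2 : s (lam q) < ℓ := by
      by_contra h; push Not at h
      have hp : 0 < s (lam q) := by linarith
      rw [min_eq_right (by rw [div_le_one hp]; exact h), mul_div_cancel₀ _ hp.ne'] at h1
      exact lt_irrefl _ h1
    rcases (hs0 (lam q)).eq_or_lt with h3 | h3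
    · have : Ψ q ≤ s (lam q) := Finset.single_le_sum (f := Ψ) (fun i _ => h0 i) ((hmem q _).mpr rfl)
      have h4 : Ψ q = 0 := le_antisymm (by linarith) (h0 q)
      simp [h4]
    · rw [min_eq_left (by rw [one_le_div h3]; exact h2.le), mul_one]
  · intro j T hT
    calc _ ≤ ∑ q ∈ B j, Ψ q * min 1 (ℓ / s (lam q)) := by
          apply Finset.sum_le_sum_of_subset_of_nonneg
          · intro q hq; exact (hmem q j).mpr (hT q hq)
          · intro q _ _; exact mul_nonneg (h0 q) (hm0 _)
      _ = s j * min 1 (ℓ / s j) := hsum j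
      _ ≤ ℓ := by
          rcases (hs0 j).eq_or_lt with h3 | h3
          · rw [← h3, zero_mul]; exact hℓ.le
          · calc _ ≤ s j * (ℓ / s j) := by gcongr; exact min_le_right _ _
              _ = ℓ := mul_div_cancel₀ _ h3.ne'

lemma local_bound (γ : ℝ) (hγ : Irrational γ) (ht : TamelyLiouville γ) (C : ℝ) (hC : 0 < C)
    (Ψ : ℕ → ℝ) (h0 : ∀ q, 0 ≤ Ψ q) (hΨ : ∀ q, 4 ≤ q → Ψ q ≤ C / (q * (lam q : ℝ) ^ 2))
    (hns : ¬ Summable Ψ) :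
    ∃ κ > (0:ℝ), ∀ ℓ : ℝ, 0 < ℓ → ℓ ≤ 1 → ∀ u : ℝ,
      ENNReal.ofReal (κ * ℓ) ≤ volume ((⋂ N : ℕ, ⋃ q ≥ N, Aset γ Ψ q) ∩ Set.Ioo u (u + ℓ)) := by
  classical
  obtain ⟨κ, hκ, hub⟩ := union_bound γ hγ ht C hC
  refine ⟨κ, hκ, fun ℓ hℓ hℓ1 u => ?_⟩
  obtain ⟨N0, hN0⟩ := hub ℓ hℓ hℓ1
  set Ψ1 : ℕ → ℝ := fun q => if q.divisors.card ≤ (Nat.log 2 q) ^ 3 then Ψ q else 0 with hΨ1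
  have h10 : ∀ q, 0 ≤ Ψ1 q := fun q => by simp only [hΨ1]; split_ifs <;> simp [h0]
  have hle1 : ∀ q, Ψ1 q ≤ Ψ q := fun q => by simp only [hΨ1]; split_ifs <;> simp [h0]
  have hns1 : ¬ Summable Ψ1 := by
    intro h
    apply hns
    have := h.add (tau_discard C hC Ψ h0 hΨ)
    refine this.congr fun q => ?_
    simp only [hΨ1]; split_ifs <;> simp
  obtain ⟨φ, hφ0, hφ1, hφns, hφb⟩ := truncate Ψ1 h10 hns1 ℓ hℓ
  have hmeas : ∀ N : ℕ, MeasurableSet (⋃ q ≥ N, Aset γ Ψ q) := fun N =>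
    (isOpen_biUnion fun q _ => isOpen_Aset γ Ψ q).measurableSet
  have hstep : ∀ N : ℕ, ENNReal.ofReal (κ * ℓ) ≤ volume ((⋃ q ≥ N, Aset γ Ψ q) ∩ Set.Ioo u (u + ℓ)) := by
    intro N
    set φN : ℕ → ℝ := fun q => if N ≤ q then φ q else 0 with hφN
    have hN_0 : ∀ q, 0 ≤ φN q := fun q => by simp only [hφN]; split_ifs <;> simp [hφ0]
    have hN_le : ∀ q, φN q ≤ φ q := fun q => by simp only [hφN]; split_ifs <;> simp [hφ0]
    have hN_ns : ¬ Summable φN := by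
      intro h
      apply hφns
      refine (summable_congr_cofinite ?_).mp h
      rw [Nat.cofinite_eq_atTop]
      filter_upwards [eventually_ge_atTop N] with q hq
      simp [hφN, hq]
    have htend := (not_summable_iff_tendsto_nat_atTop_of_nonneg hN_0).mp hN_ns
    obtain ⟨n, hn1, hn2⟩ := ((htend.eventually_ge_atTop (1 + ∑ q ∈ Finset.range N0, φN q)).and
      (eventually_ge_atTop N0)).exists
    have hS : 1 ≤ ∑ q ∈ Finset.Ico N0 n, φN q := by
      rw [← Finset.sum_range_add_sum_Ico _ hn2] at hn1; linarith
    have h := hN0 φN hN_0 (fun q hq => ((hN_le q).trans ((hφ1 q).trans (hle1 q))).trans (hΨ q hq)) (by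
      intro q hq
      by_contra hc
      apply hq
      have h1 : Ψ1 q = 0 := by simp only [hΨ1]; rw [if_neg hc]
      exact le_antisymm (by linarith [hN_le q, hφ1 q]) (hN_0 q)) (fun j T hT =>
        (Finset.sum_le_sum fun q _ => hN_le q).trans (hφb j T hT)) u n hn2 hS
    have hsub : (⋃ q ∈ Finset.Ico N0 n, Aset γ φN q ∩ Set.Ioo u (u + ℓ)) ⊆
        (⋃ q ≥ N, Aset γ Ψ q) ∩ Set.Ioo u (u + ℓ) := by
      intro x hx
      simp only [Set.mem_iUnion, exists_prop] at hx
      obtain ⟨q, _, hx1, hx2⟩ := hx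
      refine ⟨?_, hx2⟩
      change dnint (q * x - γ) < φN q at hx1
      simp only [Set.mem_iUnion, exists_prop]
      have hqN : N ≤ q := by
        by_contra hc
        simp only [hφN, if_neg hc] at hx1
        linarith [dnint_nonneg (q * x - γ)]
      exact ⟨q, hqN, hx1.trans_le ((hN_le q).trans ((hφ1 q).trans (hle1 q)))⟩
    refine (ENNReal.ofReal_le_ofReal h).trans ?_
    refine le_trans ?_ (measure_mono hsub)
    exact ENNReal.ofReal_toReal_le
  rw [Set.iInter_inter]
  rw [Antitone.measure_iInter]
  · exact le_iInf hstep
  · intro a b hab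
    apply Set.inter_subset_inter_left
    exact Set.biUnion_subset_biUnion_left fun q hq => le_trans hab hq
  · intro N; exact ((hmeas N).inter measurableSet_Ioo).nullMeasurableSet
  · exact ⟨0, ((measure_mono Set.inter_subset_right).trans_lt (by simp)).ne⟩

lemma core (γ : ℝ) (hγ : Irrational γ) (ht : TamelyLiouville γ) (C : ℝ) (hC : 0 < C)
    (Ψ : ℕ → ℝ) (h0 : ∀ q, 0 ≤ Ψ q) (hΨ : ∀ q, 4 ≤ q → Ψ q ≤ C / (q * (lam q : ℝ) ^ 2))
    (hns : ¬ Summable Ψ) :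
    ∀ᵐ x : ℝ, x ∈ ⋂ N : ℕ, ⋃ q ≥ N, Aset γ Ψ q := by
  obtain ⟨κ, hκ, hloc⟩ := local_bound γ hγ ht C hC Ψ h0 hΨ hns
  set G := ⋂ N : ℕ, ⋃ q ≥ N, Aset γ Ψ q with hG
  have hGm : MeasurableSet G := MeasurableSet.iInter fun N =>
    (isOpen_biUnion fun q _ => isOpen_Aset γ Ψ q).measurableSet
  filter_upwards [Besicovitch.ae_tendsto_measure_inter_div_of_measurableSet volume hGm] with x hx
  by_contra hxG
  rw [Set.indicator_of_notMem hxG] at hx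
  have hge : ∀ᶠ r in nhdsWithin (0:ℝ) (Set.Ioi 0), ENNReal.ofReal κ ≤
      volume (G ∩ Metric.closedBall x r) / volume (Metric.closedBall x r) := by
    have : Set.Ioo (0:ℝ) (1/2) ∈ nhdsWithin (0:ℝ) (Set.Ioi 0) := Ioo_mem_nhdsGT (by norm_num)
    filter_upwards [this] with r hr
    have hr0 := hr.1
    rw [Real.volume_closedBall, ENNReal.le_div_iff_mul_le (Or.inl (by simp [hr0])) (Or.inl ENNReal.ofReal_ne_top),
      ← ENNReal.ofReal_mul hκ.le]
    refine (hloc (2 * r) (by linarith) (by linarith [hr.2]) (x - r)).trans (measure_mono ?_)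
    apply Set.inter_subset_inter_right
    rw [Real.closedBall_eq_Icc]
    intro y hy
    exact ⟨hy.1.le, by linarith [hy.2]⟩
  have := ge_of_tendsto hx hge
  simp at this
  linarith


lemma lam_le_logb (q : ℕ) (hq : 4 ≤ q) : (lam q : ℝ) ≤ Real.logb 2 (Real.logb 2 q) := by
  have h1 : (Nat.log 2 q : ℝ) ≤ Real.logb 2 q := by exact_mod_cast Real.natLog_le_logb q 2
  have h2 : (lam q : ℝ) ≤ Real.logb 2 (Nat.log 2 q : ℕ) := by
    exact_mod_cast Real.natLog_le_logb (Nat.log 2 q) 2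
  have h3 : 0 < Nat.log 2 q := Nat.log_pos (by norm_num) (by omega)
  refine h2.trans ?_
  exact Real.logb_le_logb_of_le (by norm_num) (by exact_mod_cast h3) h1

open Classical in
theorem stmt2 (γ₁ : ℝ) (hγ₁ : Irrational γ₁) (htame : TamelyLiouville γ₁)
    (γ₂ β : ℝ) (hβ : Irrational β)
    (ψ : ℕ → ℝ) (hψ0 : ∀ q, 0 ≤ ψ q)
    (hO : ∃ C > (0:ℝ), ∀ q : ℕ, 3 ≤ q →
      ψ q ≤ C / ((q : ℝ) * Real.logb 2 q * (Real.logb 2 (Real.logb 2 q)) ^ 2))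
    (hdiv : Tendsto (fun Q : ℕ => ∑ q ∈ (Finset.Icc 1 Q).filter
        (fun q : ℕ => (Real.logb 2 q)⁻¹ ≤ dnint (q * β - γ₂)),
        ψ q / dnint ((q : ℝ) * β - γ₂)) atTop atTop) :
    volume {x ∈ Set.Icc (0:ℝ) 1 |
      {q : ℕ | 0 < q ∧ dnint (q * x - γ₁) * dnint (q * β - γ₂) < ψ q}.Infinite} = 1 := by
  obtain ⟨C, hC, hO⟩ := hO
  set g : ℕ → ℝ := fun q => if (Real.logb 2 q)⁻¹ ≤ dnint (q * β - γ₂) then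
    ψ q / dnint ((q : ℝ) * β - γ₂) else 0 with hg
  set Ψ : ℕ → ℝ := fun q => if 4 ≤ q then g q else 0 with hΨ
  have hg0 : ∀ q, 0 ≤ g q := fun q => by
    simp only [hg]; split_ifs
    · exact div_nonneg (hψ0 q) (dnint_nonneg _)
    · exact le_rfl
  have hΨ0 : ∀ q, 0 ≤ Ψ q := fun q => by simp only [hΨ]; split_ifs <;> simp [hg0]
  have hlogpos : ∀ q : ℕ, 4 ≤ q → 0 < Real.logb 2 q := fun q hq =>
    Real.logb_pos (by norm_num) (by exact_mod_cast (by omega : 1 < q))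
  have hΨC : ∀ q, 4 ≤ q → Ψ q ≤ C / (q * (lam q : ℝ) ^ 2) := by
    intro q hq
    have hq' : (0:ℝ) < q := by exact_mod_cast (by omega : 0 < q)
    have hL := hlogpos q hq
    have hl1 : (1:ℝ) ≤ lam q := by exact_mod_cast lam_pos q hq
    have hl2 := lam_le_logb q hq
    have hLL : 0 < Real.logb 2 (Real.logb 2 q) := by linarith
    simp only [hΨ, if_pos hq, hg]
    split_ifs with h
    · have hd : 0 < dnint (q * β - γ₂) := lt_of_lt_of_le (by positivity) h
      calc ψ q / dnint (q * β - γ₂) ≤ ψ q / (Real.logb 2 q)⁻¹ :=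
            div_le_div_of_nonneg_left (hψ0 q) (by positivity) h
        _ = ψ q * Real.logb 2 q := by rw [div_inv_eq_mul]
        _ ≤ C / ((q : ℝ) * Real.logb 2 q * (Real.logb 2 (Real.logb 2 q)) ^ 2) * Real.logb 2 q := by
            apply mul_le_mul_of_nonneg_right (hO q (by omega)) hL.le
        _ = C / (q * (Real.logb 2 (Real.logb 2 q)) ^ 2) := by field_simp
        _ ≤ C / (q * (lam q : ℝ) ^ 2) := by gcongr
    · positivity
  have hns : ¬ Summable Ψ := by
    intro h
    have hgs : Summable g := by
      refine (summable_congr_cofinite ?_).mp h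
      rw [Nat.cofinite_eq_atTop]
      filter_upwards [eventually_ge_atTop 4] with q hq
      simp [hΨ, hq]
    obtain ⟨Q, hQ⟩ := (hdiv.eventually_gt_atTop (∑' q, g q)).exists
    rw [Finset.sum_filter] at hQ
    exact absurd (hgs.sum_le_tsum (Finset.Icc 1 Q) fun q _ => hg0 q) (not_le.mpr hQ)
  have hcore := core γ₁ hγ₁ htame C hC Ψ hΨ0 hΨC hns
  have hae : ∀ᵐ x : ℝ, {q : ℕ | 0 < q ∧ dnint (q * x - γ₁) * dnint (q * β - γ₂) < ψ q}.Infinite := by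
    filter_upwards [hcore] with x hx
    apply Set.infinite_of_forall_exists_gt
    intro N
    have h1 := Set.mem_iInter.mp hx (N + 1)
    simp only [Set.mem_iUnion, exists_prop] at h1
    obtain ⟨q, hqN, hq⟩ := h1
    change dnint (q * x - γ₁) < Ψ q at hq
    have hd0 := dnint_nonneg (q * x - γ₁)
    refine ⟨q, ⟨by omega, ?_⟩, by omega⟩
    simp only [hΨ, hg] at hq
    split_ifs at hq with ha hb
    · have hL := hlogpos q ha
      have hd : 0 < dnint (q * β - γ₂) := lt_of_lt_of_le (by positivity) hb
      exact (lt_div_iff₀ hd).mp hq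
    · linarith
    · linarith
  have : volume {x ∈ Set.Icc (0:ℝ) 1 |
      {q : ℕ | 0 < q ∧ dnint (q * x - γ₁) * dnint (q * β - γ₂) < ψ q}.Infinite} =
      volume (Set.Icc (0:ℝ) 1) := by
    apply measure_congr
    filter_upwards [hae] with x hx
    apply propext
    exact ⟨fun h => h.1, fun h => ⟨h, hx⟩⟩
  rw [this]; simp
end

section
/- Let ψ be a non-increasing approximation function with 0 < ψ(q) < 1/2 for all q and ∑_q ψ(q) = ∞. Then for every tamely Liouville irrational number γ, the set W(ψ,γ) has Lebesgue measure one. -/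
open MeasureTheory Filter Real

theorem bonf {ι : Type*} (s : Finset ι) (B : ι → Set ℝ) (hB : ∀ i ∈ s, MeasurableSet (B i))
    (hf : ∀ i ∈ s, volume (B i) ≠ ⊤) (a : ℝ) (ha : 0 < a) :
    ∑ i ∈ s, volume.real (B i) ≤ a * volume.real (⋃ i ∈ s, B i)
      + (∑ i ∈ s, ∑ j ∈ s, volume.real (B i ∩ B j)) / (4 * a) := by
  classical
  set U := ⋃ i ∈ s, B i with hU
  have hUm : MeasurableSet U := Finset.measurableSet_biUnion s hB
  have hUf : volume U ≠ ⊤ := by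
    refine ne_of_lt ((measure_biUnion_finset_le s B).trans_lt ?_)
    exact ENNReal.sum_lt_top.2 fun i hi => (hf i hi).lt_top
  have hint : ∀ A : Set ℝ, MeasurableSet A → volume A ≠ ⊤ →
      Integrable (A.indicator (fun _ => (1:ℝ))) := fun A h1 h2 =>
    (integrable_indicator_iff h1).2 (integrableOn_const h2)
  have hval : ∀ A : Set ℝ, MeasurableSet A → ∫ x, A.indicator (fun _ => (1:ℝ)) x = volume.real A := by
    intro A hA
    rw [integral_indicator hA]; simp
  have hij : ∀ i ∈ s, ∀ j ∈ s, Integrable ((B i ∩ B j).indicator (fun _ => (1:ℝ))) := by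
    intro i hi j hj
    exact hint _ ((hB i hi).inter (hB j hj)) (measure_ne_top_of_subset Set.inter_subset_left (hf i hi))
  have e1 : ∑ i ∈ s, volume.real (B i) = ∫ x, ∑ i ∈ s, (B i).indicator (fun _ => (1:ℝ)) x := by
    rw [integral_finsetSum _ fun i hi => hint _ (hB i hi) (hf i hi)]
    exact Finset.sum_congr rfl fun i hi => (hval _ (hB i hi)).symm
  have e2 : ∑ i ∈ s, ∑ j ∈ s, volume.real (B i ∩ B j)
      = ∫ x, ∑ i ∈ s, ∑ j ∈ s, (B i ∩ B j).indicator (fun _ => (1:ℝ)) x := by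
    rw [integral_finsetSum _ fun i hi => integrable_finsetSum _ fun j hj => hij i hi j hj]
    refine Finset.sum_congr rfl fun i hi => ?_
    rw [integral_finsetSum _ fun j hj => hij i hi j hj]
    exact Finset.sum_congr rfl fun j hj => (hval _ ((hB i hi).inter (hB j hj))).symm
  have i2 : Integrable (fun x => ∑ i ∈ s, ∑ j ∈ s, (B i ∩ B j).indicator (fun _ => (1:ℝ)) x) :=
    integrable_finsetSum _ fun i hi => integrable_finsetSum _ fun j hj => hij i hi j hj
  rw [e1, e2, ← hval U hUm, ← integral_const_mul, ← integral_div, ← integral_add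
    ((hint U hUm hUf).const_mul a) (i2.div_const _)]
  refine integral_mono (integrable_finsetSum _ fun i hi => hint _ (hB i hi) (hf i hi))
    (((hint U hUm hUf).const_mul a).add (i2.div_const _)) fun x => ?_
  simp only
  have hsq : ∑ i ∈ s, ∑ j ∈ s, (B i ∩ B j).indicator (fun _ => (1:ℝ)) x
      = (∑ i ∈ s, (B i).indicator (fun _ => (1:ℝ)) x) ^ 2 := by
    rw [sq, Finset.sum_mul_sum]
    refine Finset.sum_congr rfl fun i _ => Finset.sum_congr rfl fun j _ => ?_
    by_cases h1 : x ∈ B i <;> by_cases h2 : x ∈ B j <;> simp [h1, h2]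
  rw [hsq]
  by_cases hx : x ∈ U
  · rw [Set.indicator_of_mem hx]
    set f := ∑ i ∈ s, (B i).indicator (fun _ => (1:ℝ)) x
    rw [← sub_nonneg]
    have : a * 1 + f ^ 2 / (4 * a) - f = (2 * a - f) ^ 2 / (4 * a) := by field_simp; ring
    rw [this]; positivity
  · have : ∑ i ∈ s, (B i).indicator (fun _ => (1:ℝ)) x = 0 := by
      refine Finset.sum_eq_zero fun i hi => Set.indicator_of_notMem (fun h => hx ?_) _
      exact Set.mem_biUnion hi h
    rw [this, Set.indicator_of_notMem hx]; simp

/-- approximating by shifted rationals -/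
theorem shifted (x γ : ℝ) (Q : ℕ) (hQ : 0 < Q) (r : ℚ) (h : |x - r| ≤ 1 / ((Q + 1) * r.den))
    (hd : r.den ≤ Q) : ∃ q : ℕ, ∃ p : ℤ, Q < q ∧ q ≤ 2 * Q ∧
      |x - (p + γ) / q| ≤ 3 / (r.den * Q) := by
  have hb : 0 < r.den := r.den_pos
  have hbR : (0:ℝ) < r.den := by exact_mod_cast hb
  have hQR : (0:ℝ) < Q := by exact_mod_cast hQ
  -- inverse
  have hcop : IsCoprime r.num (r.den : ℤ) := by
    rw [Int.isCoprime_iff_nat_coprime]; simpa using r.reduced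
  obtain ⟨u, v, huv⟩ := hcop
  set t : ℤ := ⌊(r.den:ℝ) * γ⌋ with ht
  set q : ℤ := (Q + 1) + (u * t - (Q + 1)) % r.den with hq
  have hm0 : 0 ≤ (u * t - (Q + 1)) % (r.den:ℤ) := Int.emod_nonneg _ (by positivity)
  have hm1 : (u * t - (Q + 1)) % (r.den:ℤ) < r.den := Int.emod_lt_of_pos _ (by exact_mod_cast hb)
  obtain ⟨p, hp⟩ : ∃ p : ℤ, q * r.num = t + p * r.den := by
    have := Int.emod_add_mul_ediv (u * t - (Q + 1)) (r.den:ℤ)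
    refine ⟨- ((u * t - (Q + 1)) / (r.den:ℤ)) * r.num - v * t, ?_⟩
    have h1 : q = u * t - r.den * ((u * t - (Q + 1)) / (r.den:ℤ)) := by rw [hq]; linarith
    rw [h1]
    linear_combination t * huv
  have hq0 : 0 ≤ q := by rw [hq]; positivity
  have hq1 : (Q:ℤ) < q := by omega
  have hq2 : q ≤ 2 * (Q:ℤ) := by omega
  obtain ⟨q', hq'⟩ := Int.eq_ofNat_of_zero_le hq0
  have a1 : Q < q' := by omega
  have a2 : q' ≤ 2 * Q := by omega
  refine ⟨q', p, a1, a2, ?_⟩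
  have b1 : (Q:ℝ) < q' := by exact_mod_cast a1
  have b2 : (q':ℝ) ≤ 2 * Q := by exact_mod_cast a2
  have hq'0 : (0:ℝ) < q' := hQR.trans b1
  have hpR : (q':ℝ) * r.num = t + p * r.den := by
    have : ((q * r.num : ℤ):ℝ) = ((t + p * r.den : ℤ):ℝ) := by rw [hp]
    rw [hq'] at this
    push_cast at this
    exact this
  have hrv : (r:ℝ) = r.num / r.den := by exact_mod_cast (Rat.num_div_den r).symm
  have key : x - (p + γ) / q' = (x - r) + (t - r.den * γ) / (r.den * q') := by
    rw [hrv]; field_simp; linear_combination hpR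
  rw [key]
  have f1 : |(t - r.den * γ) / (r.den * q')| ≤ 1 / (r.den * Q) := by
    rw [abs_div, abs_of_pos (show (0:ℝ) < r.den * q' by positivity)]
    have : |(t:ℝ) - r.den * γ| ≤ 1 := by
      have := Int.floor_le ((r.den:ℝ) * γ)
      have := Int.lt_floor_add_one ((r.den:ℝ) * γ)
      rw [abs_le]; constructor <;> linarith
    gcongr
  have f2 : |x - r| ≤ 2 / (r.den * Q) := by
    refine h.trans ?_
    rw [div_le_div_iff₀ (by positivity) (by positivity)]
    nlinarith
  refine (abs_add_le _ _).trans ((add_le_add f2 f1).trans (le_of_eq ?_))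
  rw [← add_div]; norm_num

theorem card_Icc_real (a b : ℝ) (hab : a ≤ b) : ((Finset.Icc ⌊a⌋ ⌊b⌋).card : ℝ) ≤ b - a + 2 := by
  have h : ⌊a⌋ ≤ ⌊b⌋ := Int.floor_mono hab
  rw [Int.card_Icc]
  have : (((⌊b⌋ + 1 - ⌊a⌋).toNat : ℤ) : ℝ) = ((⌊b⌋ + 1 - ⌊a⌋ : ℤ) : ℝ) := by
    rw [Int.toNat_of_nonneg (by omega)]
  have h2 : (((⌊b⌋ + 1 - ⌊a⌋).toNat : ℕ) : ℝ) = ((⌊b⌋ + 1 - ⌊a⌋ : ℤ) : ℝ) := by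
    rw [← this]; norm_cast
  rw [h2]; push_cast
  have := Int.floor_le b
  have := Int.lt_floor_add_one a
  linarith

theorem count_cells (Z : Finset ℤ) (g : ℤ → ℝ) (R : ℝ) (hR : 0 < R)
    (hg : ∀ z ∈ Z, ⌊g z / R⌋ = z) (y s : ℝ) (hs : 0 ≤ s) :
    ((Z.filter fun z => |g z - y| ≤ s).card : ℝ) ≤ 2 * s / R + 2 := by
  have hsub : (Z.filter fun z => |g z - y| ≤ s) ⊆ Finset.Icc ⌊(y - s) / R⌋ ⌊(y + s) / R⌋ := by
    intro z hz
    rw [Finset.mem_filter, abs_le] at hz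
    rw [Finset.mem_Icc, ← hg z hz.1]
    constructor <;> apply Int.floor_mono <;> gcongr <;> linarith
  calc _ ≤ ((Finset.Icc ⌊(y - s) / R⌋ ⌊(y + s) / R⌋).card : ℝ) := by
        exact_mod_cast Finset.card_le_card hsub
    _ ≤ (y + s) / R - (y - s) / R + 2 := card_Icc_real _ _ (by gcongr; linarith)
    _ = _ := by ring

theorem ubiq (γ x0 h : ℝ) (hh : 0 < h) : ∀ᶠ Q : ℕ in atTop,
    ∃ Z : Finset ℤ, ∃ g : ℤ → ℝ, (∀ z ∈ Z, ⌊g z / (24 / (Q:ℝ)^2)⌋ = z ∧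
      |g z - x0| ≤ h + 24 / (Q:ℝ)^2 ∧ ∃ q : ℕ, ∃ p : ℤ, Q < q ∧ q ≤ 2 * Q ∧ g z = (p + γ) / q) ∧
      h ≤ 3 * (24 / (Q:ℝ)^2) * Z.card := by
  have hces := (tendsto_one_div_add_atTop_nhds_zero_nat (𝕜 := ℝ)).cesaro
  have hev : ∀ᶠ Q : ℕ in atTop, (Q:ℝ)⁻¹ * ∑ i ∈ Finset.range Q, 1 / ((i:ℝ) + 1) < h / 16 :=
    hces.eventually_lt_const (by positivity)
  filter_upwards [hev, eventually_gt_atTop 0] with Q hQ hQ0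
  have hQR : (0:ℝ) < Q := by exact_mod_cast hQ0
  have hQ1 : (1:ℝ) ≤ Q := by exact_mod_cast hQ0
  set R : ℝ := 24 / (Q:ℝ)^2 with hR
  have hRpos : 0 < R := by positivity
  -- bad set
  set Bad : Set ℝ := ⋃ i ∈ Finset.range (Q / 8),
    ⋃ a ∈ Finset.Icc ⌊((i:ℝ)+1) * (x0 - h) - 1⌋ ⌊((i:ℝ)+1) * (x0 + h) + 1⌋,
      Metric.closedBall ((a:ℝ) / ((i:ℝ)+1)) (1 / (((i:ℝ)+1) * Q)) with hBad
  have hBadm : volume.real Bad ≤ h := by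
    have h1 : volume.real Bad ≤ ∑ i ∈ Finset.range (Q / 8), (4 * h / Q + 8 / Q * (1 / ((i:ℝ) + 1))) := by
      refine (measureReal_biUnion_finset_le _ _).trans (Finset.sum_le_sum fun i _ => ?_)
      refine (measureReal_biUnion_finset_le _ _).trans ?_
      have hi : (0:ℝ) < (i:ℝ) + 1 := by positivity
      have hc := card_Icc_real (((i:ℝ)+1) * (x0 - h) - 1) (((i:ℝ)+1) * (x0 + h) + 1) (by nlinarith)
      have hv : ∀ a : ℤ, volume.real (Metric.closedBall ((a:ℝ) / ((i:ℝ)+1)) (1 / (((i:ℝ)+1) * Q)))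
          = 2 * (1 / (((i:ℝ)+1) * Q)) := fun a => Real.volume_real_closedBall (by positivity)
      simp only [hv]
      rw [Finset.sum_const, nsmul_eq_mul]
      calc _ ≤ (((i:ℝ)+1) * (x0 + h) + 1 - (((i:ℝ)+1) * (x0 - h) - 1) + 2)
              * (2 * (1 / (((i:ℝ)+1) * Q))) := by gcongr
        _ = _ := by field_simp; ring
    have h2 : ∑ i ∈ Finset.range (Q / 8), (4 * h / Q + 8 / Q * (1 / ((i:ℝ) + 1)))
        ≤ h / 2 + 8 / Q * ∑ i ∈ Finset.range Q, (1 / ((i:ℝ) + 1)) := by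
      rw [Finset.sum_add_distrib, ← Finset.mul_sum, Finset.sum_const, Finset.card_range, nsmul_eq_mul]
      have h3 : ((Q / 8 : ℕ) : ℝ) ≤ Q / 8 := by exact_mod_cast Nat.cast_div_le
      have h4 : ((Q / 8 : ℕ) : ℝ) * (4 * h / Q) ≤ h / 2 := by
        calc _ ≤ (Q / 8 : ℝ) * (4 * h / Q) := by gcongr
          _ = _ := by field_simp; norm_num
      have h5 : ∑ i ∈ Finset.range (Q / 8), (1 / ((i:ℝ) + 1)) ≤ ∑ i ∈ Finset.range Q, (1 / ((i:ℝ) + 1)) :=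
        Finset.sum_le_sum_of_subset_of_nonneg
          (Finset.range_subset_range.2 (Nat.div_le_self _ _)) fun i _ _ => by positivity
      gcongr
    have h6 : 8 / Q * ∑ i ∈ Finset.range Q, (1 / ((i:ℝ) + 1)) ≤ h / 2 := by
      rw [div_mul_eq_mul_div, mul_div_assoc, div_eq_inv_mul]; linarith
    linarith
  -- points
  have hex : ∀ x ∈ Metric.closedBall x0 h, x ∉ Bad → ∃ q : ℕ, ∃ p : ℤ, Q < q ∧ q ≤ 2 * Q ∧
      |x - (p + γ) / q| ≤ R := by
    intro x hx hxB
    obtain ⟨r, hr1, hr2⟩ := Real.exists_rat_abs_sub_le_and_den_le x hQ0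
    obtain ⟨q, p, h1, h2, h3⟩ := shifted x γ Q hQ0 r hr1 hr2
    refine ⟨q, p, h1, h2, h3.trans ?_⟩
    have hden : (0:ℝ) < r.den := by exact_mod_cast r.den_pos
    have hbig : Q / 8 < r.den := by
      by_contra hcon
      apply hxB
      obtain ⟨i, hi⟩ : ∃ i, r.den = i + 1 := Nat.exists_eq_succ_of_ne_zero r.den_ne_zero
      have hiR : (r.den:ℝ) = (i:ℝ) + 1 := by rw [hi]; push_cast; rfl
      have hi0 : (0:ℝ) < (i:ℝ) + 1 := by positivity
      have hrv : (r:ℝ) = r.num / ((i:ℝ)+1) := by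
        rw [← hiR]; exact_mod_cast (Rat.num_div_den r).symm
      have hle : |x - r.num / ((i:ℝ)+1)| ≤ 1 / (((i:ℝ)+1) * Q) := by
        rw [← hrv]
        refine hr1.trans ?_
        rw [hiR, mul_comm]
        gcongr; linarith
      simp only [hBad, Set.mem_iUnion]
      refine ⟨i, Finset.mem_range.2 (by omega), r.num, ?_, by
        rw [Metric.mem_closedBall, Real.dist_eq]; exact hle⟩
      rw [Metric.mem_closedBall, Real.dist_eq] at hx
      have hm : |((i:ℝ)+1) * x - r.num| ≤ 1 := by
        have : ((i:ℝ)+1) * x - r.num = ((i:ℝ)+1) * (x - r.num / ((i:ℝ)+1)) := by field_simp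
        rw [this, abs_mul, abs_of_pos hi0]
        calc _ ≤ ((i:ℝ)+1) * (1 / (((i:ℝ)+1) * Q)) := by gcongr
          _ = 1 / Q := by field_simp
          _ ≤ 1 := by rw [div_le_one hQR]; exact hQ1
      rw [abs_le] at hm hx
      have hA : ((i:ℝ)+1) * (x0 - h) ≤ ((i:ℝ)+1) * x := by gcongr; linarith
      have hB : ((i:ℝ)+1) * x ≤ ((i:ℝ)+1) * (x0 + h) := by gcongr; linarith
      rw [Finset.mem_Icc]
      constructor
      · have := Int.floor_le (((i:ℝ)+1) * (x0 - h) - 1)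
        have : (⌊((i:ℝ)+1) * (x0 - h) - 1⌋ : ℝ) ≤ (r.num:ℝ) := by linarith
        exact_mod_cast this
      · apply Int.le_floor.2; linarith
    have : (Q:ℝ) ≤ 8 * r.den := by exact_mod_cast (by omega : Q ≤ 8 * r.den)
    rw [hR, div_le_div_iff₀ (by positivity) (by positivity)]
    nlinarith
  -- cells
  classical
  set T : Set ℝ := {y | |y - x0| ≤ h + R ∧ ∃ q : ℕ, ∃ p : ℤ, Q < q ∧ q ≤ 2 * Q ∧ y = (p + γ) / q} with hT
  set Z : Finset ℤ := (Finset.Icc ⌊(x0 - h - R) / R⌋ ⌊(x0 + h + R) / R⌋).filter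
    (fun z => ∃ y ∈ T, ⌊y / R⌋ = z) with hZ
  have hch : ∀ z : ℤ, ∃ y : ℝ, z ∈ Z → y ∈ T ∧ ⌊y / R⌋ = z := by
    intro z
    by_cases hz : z ∈ Z
    · obtain ⟨y, hy⟩ := (Finset.mem_filter.1 hz).2
      exact ⟨y, fun _ => hy⟩
    · exact ⟨0, fun h => absurd h hz⟩
  choose g hg using hch
  refine ⟨Z, g, fun z hz => ⟨(hg z hz).2, (hg z hz).1.1, (hg z hz).1.2⟩, ?_⟩
  have hcov : Metric.closedBall x0 h ⊆ Bad ∪ ⋃ z ∈ Z, Set.Icc (((z:ℝ) - 1) * R) (((z:ℝ) + 2) * R) := by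
    intro x hx
    by_cases hxB : x ∈ Bad
    · exact Or.inl hxB
    right
    obtain ⟨q, p, h1, h2, h3⟩ := hex x hx hxB
    rw [Metric.mem_closedBall, Real.dist_eq] at hx
    set y := ((p:ℝ) + γ) / q with hy
    have hyx : |y - x0| ≤ h + R := by
      have := abs_sub_le y x x0
      rw [abs_sub_comm y x] at this
      linarith
    have hyT : y ∈ T := ⟨hyx, q, p, h1, h2, hy⟩
    have hyZ : ⌊y / R⌋ ∈ Z := by
      rw [abs_le] at hyx
      refine Finset.mem_filter.2 ⟨Finset.mem_Icc.2 ⟨?_, ?_⟩, y, hyT, rfl⟩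
      · apply Int.floor_mono; gcongr; linarith
      · apply Int.floor_mono; gcongr; linarith
    refine Set.mem_biUnion hyZ ?_
    have e1 : (⌊y / R⌋:ℝ) * R ≤ y := by
      rw [← le_div_iff₀ hRpos]; exact Int.floor_le _
    have e2 : y < ((⌊y / R⌋:ℝ) + 1) * R := by
      rw [← div_lt_iff₀ hRpos]; exact Int.lt_floor_add_one _
    rw [abs_le] at h3
    constructor <;> linarith
  have hfin : volume (Bad ∪ ⋃ z ∈ Z, Set.Icc (((z:ℝ) - 1) * R) (((z:ℝ) + 2) * R)) ≠ ⊤ := by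
    apply Bornology.IsBounded.measure_lt_top _ |>.ne
    refine Bornology.IsBounded.union ?_ ?_
    · refine (Bornology.isBounded_biUnion_finset _).2 fun i _ =>
        (Bornology.isBounded_biUnion_finset _).2 fun a _ => Metric.isBounded_closedBall
    · exact (Bornology.isBounded_biUnion_finset _).2 fun i _ => Metric.isBounded_Icc _ _
  have hm := measureReal_mono hcov hfin
  rw [Real.volume_real_closedBall hh.le] at hm
  have hm2 := measureReal_union_le (μ := volume) Bad (⋃ z ∈ Z, Set.Icc (((z:ℝ) - 1) * R) (((z:ℝ) + 2) * R))
  have hm3 : volume.real (⋃ z ∈ Z, Set.Icc (((z:ℝ) - 1) * R) (((z:ℝ) + 2) * R)) ≤ 3 * R * Z.card := by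
    refine (measureReal_biUnion_finset_le _ _).trans ?_
    have : ∀ z : ℤ, volume.real (Set.Icc (((z:ℝ) - 1) * R) (((z:ℝ) + 2) * R)) = 3 * R := by
      intro z
      rw [Real.volume_real_Icc_of_le (by nlinarith)]; ring
    simp only [this]
    rw [Finset.sum_const, nsmul_eq_mul, mul_comm]
  linarith

theorem cross (h : ℝ) (R R' δ δ' : ℝ) (hR : 0 < R) (hR' : 0 < R')
    (d0 : 0 ≤ δ) (d0' : 0 ≤ δ') (d1' : δ' ≤ 1) (Z Z' : Finset ℤ) (g g' : ℤ → ℝ)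
    (hg' : ∀ z ∈ Z', ⌊g' z / R'⌋ = z) (hc : Z.card * R ≤ 5 * h) :
    ∑ z ∈ Z, ∑ w ∈ Z', volume.real (Metric.ball (g z) (δ * R) ∩ Metric.ball (g' w) (δ' * R'))
      ≤ 20 * h * δ * δ' + 40 * h * (δ' * (R' / R)) := by
  have hin : ∀ z ∈ Z, ∑ w ∈ Z', volume.real (Metric.ball (g z) (δ * R) ∩ Metric.ball (g' w) (δ' * R'))
      ≤ (2 * (δ * R) / R' + 4) * (2 * (δ' * R')) := by
    intro z _
    have hs : 0 ≤ δ * R + δ' * R' := by positivity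
    have hcount := count_cells Z' g' R' hR' hg' (g z) (δ * R + δ' * R') hs
    calc _ ≤ ∑ w ∈ Z', if |g' w - g z| ≤ δ * R + δ' * R' then 2 * (δ' * R') else 0 := by
          refine Finset.sum_le_sum fun w _ => ?_
          split_ifs with hw
          · rw [← Real.volume_real_ball (a := g' w) (by positivity : 0 ≤ δ' * R')]
            exact measureReal_mono Set.inter_subset_right Metric.isBounded_ball.measure_lt_top.ne
          · have : Metric.ball (g z) (δ * R) ∩ Metric.ball (g' w) (δ' * R') = ∅ := by
              rw [← Set.disjoint_iff_inter_eq_empty]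
              apply Metric.ball_disjoint_ball
              rw [dist_comm, Real.dist_eq]
              exact (not_le.1 hw).le
            rw [this]; simp
      _ = ((Z'.filter fun w => |g' w - g z| ≤ δ * R + δ' * R').card : ℝ) * (2 * (δ' * R')) := by
          rw [← Finset.sum_filter, Finset.sum_const, nsmul_eq_mul]
      _ ≤ (2 * (δ * R + δ' * R') / R' + 2) * (2 * (δ' * R')) := by gcongr
      _ ≤ _ := by
          gcongr ?_ * _
          have : 2 * (δ * R + δ' * R') / R' + 2 = 2 * (δ * R) / R' + 2 * δ' + 2 := by field_simp
          rw [this]; linarith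
  refine (Finset.sum_le_sum hin).trans ?_
  rw [Finset.sum_const, nsmul_eq_mul]
  have hc' : (Z.card:ℝ) ≤ 5 * h / R := by rw [le_div_iff₀ hR]; exact hc
  calc _ ≤ 5 * h / R * ((2 * (δ * R) / R' + 4) * (2 * (δ' * R'))) := by gcongr
    _ = _ := by field_simp; ring

theorem wsum (s : Finset ℕ) (n : ℕ) :
    ∑ m ∈ s, (if m ≤ n then ((1:ℝ)/4) ^ (n - m) else 0) ≤ 2 := by
  rw [← Finset.sum_filter]
  calc _ ≤ ∑ m ∈ Finset.range (n+1), ((1:ℝ)/4) ^ (n - m) := by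
        refine Finset.sum_le_sum_of_subset_of_nonneg (fun m hm => ?_) fun _ _ _ => by positivity
        rw [Finset.mem_range]; have := (Finset.mem_filter.1 hm).2; omega
    _ = ∑ m ∈ Finset.range (n+1), ((1:ℝ)/4) ^ m := by
        have := Finset.sum_range_reflect (fun m => ((1:ℝ)/4) ^ m) (n+1)
        rw [← this]
        exact Finset.sum_congr rfl fun m _ => by congr 1
    _ ≤ 2 := by
        rw [geom_sum_eq (by norm_num)]
        have : (0:ℝ) < (1/4)^(n+1) := by positivity
        rw [div_le_iff_of_neg (by norm_num)]; linarith

theorem second (h : ℝ) (hh : 0 < h) (R δ : ℕ → ℝ) (hR : ∀ n, R n = 24 / 4 ^ n)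
    (d0 : ∀ n, 0 ≤ δ n) (d1 : ∀ n, δ n ≤ 1) (Z : ℕ → Finset ℤ) (g : ℕ → ℤ → ℝ) (s : Finset ℕ)
    (hg : ∀ n ∈ s, ∀ z ∈ Z n, ⌊g n z / R n⌋ = z) (hc : ∀ n ∈ s, (Z n).card * R n ≤ 5 * h)
    (hl : ∀ n ∈ s, h ≤ 3 * R n * (Z n).card) (hS : 1 ≤ ∑ n ∈ s, δ n) :
    h / 405 ≤ volume.real (⋃ i ∈ s.sigma Z, Metric.ball (g i.1 i.2) (δ i.1 * R i.1)) := by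
  set S := ∑ n ∈ s, δ n with hSdef
  have hRpos : ∀ n, 0 < R n := fun n => by rw [hR]; positivity
  have hb := bonf (s.sigma Z) (fun i => Metric.ball (g i.1 i.2) (δ i.1 * R i.1))
    (fun i _ => Metric.isOpen_ball.measurableSet) (fun i _ => Metric.isBounded_ball.measure_lt_top.ne) (135 * S) (by linarith)
  set μ := volume.real (⋃ i ∈ s.sigma Z, Metric.ball (g i.1 i.2) (δ i.1 * R i.1))
  have hM1 : 2 / 3 * h * S ≤ ∑ i ∈ s.sigma Z, volume.real (Metric.ball (g i.1 i.2) (δ i.1 * R i.1)) := by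
    rw [Finset.sum_sigma, hSdef, Finset.mul_sum]
    refine Finset.sum_le_sum fun n hn => ?_
    simp only [Real.volume_real_ball (mul_nonneg (d0 n) (hRpos n).le)]
    rw [Finset.sum_const, nsmul_eq_mul]
    have := mul_le_mul_of_nonneg_left (hl n hn) (d0 n)
    linarith
  set w : ℕ → ℕ → ℝ := fun m n => if m ≤ n then ((1:ℝ)/4) ^ (n - m) else 0 with hw
  have w0 : ∀ m n, 0 ≤ w m n := fun m n => by simp only [hw]; split_ifs <;> positivity
  have hRR : ∀ m n, m ≤ n → R n / R m = w m n := by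
    intro m n hmn
    simp only [hw, if_pos hmn, hR]
    obtain ⟨k, rfl⟩ := Nat.exists_eq_add_of_le hmn
    rw [Nat.add_sub_cancel_left, pow_add, one_div, inv_pow]; field_simp
  have hT : ∀ m ∈ s, ∀ n ∈ s, ∑ z ∈ Z m, ∑ y ∈ Z n,
      volume.real (Metric.ball (g m z) (δ m * R m) ∩ Metric.ball (g n y) (δ n * R n))
      ≤ 20 * h * δ m * δ n + 40 * h * (δ n * w m n) + 40 * h * (δ m * w n m) := by
    intro m hm n hn
    have p1 : 0 ≤ 40 * h * (δ m * w n m) :=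
      mul_nonneg (by positivity) (mul_nonneg (d0 m) (w0 n m))
    have p2 : 0 ≤ 40 * h * (δ n * w m n) :=
      mul_nonneg (by positivity) (mul_nonneg (d0 n) (w0 m n))
    rcases le_total m n with hmn | hmn
    · have := cross h (R m) (R n) (δ m) (δ n) (hRpos m) (hRpos n) (d0 m) (d0 n) (d1 n) (Z m) (Z n)
        (g m) (g n) (hg n hn) (hc m hm)
      rw [hRR m n hmn] at this
      linarith
    · have := cross h (R n) (R m) (δ n) (δ m) (hRpos n) (hRpos m) (d0 n) (d0 m) (d1 m) (Z n) (Z m)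
        (g n) (g m) (hg m hm) (hc n hn)
      rw [hRR n m hmn, Finset.sum_comm] at this
      simp only [Set.inter_comm (Metric.ball (g n _) _)] at this
      linarith
  have hM2 : ∑ i ∈ s.sigma Z, ∑ j ∈ s.sigma Z, volume.real
      (Metric.ball (g i.1 i.2) (δ i.1 * R i.1) ∩ Metric.ball (g j.1 j.2) (δ j.1 * R j.1))
      ≤ 180 * h * S ^ 2 := by
    have e : ∑ i ∈ s.sigma Z, ∑ j ∈ s.sigma Z, volume.real
      (Metric.ball (g i.1 i.2) (δ i.1 * R i.1) ∩ Metric.ball (g j.1 j.2) (δ j.1 * R j.1))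
      = ∑ m ∈ s, ∑ n ∈ s, ∑ z ∈ Z m, ∑ y ∈ Z n,
      volume.real (Metric.ball (g m z) (δ m * R m) ∩ Metric.ball (g n y) (δ n * R n)) := by
      rw [Finset.sum_sigma]
      refine Finset.sum_congr rfl fun m _ => ?_
      rw [Finset.sum_comm (s := s)]
      refine Finset.sum_congr rfl fun z _ => ?_
      rw [Finset.sum_sigma]
    rw [e]
    have k1 : ∑ m ∈ s, ∑ n ∈ s, 20 * h * δ m * δ n = 20 * h * S ^ 2 := by
      rw [sq, hSdef, Finset.sum_mul_sum, Finset.mul_sum]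
      refine Finset.sum_congr rfl fun m _ => ?_
      rw [Finset.mul_sum]
      exact Finset.sum_congr rfl fun n _ => by ring
    have k3 : ∑ m ∈ s, ∑ n ∈ s, 40 * h * (δ m * w n m) ≤ 80 * h * S := by
      rw [hSdef, Finset.mul_sum]
      refine Finset.sum_le_sum fun m _ => ?_
      rw [← Finset.mul_sum, ← Finset.mul_sum]
      have := mul_le_mul_of_nonneg_left (wsum s m) (d0 m)
      have := mul_le_mul_of_nonneg_left this hh.le
      linarith
    have k2 : ∑ m ∈ s, ∑ n ∈ s, 40 * h * (δ n * w m n) ≤ 80 * h * S := by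
      rw [Finset.sum_comm]; exact k3
    calc _ ≤ ∑ m ∈ s, ∑ n ∈ s, (20 * h * δ m * δ n + 40 * h * (δ n * w m n) + 40 * h * (δ m * w n m)) :=
          Finset.sum_le_sum fun m hm => Finset.sum_le_sum fun n hn => hT m hm n hn
      _ = _ := by simp only [Finset.sum_add_distrib]; rfl
      _ ≤ 20 * h * S ^ 2 + 80 * h * S + 80 * h * S := by rw [k1]; gcongr
      _ ≤ _ := by nlinarith [mul_nonneg hh.le (mul_nonneg (by linarith : 0 ≤ S) (by linarith : 0 ≤ S - 1))]
  have hSpos : 0 < S := by linarith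
  have h4 : 2 / 3 * h * S ≤ 135 * S * μ + (180 * h * S ^ 2) / (4 * (135 * S)) :=
    hM1.trans (hb.trans (by gcongr))
  have h5 : (180 * h * S ^ 2) / (4 * (135 * S)) = h / 3 * S := by field_simp; norm_num
  rw [h5] at h4
  have h6 : h / 3 ≤ 135 * μ := by
    by_contra hcon
    nlinarith
  linarith

noncomputable def dl (ψ : ℕ → ℝ) (n : ℕ) : ℝ := min (ψ (2 ^ (n + 1)) * 2 ^ n / 48) 1

theorem dl_not_summable (ψ : ℕ → ℝ) (hψpos : ∀ q, 1 ≤ q → 0 < ψ q)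
    (hmono : ∀ q q' : ℕ, 1 ≤ q → q ≤ q' → ψ q' ≤ ψ q)
    (hdiv : Tendsto (fun Q : ℕ => ∑ q ∈ Finset.Icc 1 Q, ψ q) atTop atTop) :
    ¬ Summable (dl ψ) := by
  intro hs
  have hone : ∀ n, 1 ≤ 2 ^ n := fun n => Nat.one_le_two_pow
  set f : ℕ → ℝ := fun q => ψ (max q 1) with hf
  have h1 : Summable fun n => ψ (2 ^ (n + 1)) * 2 ^ n / 48 := by
    have hlt : ∀ᶠ n in atTop, dl ψ n < 1 := hs.tendsto_atTop_zero.eventually_lt_const one_pos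
    rw [← summable_nat_add_iff (hlt.exists_forall_of_atTop.choose)]
    refine ((summable_nat_add_iff (hlt.exists_forall_of_atTop.choose)).2 hs).congr fun n => ?_
    have := hlt.exists_forall_of_atTop.choose_spec (n + hlt.exists_forall_of_atTop.choose) (by omega)
    unfold dl at this ⊢
    rcases min_lt_iff.1 this with h | h
    · exact min_eq_left h.le
    · exact absurd h (lt_irrefl _)
  have h2 : Summable fun n => (2:ℝ) ^ n * f (2 ^ n) := by
    rw [← summable_nat_add_iff 1]
    refine (h1.mul_left 96).congr fun n => ?_
    simp only [hf, max_eq_left (hone (n+1))]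
    ring
  have h3 : Summable f := by
    rw [← summable_condensed_iff_of_nonneg (f := f)]
    · exact h2
    · exact fun n => (hψpos _ (le_max_right _ _)).le
    · intro m n hm hmn
      exact hmono _ _ (le_max_right _ _) (max_le_max hmn le_rfl)
  obtain ⟨Q, hQ⟩ := (hdiv.eventually_gt_atTop (∑' q, f q)).exists
  have h4 : ∑ q ∈ Finset.Icc 1 Q, ψ q = ∑ q ∈ Finset.Icc 1 Q, f q :=
    Finset.sum_congr rfl fun q hq => by simp [hf, max_eq_left (Finset.mem_Icc.1 hq).1]
  rw [h4] at hQ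
  exact absurd (h3.sum_le_tsum _ fun q _ => (hψpos _ (le_max_right _ _)).le) (not_le.2 hQ)

theorem localE (ψ : ℕ → ℝ) (hψpos : ∀ q, 1 ≤ q → 0 < ψ q)
    (hmono : ∀ q q' : ℕ, 1 ≤ q → q ≤ q' → ψ q' ≤ ψ q)
    (hdiv : Tendsto (fun Q : ℕ => ∑ q ∈ Finset.Icc 1 Q, ψ q) atTop atTop) (γ : ℝ) (N : ℕ)
    (x0 h : ℝ) (hh : 0 < h) : ∃ U : Set ℝ, MeasurableSet U ∧ U ⊆ Metric.closedBall x0 (2 * h) ∧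
      h / 405 ≤ volume.real U ∧ ∀ x ∈ U, ∃ q : ℕ, N < q ∧ dnint (q * x - γ) < ψ q := by
  classical
  have hone : ∀ n, 1 ≤ 2 ^ n := fun n => Nat.one_le_two_pow
  have d0 : ∀ n, 0 ≤ dl ψ n := fun n =>
    le_min (by have := hψpos _ (hone (n+1)); positivity) zero_le_one
  have d1 : ∀ n, dl ψ n ≤ 1 := fun n => min_le_right _ _
  set R : ℕ → ℝ := fun n => 24 / 4 ^ n with hR
  have hRpos : ∀ n, 0 < R n := fun n => by simp only [hR]; positivity
  have hRt : Tendsto R atTop (nhds 0) :=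
    tendsto_const_nhds.div_atTop (tendsto_pow_atTop_atTop_of_one_lt (by norm_num))
  have hpow : Tendsto (fun n : ℕ => 2 ^ n) atTop atTop := tendsto_pow_atTop_atTop_of_one_lt (by norm_num)
  have hub := (hpow.eventually (ubiq γ x0 h hh)).and
    ((hRt.eventually_lt_const (by positivity : (0:ℝ) < h / 2)).and (hpow.eventually_ge_atTop N))
  obtain ⟨n0, hn0⟩ := hub.exists_forall_of_atTop
  have hRe : ∀ n : ℕ, 24 / ((2 ^ n : ℕ) : ℝ) ^ 2 = R n := by
    intro n; simp only [hR]; push_cast; rw [← pow_mul, mul_comm, pow_mul]; norm_num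
  have hex : ∀ n : ℕ, ∃ Z : Finset ℤ, ∃ g : ℤ → ℝ, n0 ≤ n → (∀ z ∈ Z, ⌊g z / R n⌋ = z ∧
      |g z - x0| ≤ h + R n ∧ ∃ q : ℕ, ∃ p : ℤ, 2 ^ n < q ∧ q ≤ 2 * 2 ^ n ∧ g z = (p + γ) / q) ∧
      h ≤ 3 * R n * Z.card := by
    intro n
    by_cases hn : n0 ≤ n
    · obtain ⟨Z, g, hZ⟩ := (hn0 n hn).1
      rw [hRe] at hZ
      exact ⟨Z, g, fun _ => hZ⟩
    · exact ⟨∅, 0, fun h => absurd h hn⟩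
  choose Z g hZ using hex
  -- finite range
  obtain ⟨s, hs, hsn⟩ : ∃ s : Finset ℕ, 1 ≤ ∑ n ∈ s, dl ψ n ∧ ∀ n ∈ s, n0 ≤ n := by
    have hns := dl_not_summable ψ hψpos hmono hdiv
    rw [← summable_nat_add_iff n0, not_summable_iff_tendsto_nat_atTop_of_nonneg fun n => d0 _] at hns
    obtain ⟨M, hM⟩ := (hns.eventually_ge_atTop 1).exists
    refine ⟨(Finset.range M).map (addRightEmbedding n0), ?_, ?_⟩
    · rw [Finset.sum_map]; exact hM
    · intro n hn
      obtain ⟨k, _, rfl⟩ := Finset.mem_map.1 hn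
      simp
  have hrad : ∀ n ∈ s, R n ≤ h / 2 := fun n hn => (hn0 n (hsn n hn)).2.1.le
  have hsec := second h hh R (dl ψ) (fun n => rfl) d0 d1 Z g s
    (fun n hn z hz => ((hZ n (hsn n hn)).1 z hz).1) (fun n hn => ?_)
    (fun n hn => (hZ n (hsn n hn)).2) hs
  · refine ⟨_, ?_, ?_, hsec, ?_⟩
    · exact Finset.measurableSet_biUnion _ fun i _ => Metric.isOpen_ball.measurableSet
    · refine Set.iUnion₂_subset fun i hi => ?_
      obtain ⟨hi1, hi2⟩ := Finset.mem_sigma.1 hi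
      refine (Metric.ball_subset_ball' ?_ : _ ⊆ Metric.ball x0 (2 * h)).trans Metric.ball_subset_closedBall
      rw [Real.dist_eq]
      have a1 := ((hZ i.1 (hsn _ hi1)).1 i.2 hi2).2.1
      have a2 := hrad _ hi1
      have a3 : dl ψ i.1 * R i.1 ≤ R i.1 := mul_le_of_le_one_left (hRpos _).le (d1 _)
      linarith
    · intro x hx
      obtain ⟨⟨n, z⟩, hi, hxi⟩ := Set.mem_iUnion₂.1 hx
      obtain ⟨hi1, hi2⟩ := Finset.mem_sigma.1 hi
      simp only at hi1 hi2 hxi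
      obtain ⟨q, p, hq1, hq2, hgz⟩ := ((hZ n (hsn _ hi1)).1 z hi2).2.2
      have hNq : N < q := lt_of_le_of_lt (hn0 n (hsn _ hi1)).2.2 hq1
      refine ⟨q, hNq, ?_⟩
      have hq0 : (0:ℝ) < q := by exact_mod_cast (by omega : 0 < q)
      rw [Metric.mem_ball, Real.dist_eq, hgz] at hxi
      have b1 : dnint (q * x - γ) ≤ |q * x - γ - p| := round_le _ _
      have b2 : |q * x - γ - p| = q * |x - (p + γ) / q| := by
        rw [← abs_of_pos hq0, ← abs_mul, abs_of_pos hq0]; congr 1; field_simp; ring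
      have hq2' : (q:ℝ) ≤ 2 * 2 ^ n := by exact_mod_cast hq2
      have b3 : q * (dl ψ n * R n) ≤ ψ (2 ^ (n+1)) := by
        have c1 : dl ψ n ≤ ψ (2 ^ (n + 1)) * 2 ^ n / 48 := min_le_left _ _
        calc _ ≤ (2 * 2 ^ n : ℝ) * ((ψ (2 ^ (n + 1)) * 2 ^ n / 48) * R n) := by
              have := hRpos n
              have := d0 n
              gcongr
          _ = _ := by
              simp only [hR]
              have : (4:ℝ)^n = 2^n * 2^n := by rw [← mul_pow]; norm_num
              rw [this]; field_simp; ring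
      have b4 : ψ (2 ^ (n+1)) ≤ ψ q := hmono _ _ (by omega) (by rw [pow_succ]; omega)
      have b5 : q * |x - (p + γ) / q| < q * (dl ψ n * R n) := by gcongr
      linarith
  · have := count_cells (Z n) (g n) (R n) (hRpos n)
      (fun z hz => ((hZ n (hsn n hn)).1 z hz).1) x0 (h + R n) (by have := hRpos n; positivity)
    rw [Finset.filter_true_of_mem fun z hz => ((hZ n (hsn n hn)).1 z hz).2.1] at this
    have h2 := mul_le_mul_of_nonneg_right this (hRpos n).le
    have h3 : (2 * (h + R n) / R n + 2) * R n = 2 * h + 4 * R n := by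
      have := (hRpos n).ne'
      field_simp; ring
    have := hrad n hn
    linarith

theorem full (ψ : ℕ → ℝ) (hψpos : ∀ q, 1 ≤ q → 0 < ψ q)
    (hmono : ∀ q q' : ℕ, 1 ≤ q → q ≤ q' → ψ q' ≤ ψ q)
    (hdiv : Tendsto (fun Q : ℕ => ∑ q ∈ Finset.Icc 1 Q, ψ q) atTop atTop) (γ : ℝ) (N : ℕ) :
    ∀ᵐ x : ℝ, ∃ q : ℕ, N < q ∧ dnint (q * x - γ) < ψ q := by
  set F : Set ℝ := {x | ¬ ∃ q : ℕ, N < q ∧ dnint (q * x - γ) < ψ q} with hF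
  change volume F = 0
  by_contra hne
  have hden := Besicovitch.ae_tendsto_measure_inter_div (volume : Measure ℝ) F
  have : (ae (volume.restrict F)).NeBot := by
    rw [ae_neBot, Ne, Measure.restrict_eq_zero]; exact hne
  obtain ⟨x, hx⟩ := hden.exists
  have hlt : (ENNReal.ofReal (1 - 1 / 1620)) < 1 := by
    rw [ENNReal.ofReal_lt_one]; norm_num
  obtain ⟨r, hr, hr0⟩ := ((hx.eventually_const_lt hlt).and self_mem_nhdsWithin).exists
  have hr0 : 0 < r := hr0
  obtain ⟨U, hUm, hUs, hUv, hU⟩ := localE ψ hψpos hmono hdiv γ N x (r / 2) (by positivity)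
  rw [show 2 * (r / 2) = r by ring] at hUs
  have hsub : F ∩ Metric.closedBall x r ⊆ Metric.closedBall x r \ U := fun y hy =>
    ⟨hy.2, fun hyU => hy.1 (hU y hyU)⟩
  have hfin : volume (Metric.closedBall x r) ≠ ⊤ := Metric.isBounded_closedBall.measure_lt_top.ne
  have hm : volume.real (F ∩ Metric.closedBall x r) ≤ (1 - 1 / 1620) * volume.real (Metric.closedBall x r) := by
    refine (measureReal_mono hsub (measure_ne_top_of_subset Set.sdiff_subset hfin)).trans ?_
    rw [measureReal_sdiff hUs hUm hfin, Real.volume_real_closedBall hr0.le]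
    linarith
  have hm2 : volume (F ∩ Metric.closedBall x r) ≤
      ENNReal.ofReal (1 - 1 / 1620) * volume (Metric.closedBall x r) := by
    rw [← ENNReal.ofReal_toReal (measure_ne_top_of_subset Set.inter_subset_right hfin :
      volume (F ∩ Metric.closedBall x r) ≠ ⊤), ← ENNReal.ofReal_toReal hfin,
      ← ENNReal.ofReal_mul (by norm_num)]
    exact ENNReal.ofReal_le_ofReal hm
  exact absurd (ENNReal.div_le_of_le_mul hm2) (not_le.2 hr)

theorem stmt3 (ψ : ℕ → ℝ) (hψpos : ∀ q, 1 ≤ q → 0 < ψ q)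
    (hψhalf : ∀ q, 1 ≤ q → ψ q < 1/2)
    (hmono : ∀ q q' : ℕ, 1 ≤ q → q ≤ q' → ψ q' ≤ ψ q)
    (hdiv : Tendsto (fun Q : ℕ => ∑ q ∈ Finset.Icc 1 Q, ψ q) atTop atTop)
    (γ : ℝ) (hγ : Irrational γ) (htame : TamelyLiouville γ) :
    volume (W ψ γ) = 1 := by
  have hae : ∀ᵐ x : ℝ, ∀ N : ℕ, ∃ q : ℕ, N < q ∧ dnint (q * x - γ) < ψ q :=
    ae_all_iff.2 fun N => full ψ hψpos hmono hdiv γ N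
  have : W ψ γ =ᵐ[volume] Set.Icc (0:ℝ) 1 := by
    filter_upwards [hae] with x hx
    refine propext ⟨fun h => h.1, fun h => ⟨h, ?_⟩⟩
    refine Set.infinite_of_not_bddAbove ?_
    rintro ⟨N, hN⟩
    obtain ⟨q, hq, hq2⟩ := hx N
    exact absurd (hN ⟨by omega, hq2⟩) (not_le.2 hq)
  rw [measure_congr this]; simp
end

section
/- Let k ≥ 3 be an integer, let γ₁,…,γ_k be real numbers, and let ψ be an approximation function with ∑_q (ψ(q))^k = ∞. Then the set of points (x₁,…,x_k) ∈ [0,1]^k such that max_{1 ≤ i ≤ k} ‖q x_i − γ_i‖ ≤ ψ(q) for infinitely many positive integers q has k-dimensional Lebesgue measure one. -/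
open MeasureTheory Filter Real

lemma pow_split (k : ℕ) (ε : ℝ) (hε : 0 < ε) : ∃ C : ℝ, 0 ≤ C ∧ ∀ a b : ℝ, 0 ≤ a → 0 ≤ b →
    (a + b) ^ k ≤ (1 + ε) * a ^ k + C * b ^ k := by
  obtain ⟨η, hη, h⟩ : ∃ η : ℝ, 0 < η ∧ (1 + η) ^ k < 1 + ε := by
    have h1 : Tendsto (fun η : ℝ => (1 + η) ^ k) (nhdsWithin 0 (Set.Ioi 0)) (nhds 1) := by
      have : Continuous (fun η : ℝ => (1 + η) ^ k) := by fun_prop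
      have h2 := this.tendsto 0
      simp only [add_zero, one_pow] at h2
      exact h2.mono_left nhdsWithin_le_nhds
    have h3 := h1.eventually (gt_mem_nhds (show (1:ℝ) < 1 + ε by linarith))
    obtain ⟨η, h4, h5⟩ := (h3.and self_mem_nhdsWithin).exists
    exact ⟨η, h5, h4⟩
  refine ⟨(1 / η + 1) ^ k, by positivity, fun a b ha hb => ?_⟩
  by_cases hab : b ≤ η * a
  · have : (a + b) ^ k ≤ ((1 + η) * a) ^ k := by
      gcongr; linarith
    rw [mul_pow] at this
    have h2 : (1 + η) ^ k * a ^ k ≤ (1 + ε) * a ^ k := by gcongr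
    have : 0 ≤ (1 / η + 1) ^ k * b ^ k := by positivity
    linarith
  · push Not at hab
    have h1 : a ≤ 1 / η * b := by
      rw [one_div, ← div_eq_inv_mul, le_div_iff₀ hη]; linarith
    have : (a + b) ^ k ≤ ((1 / η + 1) * b) ^ k := by
      gcongr; linarith
    rw [mul_pow] at this
    have : 0 ≤ (1 + ε) * a ^ k := by positivity
    linarith

lemma gcd_sum (q : ℕ) (k : ℕ) (hk : 3 ≤ k) :
    ∑ r ∈ Finset.Icc 1 q, ((Nat.gcd r q : ℝ) / q) ^ k ≤ ∑' e : ℕ, 1 / (e : ℝ) ^ 2 := by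
  rcases Nat.eq_zero_or_pos q with rfl | hq
  · simp; exact tsum_nonneg fun _ => by positivity
  have hq' : (0:ℝ) < q := by exact_mod_cast hq
  have hmaps : ∀ r ∈ Finset.Icc 1 q, q / Nat.gcd r q ∈ Finset.Icc 1 q := by
    intro r hr
    have hg : 0 < Nat.gcd r q := Nat.gcd_pos_of_pos_right _ hq
    rw [Finset.mem_Icc]
    exact ⟨Nat.div_pos (Nat.gcd_le_right _ hq) hg, Nat.div_le_self _ _⟩
  rw [← Finset.sum_fiberwise_of_maps_to hmaps]
  have hs : Summable fun e : ℕ => 1 / (e : ℝ) ^ 2 := by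
    rw [Real.summable_one_div_nat_pow]; norm_num
  refine le_trans (Finset.sum_le_sum (g := fun e : ℕ => 1 / (e : ℝ) ^ 2) ?_)
    (hs.sum_le_tsum _ fun _ _ => by positivity)
  intro e he
  rw [Finset.mem_Icc] at he
  have he0 : (0:ℝ) < e := by exact_mod_cast he.1
  have he1 : (1:ℝ) ≤ e := by exact_mod_cast he.1
  have hcard : ((Finset.Icc 1 q).filter fun r => q / Nat.gcd r q = e).card ≤ e := by
    conv_rhs => rw [← Nat.add_sub_cancel e 1, ← Nat.card_Icc]
    apply Finset.card_le_card_of_injOn (fun r => r / Nat.gcd r q)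
    · intro r hr
      simp only [Finset.coe_filter, Finset.mem_Icc, Set.mem_ofPred_eq] at hr
      have hg : 0 < Nat.gcd r q := Nat.gcd_pos_of_pos_right _ hq
      simp only [Finset.coe_Icc, Set.mem_Icc]
      refine ⟨Nat.div_pos (Nat.gcd_le_left _ hr.1.1) hg, ?_⟩
      rw [← hr.2]; exact Nat.div_le_div_right hr.1.2
    · intro r hr s hs h
      simp only [Finset.coe_filter, Finset.mem_Icc, Set.mem_ofPred_eq] at hr hs h
      have h1 := Nat.div_mul_cancel (Nat.gcd_dvd_right r q)
      have h2 := Nat.div_mul_cancel (Nat.gcd_dvd_right s q)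
      rw [hr.2] at h1
      rw [hs.2] at h2
      have h3 : Nat.gcd r q = Nat.gcd s q := Nat.eq_of_mul_eq_mul_left he.1 (h1.trans h2.symm)
      rw [← Nat.div_mul_cancel (Nat.gcd_dvd_left r q), ← Nat.div_mul_cancel (Nat.gcd_dvd_left s q), h, h3]
  have hterm : ∀ r ∈ (Finset.Icc 1 q).filter fun r => q / Nat.gcd r q = e,
      ((Nat.gcd r q : ℝ) / q) ^ k ≤ 1 / (e:ℝ) ^ 3 := by
    intro r hr
    rw [Finset.mem_filter] at hr
    have h1 := Nat.div_mul_cancel (Nat.gcd_dvd_right r q)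
    rw [hr.2] at h1
    have hg : (0:ℝ) < Nat.gcd r q := by exact_mod_cast Nat.gcd_pos_of_pos_right _ hq
    have h2 : (Nat.gcd r q : ℝ) / q = 1 / e := by
      rw [div_eq_div_iff hq'.ne' he0.ne', one_mul, mul_comm]; exact_mod_cast h1
    rw [h2, div_pow, one_pow]
    exact one_div_le_one_div_of_le (by positivity) (pow_le_pow_right₀ he1 hk)
  refine (Finset.sum_le_card_nsmul _ _ _ hterm).trans ?_
  rw [nsmul_eq_mul]
  calc _ ≤ (e:ℝ) * (1 / (e:ℝ)^3) := by gcongr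
    _ = _ := by field_simp

lemma count_le (q r : ℕ) (hq : 0 < q) (θ b : ℝ) (hb : 0 ≤ b) :
    (((Finset.range q).filter fun p : ℕ => dnint (r * (p / q : ℝ) + θ) ≤ b).card : ℝ)
      ≤ 2 * b * q + Nat.gcd r q := by
  set d := Nat.gcd r q with hd
  have hdpos : 0 < d := Nat.gcd_pos_of_pos_right _ hq
  obtain ⟨r', hr'⟩ : d ∣ r := Nat.gcd_dvd_left r q
  obtain ⟨q', hq'⟩ : d ∣ q := Nat.gcd_dvd_right r q
  have hq'pos : 0 < q' := by
    rcases Nat.eq_zero_or_pos q' with h | h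
    · subst h; omega
    · exact h
  have hcop : Nat.Coprime q' r' := by
    have h1 : d * Nat.gcd r' q' = d * 1 := by
      rw [← Nat.gcd_mul_left, ← hr', ← hq', mul_one]
    exact (Nat.coprime_comm.mp (Nat.eq_of_mul_eq_mul_left hdpos h1))
  have hq'R : (0:ℝ) < q' := by exact_mod_cast hq'pos
  have hdR : (0:ℝ) < d := by exact_mod_cast hdpos
  set T : Finset ℤ := Finset.Icc ⌈-(q' * θ) - b * q'⌉ ⌊-(q' * θ) + b * q'⌋ with hT
  have hTcard : (T.card : ℝ) ≤ 2 * b * q' + 1 := by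
    rw [hT, Int.card_Icc]
    have h1 := Int.le_ceil (-(q' * θ) - b * q')
    have h2 := Int.floor_le (-(q' * θ) + b * q')
    have h3 : (((⌊-(q' * θ) + b * q'⌋ + 1 - ⌈-(q' * θ) - b * q'⌉).toNat : ℤ) : ℝ) =
       ((max (⌊-(q' * θ) + b * q'⌋ + 1 - ⌈-(q' * θ) - b * q'⌉) 0 : ℤ) : ℝ) := by
      rw [Int.toNat_eq_max]
    rw [Int.cast_natCast] at h3
    rw [h3]
    push_cast
    apply max_le
    · linarith
    · positivity
  have hfrac : ∀ p : ℕ, (r : ℝ) * (p / q : ℝ) = r' * p / q' := by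
    intro p
    rw [hr', hq']; push_cast; field_simp
  let f : ℕ → ℤ := fun p => r' * p - round ((r : ℝ) * (p / q : ℝ) + θ) * q'
  have key : ((Finset.range q).filter fun p : ℕ => dnint (r * (p / q : ℝ) + θ) ≤ b).card ≤ d * T.card := by
    apply Finset.card_le_mul_card_image_of_maps_to (f := f)
    · intro p hp
      rw [Finset.mem_filter, dnint] at hp
      obtain ⟨_, hp⟩ := hp
      simp only [hT, f, Finset.mem_Icc, Int.ceil_le, Int.le_floor]
      push_cast
      set n := round ((r : ℝ) * (p / q : ℝ) + θ)
      rw [hfrac, abs_le] at hp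
      have e : (r' * p / q' + θ - n) * q' = r' * p + θ * q' - n * q' := by field_simp
      have h1 := mul_le_mul_of_nonneg_right hp.1 hq'R.le
      have h2 := mul_le_mul_of_nonneg_right hp.2 hq'R.le
      rw [e] at h1 h2
      constructor <;> linarith
    · intro m hm
      conv_rhs => rw [← Finset.card_range d]
      apply Finset.card_le_card_of_injOn (fun p => p / q')
      · intro p hp
        simp only [Finset.coe_filter, Finset.mem_filter, Finset.mem_range, Set.mem_ofPred_eq] at hp
        simp only [Finset.coe_range, Set.mem_Iio]
        rw [Nat.div_lt_iff_lt_mul hq'pos, ← hq']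
        exact hp.1.1
      · intro p hp s hs h
        simp only [Finset.coe_filter, Finset.mem_filter, Finset.mem_range, Set.mem_ofPred_eq] at hp hs h
        have h1 : f p = f s := hp.2.trans hs.2.symm
        simp only [f] at h1
        have h2 : (q' : ℤ) ∣ r' * ((p:ℤ) - s) :=
          ⟨round ((r : ℝ) * (p / q : ℝ) + θ) - round ((r : ℝ) * (s / q : ℝ) + θ), by linarith⟩
        have h3 : (q' : ℤ) ∣ (p:ℤ) - s :=
          (Nat.isCoprime_iff_coprime.mpr hcop).dvd_of_dvd_mul_left h2
        have h4 : s % q' = p % q' := (Nat.modEq_iff_dvd.mpr h3)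
        rw [← Nat.div_add_mod p q', ← Nat.div_add_mod s q', h, h4]
  calc _ ≤ ((d * T.card : ℕ) : ℝ) := by exact_mod_cast key
    _ = d * T.card := by push_cast; rfl
    _ ≤ d * (2 * b * q' + 1) := by gcongr
    _ = _ := by
      have : (q:ℝ) = d * q' := by exact_mod_cast hq'
      rw [this]; ring

lemma bc {Ω : Type*} [MeasurableSpace Ω] (μ : Measure Ω) [IsProbabilityMeasure μ]
    (A : ℕ → Set Ω) (hA : ∀ q, MeasurableSet (A q)) (S : ℕ → ℝ)
    (hS : ∀ Q, S Q = ∑ q ∈ Finset.Icc 1 Q, μ.real (A q)) (hdiv : Tendsto S atTop atTop)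
    (hov : ∀ ε > 0, ∀ᶠ Q in atTop, ∑ q ∈ Finset.Icc 1 Q, ∑ r ∈ Finset.Icc 1 Q,
      μ.real (A q ∩ A r) ≤ (1 + ε) * S Q ^ 2) :
    ∀ᵐ x ∂μ, {q : ℕ | 0 < q ∧ x ∈ A q}.Infinite := by
  let N : ℕ → Ω → ℝ := fun Q x => ∑ q ∈ Finset.Icc 1 Q, (A q).indicator 1 x
  have hint : ∀ q, Integrable ((A q).indicator (1 : Ω → ℝ)) μ := fun q =>
    (integrable_const (1:ℝ)).indicator (hA q)
  have hint2 : ∀ q r, Integrable (fun x => (A q).indicator (1 : Ω → ℝ) x * (A r).indicator 1 x) μ := by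
    intro q r
    have : (fun x => (A q).indicator (1 : Ω → ℝ) x * (A r).indicator 1 x) =
      (A q ∩ A r).indicator 1 := by
      rw [Set.inter_indicator_one]; rfl
    rw [this]
    exact (integrable_const (1:ℝ)).indicator ((hA q).inter (hA r))
  have hNint : ∀ Q, Integrable (N Q) μ := fun Q => integrable_finsetSum _ fun q _ => hint q
  have hN2 : ∀ Q, (fun x => N Q x ^ 2) = fun x => ∑ q ∈ Finset.Icc 1 Q, ∑ r ∈ Finset.Icc 1 Q,
      (A q).indicator (1 : Ω → ℝ) x * (A r).indicator 1 x := by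
    intro Q; funext x
    simp only [N]
    rw [sq, Finset.sum_mul_sum]
  have hN2int : ∀ Q, Integrable (fun x => N Q x ^ 2) μ := by
    intro Q
    rw [hN2]
    exact integrable_finsetSum _ fun q _ => integrable_finsetSum _ fun r _ => hint2 q r
  have hEN : ∀ Q, ∫ x, N Q x ∂μ = S Q := by
    intro Q
    rw [hS, integral_finsetSum _ fun q _ => hint q]
    exact Finset.sum_congr rfl fun q _ => integral_indicator_one (hA q)
  have hEN2 : ∀ Q, ∫ x, N Q x ^ 2 ∂μ = ∑ q ∈ Finset.Icc 1 Q, ∑ r ∈ Finset.Icc 1 Q,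
      μ.real (A q ∩ A r) := by
    intro Q
    rw [hN2, integral_finsetSum _ fun q _ => integrable_finsetSum _ fun r _ => hint2 q r]
    refine Finset.sum_congr rfl fun q _ => ?_
    rw [integral_finsetSum _ fun r _ => hint2 q r]
    refine Finset.sum_congr rfl fun r _ => ?_
    rw [← integral_indicator_one ((hA q).inter (hA r)), Set.inter_indicator_one]; rfl
  have hvar : ∀ Q, ∫ x, (N Q x - S Q) ^ 2 ∂μ = ∫ x, N Q x ^ 2 ∂μ - S Q ^ 2 := by
    intro Q
    have : (fun x => (N Q x - S Q) ^ 2) = fun x => N Q x ^ 2 - (2 * S Q) * N Q x + S Q ^ 2 := by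
      funext x; ring
    rw [this, integral_add (f := fun x => N Q x ^ 2 - (2 * S Q) * N Q x) ((hN2int Q).sub ((hNint Q).const_mul _)) (integrable_const _),
      integral_sub (hN2int Q) ((hNint Q).const_mul _), integral_const_mul, hEN]
    simp; ring
  have hvarint : ∀ Q, Integrable (fun x => (N Q x - S Q) ^ 2) μ := by
    intro Q
    have : (fun x => (N Q x - S Q) ^ 2) = fun x => N Q x ^ 2 - (2 * S Q) * N Q x + S Q ^ 2 := by
      funext x; ring
    rw [this]
    exact ((hN2int Q).sub ((hNint Q).const_mul _)).add (integrable_const _)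
  have hM : ∀ M : ℕ, μ {x | ∀ Q, N Q x ≤ M} = 0 := by
    intro M
    rw [← measureReal_eq_zero_iff]
    refine le_antisymm (le_of_forall_pos_le_add fun ε hε => ?_) measureReal_nonneg
    rw [zero_add]
    obtain ⟨Q, h1, h2⟩ := ((hov (ε / 4) (by positivity)).and
      (hdiv.eventually_ge_atTop (2 * M + 1))).exists
    have hSpos : 0 < S Q := by have : (0:ℝ) ≤ M := by positivity
                               linarith
    have h3 := mul_meas_ge_le_integral_of_nonneg (μ := μ) (f := fun x => (N Q x - S Q) ^ 2)
      (Eventually.of_forall fun x => sq_nonneg _) (hvarint Q) ((S Q / 2) ^ 2)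
    have hsub : {x | ∀ Q, N Q x ≤ M} ⊆ {x | (S Q / 2) ^ 2 ≤ (N Q x - S Q) ^ 2} := by
      intro x hx
      have h4 : N Q x ≤ M := hx Q
      simp only [Set.mem_ofPred_eq]
      nlinarith
    have h5 := measureReal_mono (μ := μ) hsub
    rw [hvar, hEN2] at h3
    have h6 : (S Q / 2) ^ 2 * μ.real {x | ∀ Q, N Q x ≤ M} ≤ (S Q / 2) ^ 2 * ε := by
      calc _ ≤ (S Q / 2) ^ 2 * μ.real {x | (S Q / 2) ^ 2 ≤ (N Q x - S Q) ^ 2} := by gcongr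
        _ ≤ _ := by linarith
    exact le_of_mul_le_mul_left h6 (by positivity)
  have hall : ∀ᵐ x ∂μ, ∀ M : ℕ, ¬ ∀ Q, N Q x ≤ M := by
    rw [ae_all_iff]
    intro M
    rw [ae_iff]; simpa using hM M
  filter_upwards [hall] with x hx hfin
  apply hx hfin.toFinset.card
  intro Q
  classical
  simp only [N]
  rw [← Finset.sum_filter_add_sum_filter_not (Finset.Icc 1 Q) (fun q => x ∈ A q)]
  rw [Finset.sum_congr rfl (g := fun _ => (1:ℝ)), Finset.sum_eq_zero (s := Finset.filter (fun q => x ∉ A q) _)]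
  · simp only [Finset.sum_const, nsmul_eq_mul, mul_one, add_zero]
    norm_cast
    apply Finset.card_le_card
    intro q hq
    simp only [Finset.mem_filter, Finset.mem_Icc] at hq
    simp only [Set.Finite.mem_toFinset, Set.mem_ofPred_eq]
    exact ⟨hq.1.1, hq.2⟩
  · intro q hq
    rw [Finset.mem_filter] at hq
    exact Set.indicator_of_notMem hq.2 _
  · intro q hq
    rw [Finset.mem_filter] at hq
    simp [hq.2]

/-- One-dimensional approximation set on the circle. -/
def circSet (q : ℕ) (g a : ℝ) : Set UnitAddCircle :=
  (fun x => (q : ℤ) • x) ⁻¹' Metric.closedBall (g : UnitAddCircle) a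

lemma mem_circSet (q : ℕ) (g a x : ℝ) :
    (x : UnitAddCircle) ∈ circSet q g a ↔ dnint (q * x - g) ≤ a := by
  have h : (q : ℤ) • (x : UnitAddCircle) - (g : UnitAddCircle) = ((q * x - g : ℝ) : UnitAddCircle) := by
    rw [← AddCircle.coe_zsmul]
    simp
  rw [circSet, Set.mem_preimage, mem_closedBall_iff_norm, h, UnitAddCircle.norm_eq, dnint]

lemma meas_circSet (q : ℕ) (g a : ℝ) : MeasurableSet (circSet q g a) := by
  apply IsClosed.measurableSet
  exact Metric.isClosed_closedBall.preimage (by fun_prop)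

lemma vol_circSet (q : ℕ) (hq : 0 < q) (g a : ℝ) (ha : a ≤ 1 / 2) :
    volume (circSet q g a) = ENNReal.ofReal (2 * a) := by
  have h := Measure.measurePreserving_zsmul (volume : Measure UnitAddCircle) (n := (q:ℤ)) (by omega)
  rw [circSet, h.measure_preimage Metric.isClosed_closedBall.measurableSet.nullMeasurableSet,
    AddCircle.volume_closedBall, min_eq_right (by linarith)]

lemma overlap_s4 (q r : ℕ) (hq : 0 < q) (g a b : ℝ) (ha0 : 0 ≤ a) (ha : a ≤ 1 / 2) (hb : 0 ≤ b) :
    volume.real (circSet q g a ∩ circSet r g b) ≤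
      2 * a * (2 * b) + 2 * a * (Nat.gcd r q / q) := by
  have hqR : (0:ℝ) < q := by exact_mod_cast hq
  set A := circSet q g a
  set B := circSet r g b
  let t : ℕ → UnitAddCircle := fun p => ((p / q : ℝ) : UnitAddCircle)
  have ht : ∀ p x, x + t p ∈ A ↔ x ∈ A := by
    intro p x
    have h0 : (q : ℤ) • t p = 0 := by
      simp only [t]
      rw [← AddCircle.coe_zsmul, AddCircle.coe_eq_zero_iff]
      refine ⟨p, ?_⟩
      simp; field_simp
    simp only [A, circSet, Set.mem_preimage, smul_add, h0, add_zero]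
  have hA := meas_circSet q g a
  have hB := meas_circSet r g b
  have hBp : ∀ p, MeasurableSet ((fun x => x + t p) ⁻¹' B) := fun p =>
    (measurable_add_const (t p)) hB
  have h1 : ∀ p, volume (A ∩ B) = volume (A ∩ (fun x => x + t p) ⁻¹' B) := by
    intro p
    rw [← measure_preimage_add_right volume (t p) (A ∩ B)]
    congr 1
    ext x
    simp only [Set.mem_preimage, Set.mem_inter_iff, ht]
  set N : ℝ := 2 * b * q + Nat.gcd r q with hN
  have hN0 : 0 ≤ N := by positivity
  have h2 : (q : ENNReal) * volume (A ∩ B) ≤ ENNReal.ofReal N * volume A := by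
    calc (q : ENNReal) * volume (A ∩ B)
        = ∑ p ∈ Finset.range q, volume (A ∩ (fun x => x + t p) ⁻¹' B) := by
          rw [Finset.sum_congr rfl fun p _ => (h1 p).symm]; simp
      _ = ∑ p ∈ Finset.range q, ∫⁻ x in A, ((fun x => x + t p) ⁻¹' B).indicator 1 x := by
          refine Finset.sum_congr rfl fun p _ => ?_
          rw [lintegral_indicator_one (hBp p), Measure.restrict_apply (hBp p), Set.inter_comm]
      _ = ∫⁻ x in A, ∑ p ∈ Finset.range q, ((fun x => x + t p) ⁻¹' B).indicator 1 x := by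
          rw [lintegral_finsetSum]
          intro p _
          exact measurable_one.indicator (hBp p)
      _ ≤ ∫⁻ x in A, ENNReal.ofReal N := by
          apply lintegral_mono
          intro x
          obtain ⟨y, rfl⟩ := QuotientAddGroup.mk_surjective x
          have h3 : ∀ p : ℕ, (y : UnitAddCircle) + t p ∈ B ↔
              dnint (r * (p / q : ℝ) + (r * y - g)) ≤ b := by
            intro p
            have : (y : UnitAddCircle) + t p = ((y + p / q : ℝ) : UnitAddCircle) := by
              simp only [t]; rfl
            rw [this, mem_circSet]
            ring_nf
          have h4 := count_le q r hq (r * y - g) b hb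
          calc ∑ p ∈ Finset.range q, ((fun x => x + t p) ⁻¹' B).indicator (1 : UnitAddCircle → ENNReal) (y : UnitAddCircle)
              = (((Finset.range q).filter fun p : ℕ => dnint (r * (p / q : ℝ) + (r * y - g)) ≤ b).card : ENNReal) := by
                rw [Finset.card_filter]
                push_cast
                refine Finset.sum_congr rfl fun p _ => ?_
                classical
                rw [Set.indicator_apply]
                simp only [Set.mem_preimage, h3, Pi.one_apply]
            _ ≤ ENNReal.ofReal N := by
                rw [← ENNReal.ofReal_natCast]
                exact ENNReal.ofReal_le_ofReal h4
      _ = ENNReal.ofReal N * volume A := by simp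
  rw [vol_circSet q hq g a ha, ← ENNReal.ofReal_mul hN0] at h2
  have h3 := ENNReal.toReal_mono ENNReal.ofReal_ne_top h2
  rw [ENNReal.toReal_mul, ENNReal.toReal_ofReal (by positivity), ENNReal.toReal_natCast] at h3
  change (q:ℝ) * volume.real (A ∩ B) ≤ _ at h3
  have h4 : volume.real (A ∩ B) ≤ N * (2 * a) / q := by
    rw [le_div_iff₀ hqR]; linarith
  refine h4.trans (le_of_eq ?_)
  rw [hN]; field_simp

/-- The approximation set on the torus. -/
def torSet {k : ℕ} (γ : Fin k → ℝ) (φ : ℕ → ℝ) (q : ℕ) : Set (Fin k → UnitAddCircle) :=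
  Set.univ.pi fun i => circSet q (γ i) (φ q)

lemma real_torSet {k : ℕ} (γ : Fin k → ℝ) (φ : ℕ → ℝ) (h0 : ∀ q, 0 ≤ φ q) (h1 : ∀ q, φ q ≤ 1 / 2)
    (q : ℕ) (hq : 0 < q) : volume.real (torSet γ φ q) = (2 * φ q) ^ k := by
  rw [torSet, measureReal_def, volume_pi_pi]
  simp only [vol_circSet q hq _ _ (h1 q), Finset.prod_const, Finset.card_univ, Fintype.card_fin,
    ENNReal.toReal_pow]
  rw [ENNReal.toReal_ofReal (by have := h0 q; positivity)]

lemma real_torSet_inter {k : ℕ} (γ : Fin k → ℝ) (φ : ℕ → ℝ) (h0 : ∀ q, 0 ≤ φ q)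
    (h1 : ∀ q, φ q ≤ 1 / 2) (q r : ℕ) (hq : 0 < q) :
    volume.real (torSet γ φ q ∩ torSet γ φ r) ≤
      (2 * φ q * (2 * φ r) + 2 * φ q * (Nat.gcd r q / q)) ^ k := by
  rw [torSet, torSet, ← Set.pi_inter_distrib, measureReal_def, volume_pi_pi, ENNReal.toReal_prod]
  calc _ ≤ ∏ i : Fin k, (2 * φ q * (2 * φ r) + 2 * φ q * (Nat.gcd r q / q)) := by
        apply Finset.prod_le_prod
        · intros; positivity
        · intro i _
          exact overlap_s4 q r hq (γ i) _ _ (h0 q) (h1 q) (h0 r)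
    _ = _ := by simp

lemma torus_ae {k : ℕ} (hk : 3 ≤ k) (γ : Fin k → ℝ) (φ : ℕ → ℝ) (h0 : ∀ q, 0 ≤ φ q)
    (h1 : ∀ q, φ q ≤ 1 / 2)
    (hdiv : Tendsto (fun Q : ℕ => ∑ q ∈ Finset.Icc 1 Q, (φ q) ^ k) atTop atTop) :
    ∀ᵐ x : Fin k → UnitAddCircle, {q : ℕ | 0 < q ∧ x ∈ torSet γ φ q}.Infinite := by
  set S : ℕ → ℝ := fun Q => ∑ q ∈ Finset.Icc 1 Q, (2 * φ q) ^ k with hS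
  have hSdiv : Tendsto S atTop atTop := by
    simp only [hS, mul_pow, ← Finset.mul_sum]
    exact hdiv.const_mul_atTop (by positivity)
  have hprob : IsProbabilityMeasure (volume : Measure (Fin k → UnitAddCircle)) := by
    constructor
    rw [← Set.pi_univ Set.univ, volume_pi_pi]
    simp
  apply bc volume (torSet γ φ) _ S _ hSdiv
  · intro ε hε
    obtain ⟨C, hC, hsplit⟩ := pow_split k (ε / 2) (by positivity)
    set Z : ℝ := ∑' e : ℕ, 1 / (e : ℝ) ^ 2 with hZ
    have hZ0 : 0 ≤ Z := tsum_nonneg fun _ => by positivity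
    have hbound : ∀ Q, ∑ q ∈ Finset.Icc 1 Q, ∑ r ∈ Finset.Icc 1 Q,
        volume.real (torSet γ φ q ∩ torSet γ φ r) ≤ (1 + ε / 2) * S Q ^ 2 + 2 * C * Z * S Q := by
      intro Q
      let G : ℕ → ℕ → ℝ := fun q r => if r ≤ q then (2 * φ q * (Nat.gcd r q / q)) ^ k else 0
      have hG0 : ∀ q r, 0 ≤ G q r := by
        intro q r
        simp only [G]
        have := h0 q
        split_ifs <;> positivity
      have hGsum : ∀ q ∈ Finset.Icc 1 Q, ∑ r ∈ Finset.Icc 1 Q, G q r ≤ Z * (2 * φ q) ^ k := by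
        intro q hq
        rw [Finset.mem_Icc] at hq
        simp only [G]
        rw [← Finset.sum_filter]
        have : (Finset.Icc 1 Q).filter (fun r => r ≤ q) = Finset.Icc 1 q := by
          ext r; simp only [Finset.mem_filter, Finset.mem_Icc]; omega
        rw [this]
        simp only [mul_pow (2 * φ q)]
        rw [← Finset.mul_sum, mul_comm]
        have := h0 q
        gcongr
        exact gcd_sum q k hk
      have hpt : ∀ q ∈ Finset.Icc 1 Q, ∀ r ∈ Finset.Icc 1 Q,
          volume.real (torSet γ φ q ∩ torSet γ φ r) ≤
            (1 + ε / 2) * ((2 * φ q) ^ k * (2 * φ r) ^ k) + C * (G q r + G r q) := by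
        have main : ∀ q ∈ Finset.Icc 1 Q, ∀ r ∈ Finset.Icc 1 Q, r ≤ q →
          volume.real (torSet γ φ q ∩ torSet γ φ r) ≤
            (1 + ε / 2) * ((2 * φ q) ^ k * (2 * φ r) ^ k) + C * (G q r) := by
          intro q hq r hr hrq
          rw [Finset.mem_Icc] at hq
          refine (real_torSet_inter γ φ h0 h1 q r hq.1).trans ?_
          have a1 := h0 q
          have a2 := h0 r
          refine (hsplit _ _ (by positivity) (by positivity)).trans ?_
          simp only [G, if_pos hrq]
          rw [mul_pow (2 * φ q) (2 * φ r)]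
        intro q hq r hr
        rcases le_total r q with h | h
        · refine (main q hq r hr h).trans ?_
          have := mul_nonneg hC (hG0 r q)
          linarith
        · rw [Set.inter_comm]
          refine (main r hr q hq h).trans ?_
          have := mul_nonneg hC (hG0 q r)
          rw [mul_comm ((2 * φ r) ^ k)]
          linarith
      refine (Finset.sum_le_sum fun q hq => Finset.sum_le_sum fun r hr => hpt q hq r hr).trans ?_
      have hGG : ∑ q ∈ Finset.Icc 1 Q, ∑ r ∈ Finset.Icc 1 Q, G q r ≤ Z * S Q := by
        simp only [hS]
        rw [Finset.mul_sum]
        exact Finset.sum_le_sum hGsum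
      have hGG' : ∑ q ∈ Finset.Icc 1 Q, ∑ r ∈ Finset.Icc 1 Q, G r q ≤ Z * S Q := by
        rw [Finset.sum_comm]; exact hGG
      simp only [Finset.sum_add_distrib, ← Finset.mul_sum, ← Finset.sum_mul]
      have e : S Q ^ 2 = (∑ q ∈ Finset.Icc 1 Q, (2 * φ q) ^ k) * ∑ q ∈ Finset.Icc 1 Q, (2 * φ q) ^ k := by
        rw [sq]
      rw [e]
      have := mul_le_mul_of_nonneg_left (add_le_add hGG hGG') hC
      linarith
    filter_upwards [hSdiv.eventually_ge_atTop (2 * C * Z / (ε / 2)), hSdiv.eventually_ge_atTop 0]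
      with Q hQ hQ0
    refine (hbound Q).trans ?_
    rw [div_le_iff₀ (by positivity)] at hQ
    nlinarith
  · intro q
    exact MeasurableSet.univ_pi fun i => meas_circSet _ _ _
  · intro Q
    refine Finset.sum_congr rfl fun q hq => ?_
    rw [Finset.mem_Icc] at hq
    exact (real_torSet γ φ h0 h1 q hq.1).symm

lemma dnint_le_half (x : ℝ) : dnint x ≤ 1 / 2 := abs_sub_round x

theorem stmt4 (k : ℕ) (hk : 3 ≤ k) (γ : Fin k → ℝ)
    (ψ : ℕ → ℝ) (hψ0 : ∀ q, 0 ≤ ψ q)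
    (hdiv : Tendsto (fun Q : ℕ => ∑ q ∈ Finset.Icc 1 Q, (ψ q) ^ k) atTop atTop) :
    volume {x : Fin k → ℝ | (∀ i, x i ∈ Set.Icc (0:ℝ) 1) ∧
      {q : ℕ | 0 < q ∧ ∀ i, dnint (q * x i - γ i) ≤ ψ q}.Infinite} = 1 := by
  set φ : ℕ → ℝ := fun q => min (ψ q) (1 / 2) with hφ
  have h0 : ∀ q, 0 ≤ φ q := fun q => le_min (hψ0 q) (by norm_num)
  have h1 : ∀ q, φ q ≤ 1 / 2 := fun q => min_le_right _ _
  have hIcc : ∀ (f : ℕ → ℝ) (Q : ℕ), ∑ q ∈ Finset.Icc 1 Q, f q = ∑ q ∈ Finset.range Q, f (q + 1) := by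
    intro f Q
    induction Q with
    | zero => simp
    | succ n ih => rw [Finset.sum_Icc_succ_top (by omega), ih, Finset.sum_range_succ]
  have hφdiv : Tendsto (fun Q : ℕ => ∑ q ∈ Finset.Icc 1 Q, (φ q) ^ k) atTop atTop := by
    simp only [hIcc] at hdiv ⊢
    rw [← not_summable_iff_tendsto_nat_atTop_of_nonneg
      (fun n => pow_nonneg (h0 _) _)]
    rw [← not_summable_iff_tendsto_nat_atTop_of_nonneg
      (fun n => pow_nonneg (hψ0 _) _)] at hdiv
    intro hs
    apply hdiv
    have ht := hs.tendsto_atTop_zero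
    have hev := ht.eventually (gt_mem_nhds (show (0:ℝ) < (1 / 2) ^ k by positivity))
    refine (summable_congr_atTop ?_).mp hs
    filter_upwards [hev] with n hn
    have : φ (n + 1) < 1 / 2 := lt_of_pow_lt_pow_left₀ k (by norm_num) hn
    congr 1
    simp only [hφ] at this ⊢
    rw [min_lt_iff] at this
    rcases this with h | h
    · exact min_eq_left h.le
    · exact absurd h (lt_irrefl _)
  have hae := torus_ae hk γ φ h0 h1 hφdiv
  have hmp : MeasurePreserving (fun (x : Fin k → ℝ) i => (x i : UnitAddCircle))
      (volume.restrict (Set.univ.pi fun _ => Set.Ioc (0:ℝ) 1)) volume := by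
    have := measurePreserving_pi (fun _ : Fin k => volume.restrict (Set.Ioc (0:ℝ) (0 + 1)))
      (fun _ => (volume : Measure UnitAddCircle)) (fun i => AddCircle.measurePreserving_mk 1 0)
    rw [zero_add, ← Measure.restrict_pi_pi] at this
    exact this
  have hae2 := hmp.quasiMeasurePreserving.ae hae
  have hmem : ∀ (x : Fin k → ℝ) (q : ℕ), (fun i => (x i : UnitAddCircle)) ∈ torSet γ φ q ↔
      ∀ i, dnint (q * x i - γ i) ≤ ψ q := by
    intro x q
    simp only [torSet, Set.mem_pi, Set.mem_univ, true_imp_iff, mem_circSet, hφ, le_min_iff,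
      dnint_le_half, and_true]
  simp only [hmem] at hae2
  have hcube : volume (Set.univ.pi fun _ : Fin k => Set.Ioc (0:ℝ) 1) = 1 := by
    rw [volume_pi_pi]; simp
  have hcube2 : volume (Set.univ.pi fun _ : Fin k => Set.Icc (0:ℝ) 1) = 1 := by
    rw [volume_pi_pi]; simp
  rw [ae_restrict_iff' (MeasurableSet.univ_pi fun _ => measurableSet_Ioc)] at hae2
  apply le_antisymm
  · rw [← hcube2]
    apply measure_mono
    intro x hx i _
    exact hx.1 i
  · rw [← hcube]
    apply measure_mono_ae
    filter_upwards [hae2] with x hx hxm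
    exact ⟨fun i => Set.Ioc_subset_Icc_self (hxm i trivial), hx hxm⟩
end
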